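/- Let G be a k-connected maximal 1-plane graph on n vertices with 3 ≤ k ≤ 5, where G is immovable if k = 3, n ≥ 5 if k = 3, and n ≥ 6 if k ≥ 4. Then every true face of the planarization G^× is adjacent (i.e., shares a boundary edge) with at most 5 − k true faces of G^×. -/

import Mathlib

open Set

/-- A drawing of a simple graph in the plane: each vertex is assigned a distinct point,
and each edge a continuous arc (an injective continuous curve) joining its endpoints. -/
structure Drawing {V : Type} (G : SimpleGraph V) where
  pos : V → ℝ × ℝ
  pos_inj : Function.Injective pos
  arc : ∀ ⦃u v : V⦄, G.Adj u v → Set (ℝ × ℝ)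
  arc_symm : ∀ ⦃u v : V⦄ (h : G.Adj u v), arc h.symm = arc h
  arc_isArc : ∀ ⦃u v : V⦄ (h : G.Adj u v), ∃ γ : ℝ → ℝ × ℝ,
    ContinuousOn γ (Set.Icc 0 1) ∧ Set.InjOn γ (Set.Icc 0 1) ∧
    γ 0 = pos u ∧ γ 1 = pos v ∧ arc h = γ '' Set.Icc (0 : ℝ) 1

namespace Drawing

variable {V : Type} {G : SimpleGraph V} (D : Drawing G)

/-- The interior of the arc of an edge (the arc minus its endpoints). -/
def arcInt ⦃u v : V⦄ (h : G.Adj u v) : Set (ℝ × ℝ) :=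
  D.arc h \ {D.pos u, D.pos v}

/-- The interior of the drawing of an abstract edge `e : Sym2 V`. -/
def edgeInt (e : Sym2 V) : Set (ℝ × ℝ) :=
  {p | ∃ (u v : V) (h : G.Adj u v), e = s(u, v) ∧ p ∈ D.arcInt h}

/-- Two edges cross if they are distinct and their interiors meet. -/
def Cross (e f : Sym2 V) : Prop :=
  e ≠ f ∧ (D.edgeInt e ∩ D.edgeInt f).Nonempty

/-- The set of crossing points of the drawing. -/
def crossingSet : Set (ℝ × ℝ) :=
  {p | ∃ e f : Sym2 V, e ≠ f ∧ p ∈ D.edgeInt e ∧ p ∈ D.edgeInt f}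

/-- A good drawing: no vertex lies on the arc of a non-incident edge, any two distinct
edges meet in at most one interior point, and edges sharing an endpoint do not cross. -/
def IsGood : Prop :=
  (∀ (w : V) ⦃u v : V⦄ (h : G.Adj u v), D.pos w ∈ D.arc h → w = u ∨ w = v) ∧
  (∀ e f : Sym2 V, e ≠ f → (D.edgeInt e ∩ D.edgeInt f).Subsingleton) ∧
  (∀ ⦃u v w : V⦄ (h₁ : G.Adj u v) (h₂ : G.Adj u w), v ≠ w →
    D.arcInt h₁ ∩ D.arcInt h₂ = ∅)

/-- A drawing is 1-planar if every edge is crossed at most once. -/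
def IsOnePlanar : Prop :=
  ∀ e : Sym2 V, {f : Sym2 V | D.Cross e f}.Subsingleton

/-- The number of crossings of the drawing (each unordered pair of crossing edges
contributes one crossing). -/
noncomputable def crNum : ℕ :=
  Set.ncard {p : Sym2 V × Sym2 V | D.Cross p.1 p.2} / 2

/-- The subset of the plane covered by the drawing. -/
def drawingSet : Set (ℝ × ℝ) :=
  Set.range D.pos ∪ ⋃ (u : V) (v : V) (h : G.Adj u v), D.arc h

/-- A face of the drawing: a connected component of the complement of the drawing. -/
def IsFace (F : Set (ℝ × ℝ)) : Prop :=
  ∃ p ∉ D.drawingSet, F = connectedComponentIn D.drawingSetᶜ p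

/-- The set `∂(F)` of vertices on the boundary of a face `F`. -/
def faceVerts (F : Set (ℝ × ℝ)) : Set V :=
  {v | D.pos v ∈ frontier F}

/-- A true face of the planarization `G^×`: a face of the drawing whose boundary
contains no crossing point (i.e. it is incident with no fake vertex). -/
def IsTrueFace (F : Set (ℝ × ℝ)) : Prop :=
  D.IsFace F ∧ ∀ p ∈ D.crossingSet, p ∉ frontier F

/-- Two faces are adjacent if their boundaries share a common edge of the planarization,
i.e. they share a boundary point that is neither a vertex nor a crossing point. -/
def FaceAdj (F₁ F₂ : Set (ℝ × ℝ)) : Prop :=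
  F₁ ≠ F₂ ∧ ∃ p, p ∈ frontier F₁ ∧ p ∈ frontier F₂ ∧
    p ∉ Set.range D.pos ∧ p ∉ D.crossingSet

/-- The planarization `G^×` (crossings made into vertices of degree `4`) is a
triangulation: every face of the drawing has exactly three vertices of `G^×`
(true vertices or crossing points) on its boundary. -/
def PlanarizationIsTriangulation : Prop :=
  ∀ F : Set (ℝ × ℝ), D.IsFace F →
    ((Set.range D.pos ∪ D.crossingSet) ∩ frontier F).ncard = 3

/-- A maximal 1-plane graph: the drawing is good and 1-planar, and no edge between two
distinct non-adjacent vertices can be added to the drawing so that the result is still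
a good 1-planar drawing. -/
def IsMaximalOnePlane : Prop :=
  D.IsGood ∧ D.IsOnePlanar ∧
  ∀ u v : V, u ≠ v → ¬G.Adj u v →
    ∀ D' : Drawing (G ⊔ SimpleGraph.fromEdgeSet {s(u, v)}),
      D'.pos = D.pos →
      (∀ ⦃x y : V⦄ (h : G.Adj x y),
        D'.arc ((SimpleGraph.sup_adj _ _ _ _).mpr (Or.inl h)) = D.arc h) →
      ¬(D'.IsGood ∧ D'.IsOnePlanar)

/-- A maximal 1-plane graph is immovable if its number of crossings does not exceed that
of any good 1-planar drawing obtained from it by redrawing exactly one edge. -/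
def Immovable : Prop :=
  ∀ D' : Drawing G, D'.IsGood → D'.IsOnePlanar → D'.pos = D.pos →
    (∃ (u v : V) (_ : G.Adj u v), ∀ ⦃x y : V⦄ (h' : G.Adj x y),
      s(x, y) ≠ s(u, v) → D'.arc h' = D.arc h') →
    D.crNum ≤ D'.crNum

/-- The drawing induced on a subgraph. -/
def restrict {H : SimpleGraph V} (hle : H ≤ G) : Drawing H where
  pos := D.pos
  pos_inj := D.pos_inj
  arc := fun _ _ h => D.arc (hle h)
  arc_symm := fun _ _ h => D.arc_symm (hle h)
  arc_isArc := fun _ _ h => D.arc_isArc (hle h)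

/-- `H` is a planar skeleton `G_P` of the 1-plane graph `(G, D)`: it is obtained from `G`
by removing exactly one edge from each pair of crossing edges. -/
def IsPlanarSkeleton {H : SimpleGraph V} (_ : H ≤ G) : Prop :=
  (∀ e f : Sym2 V, D.Cross e f → (e ∈ H.edgeSet ↔ f ∉ H.edgeSet)) ∧
  ∀ e ∈ G.edgeSet, (¬∃ f, D.Cross e f) → e ∈ H.edgeSet

/-- `c_G(v)`: the number of crossing edges of the drawing incident with `v`. -/
noncomputable def cDeg (v : V) : ℕ :=
  Set.ncard {w : V | G.Adj v w ∧ ∃ f, D.Cross s(v, w) f}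

end Drawing

/-- The crossing number of a graph: the least number of crossings in a good drawing. -/
noncomputable def crossingNumber {V : Type} (G : SimpleGraph V) : ℕ :=
  sInf {n | ∃ D : Drawing G, D.IsGood ∧ D.crNum = n}

/-- A graph is `k`-connected if it stays connected after deleting any set of fewer than
`k` vertices. -/
def KConnected {V : Type} (G : SimpleGraph V) (k : ℕ) : Prop :=
  ∀ S : Set V, S.ncard < k → (G.induce Sᶜ).Connected

/-- A graph is 1-planar if it admits a good 1-planar drawing. -/
def Is1Planar {V : Type} (G : SimpleGraph V) : Prop :=
  ∃ D : Drawing G, D.IsGood ∧ D.IsOnePlanar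

/-- A maximal 1-planar graph: 1-planar, and adding any edge between distinct
non-adjacent vertices destroys 1-planarity. -/
def IsMaximal1Planar {V : Type} (G : SimpleGraph V) : Prop :=
  Is1Planar G ∧ ∀ u v : V, u ≠ v → ¬G.Adj u v →
    ¬Is1Planar (G ⊔ SimpleGraph.fromEdgeSet {s(u, v)})

/-! Two adjacent true faces `F` and `F₁` share a whole uncrossed edge `ab`. Let `c` and `d` be
further vertices on the boundaries of `F` and `F₁`. By Janiszewski's theorem, any connected set
that joins `c` to `d` and avoids `ab` separates `a` from `b` once the region `F ∪ ab ∪ F₁` is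
removed. Applied to the point set `{c, d}` together with a common face of `c` and `d`, or to the
edge `cd`, this turns into a vertex cut: the edge `cd` exists, because it could otherwise be drawn
through `ab`, and as it is crossed at most once it can be blocked by `c`, `d` and one more vertex.
For `k = 5` such a cut is already impossible. Two true neighbors of `F` lie across consecutive
edges `ab` and `bc`, and then either their opposite vertices coincide or the edges `cd` and `ae`
cross each other, which excludes `k = 4`. Three true neighbors make `F` a triangle whose three
opposite vertices coincide, and this gives a cut of size two. -/

section Separation

variable {X Y : Type*} [TopologicalSpace X] [TopologicalSpace Y] {K L : Set X} {x y z : X}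

/-- The set `K` does not separate `x` from `y`: some connected set avoiding `K` contains both. In
particular neither point lies in `K`. -/
def Unseparated (K : Set X) (x y : X) : Prop :=
  ∃ C : Set X, IsPreconnected C ∧ x ∈ C ∧ y ∈ C ∧ Disjoint C K

namespace Unseparated

lemma refl (hx : x ∉ K) : Unseparated K x x :=
  ⟨{x}, isPreconnected_singleton, rfl, rfl, disjoint_singleton_left.2 hx⟩

lemma symm (h : Unseparated K x y) : Unseparated K y x := by
  obtain ⟨C, hC, hx, hy, hd⟩ := h
  exact ⟨C, hC, hy, hx, hd⟩

lemma trans (h₁ : Unseparated K x y) (h₂ : Unseparated K y z) : Unseparated K x z := by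
  obtain ⟨C, hC, hx, hy, hd⟩ := h₁
  obtain ⟨C', hC', hy', hz, hd'⟩ := h₂
  exact ⟨C ∪ C', hC.union y hy hy' hC', Or.inl hx, Or.inr hz, disjoint_union_left.2 ⟨hd, hd'⟩⟩

lemma mono (h : Unseparated K x y) (hL : L ⊆ K) : Unseparated L x y := by
  obtain ⟨C, hC, hx, hy, hd⟩ := h
  exact ⟨C, hC, hx, hy, hd.mono_right hL⟩

lemma notMem_left (h : Unseparated K x y) : x ∉ K := by
  obtain ⟨C, -, hx, -, hd⟩ := h
  exact disjoint_left.1 hd hx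

lemma notMem_right (h : Unseparated K x y) : y ∉ K := h.symm.notMem_left

lemma image (e : X ≃ₜ Y) (h : Unseparated K x y) : Unseparated (e '' K) (e x) (e y) := by
  obtain ⟨C, hC, hx, hy, hd⟩ := h
  exact ⟨e '' C, hC.image _ e.continuous.continuousOn, mem_image_of_mem _ hx,
    mem_image_of_mem _ hy, (disjoint_image_iff e.injective).2 hd⟩

lemma of_image (e : X ≃ₜ Y) (h : Unseparated (e '' K) (e x) (e y)) : Unseparated K x y := by
  simpa [Set.image_image] using h.image e.symm

end Unseparated

lemma unseparated_iff_mem_connectedComponentIn :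
    Unseparated K x y ↔ y ∈ connectedComponentIn Kᶜ x := by
  refine ⟨fun ⟨C, hC, hx, hy, hd⟩ ↦
    hC.subset_connectedComponentIn hx hd.subset_compl_right hy, fun h ↦ ?_⟩
  have hx : x ∈ Kᶜ := by
    by_contra hx
    rw [connectedComponentIn_eq_empty hx] at h
    exact h
  exact ⟨_, isPreconnected_connectedComponentIn, mem_connectedComponentIn hx, h,
    disjoint_compl_left.mono_left (connectedComponentIn_subset _ _)⟩

lemma frontier_connectedComponentIn_compl_subset [LocallyConnectedSpace X]
    (hK : IsClosed K) (x : X) : frontier (connectedComponentIn Kᶜ x) ⊆ K := by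
  intro q hq
  by_contra hqK
  have hqq : q ∈ connectedComponentIn Kᶜ q := mem_connectedComponentIn hqK
  obtain ⟨z, hzq, hzx⟩ :=
    mem_closure_iff.1 hq.1 _ hK.isOpen_compl.connectedComponentIn hqq
  rw [frontier, hK.isOpen_compl.connectedComponentIn.interior_eq, connectedComponentIn_eq hzx,
    ← connectedComponentIn_eq hzq] at hq
  exact hq.2 hqq

/-- A possibly degenerate arc: the injective continuous image of a compact interval. -/
def IsArc (A : Set X) : Prop :=
  ∃ (γ : ℝ → X) (s t : ℝ), s ≤ t ∧ ContinuousOn γ (Icc s t) ∧ InjOn γ (Icc s t) ∧ A = γ '' Icc s t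

namespace IsArc

variable {A : Set X}

lemma isCompact (h : IsArc A) : IsCompact A := by
  obtain ⟨γ, s, t, -, hγ, -, rfl⟩ := h
  exact isCompact_Icc.image_of_continuousOn hγ

lemma isPreconnected (h : IsArc A) : IsPreconnected A := by
  obtain ⟨γ, s, t, -, hγ, -, rfl⟩ := h
  exact isPreconnected_Icc.image _ hγ

lemma image (e : X ≃ₜ Y) (h : IsArc A) : IsArc (e '' A) := by
  obtain ⟨γ, s, t, hst, hγ, hinj, rfl⟩ := h
  exact ⟨e ∘ γ, s, t, hst, e.continuous.comp_continuousOn hγ,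
    e.injective.injOn.comp hinj (mapsTo_univ _ _), by rw [image_comp]⟩

end IsArc

end Separation

section ContinuousLogarithms

lemma exists_int_sub_sub_eq_of_exp_eq {X : Type*} {K₁ K₂ : Set X} {f g₁ g₂ : X → ℂ}
    (hexp₁ : ∀ w ∈ K₁, Complex.exp (g₁ w) = f w) (hexp₂ : ∀ w ∈ K₂, Complex.exp (g₂ w) = f w)
    {p q : X} (hp : p ∈ K₁ ∩ K₂) (hq : q ∈ K₁ ∩ K₂) :
    ∃ n : ℤ, (g₁ p - g₂ p) - (g₁ q - g₂ q) = n * (2 * Real.pi * Complex.I) := by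
  rw [← Complex.exp_eq_one_iff, Complex.exp_sub, Complex.exp_sub, Complex.exp_sub, hexp₁ p hp.1,
    ← hexp₂ p hp.2, hexp₁ q hq.1, ← hexp₂ q hq.2, div_self (Complex.exp_ne_zero _),
    div_self (Complex.exp_ne_zero _), div_one]

variable {X : Type*} [TopologicalSpace X] {K K₁ K₂ : Set X} {f φ ψ : X → ℂ}

/-- The function `f` has a continuous logarithm on `K`. -/
def HasLogOn (f : X → ℂ) (K : Set X) : Prop :=
  ∃ g : X → ℂ, ContinuousOn g K ∧ ∀ w ∈ K, Complex.exp (g w) = f w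

namespace HasLogOn

lemma congr (hf : HasLogOn f K) (h : EqOn f φ K) : HasLogOn φ K := by
  obtain ⟨g, hg, hexp⟩ := hf
  exact ⟨g, hg, fun w hw ↦ (hexp w hw).trans (h hw)⟩

lemma mul (hφ : HasLogOn φ K) (hψ : HasLogOn ψ K) : HasLogOn (fun w ↦ φ w * ψ w) K := by
  obtain ⟨g, hg, hgexp⟩ := hφ
  obtain ⟨l, hl, hlexp⟩ := hψ
  exact ⟨_, hg.add hl, fun w hw ↦ by
    simp only [Pi.add_apply, Complex.exp_add, hgexp w hw, hlexp w hw]⟩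

lemma inv (hφ : HasLogOn φ K) : HasLogOn (fun w ↦ (φ w)⁻¹) K := by
  obtain ⟨g, hg, hgexp⟩ := hφ
  exact ⟨_, hg.neg, fun w hw ↦ by simp only [Pi.neg_apply, Complex.exp_neg, hgexp w hw]⟩

end HasLogOn

lemma exists_continuous_exp_eq [LocallyPathConnectedSpace X] [ContractibleSpace X]
    (hf : Continuous f) (hf₀ : ∀ x, f x ≠ 0) :
    ∃ g : X → ℂ, Continuous g ∧ ∀ x, Complex.exp (g x) = f x := by
  have hsc : IsSimplyConnected (univ : Set X) := by
    have : ContractibleSpace (univ : Set X) := (Homeomorph.Set.univ X).contractibleSpace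
    rw [IsSimplyConnected]
    infer_instance
  obtain ⟨g, hg, hexp⟩ := Complex.exists_continuousOn_eqOn_exp_comp hsc isOpen_univ
    hf.continuousOn (by rintro ⟨x, -, hx⟩; exact hf₀ x hx)
  exact ⟨g, continuousOn_univ.1 hg, fun x ↦ hexp (mem_univ x)⟩

lemma sub_eq_sub_of_exp_eq {S : Set X} (hS : IsPreconnected S) {g₁ g₂ : X → ℂ}
    (h₁ : ContinuousOn g₁ S) (h₂ : ContinuousOn g₂ S)
    (hexp : ∀ w ∈ S, Complex.exp (g₁ w) = Complex.exp (g₂ w)) {a b : X} (ha : a ∈ S)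
    (hb : b ∈ S) : g₁ a - g₂ a = g₁ b - g₂ b :=
  Complex.isCoveringMap_exp.constOn_of_comp (g := fun w ↦ g₁ w - g₂ w) hS (h₁.sub h₂)
    (fun a ha b hb ↦ Subtype.ext <| by
      simp only [Complex.exp_sub, hexp a ha, hexp b hb, ne_eq, Complex.exp_ne_zero,
        not_false_eq_true, div_self]) ha hb

lemma hasLogOn_union_of_sub_eq_sub (hK₁ : IsClosed K₁) (hK₂ : IsClosed K₂) {g₁ g₂ : X → ℂ}
    (hg₁ : ContinuousOn g₁ K₁) (hg₂ : ContinuousOn g₂ K₂)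
    (hexp₁ : ∀ w ∈ K₁, Complex.exp (g₁ w) = f w) (hexp₂ : ∀ w ∈ K₂, Complex.exp (g₂ w) = f w)
    (hconst : ∀ p ∈ K₁ ∩ K₂, ∀ q ∈ K₁ ∩ K₂, g₁ p - g₂ p = g₁ q - g₂ q) :
    HasLogOn f (K₁ ∪ K₂) := by
  classical
  obtain ⟨c, hc, hshift⟩ : ∃ c, Complex.exp c = 1 ∧ ∀ w ∈ K₁ ∩ K₂, g₁ w = g₂ w + c := by
    obtain hempty | ⟨p, hp⟩ := (K₁ ∩ K₂).eq_empty_or_nonempty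
    · exact ⟨0, Complex.exp_zero, by simp [hempty]⟩
    · refine ⟨g₁ p - g₂ p, ?_, fun w hw ↦ by rw [hconst p hp w hw]; ring⟩
      rw [Complex.exp_sub, hexp₁ p hp.1, ← hexp₂ p hp.2, div_self (Complex.exp_ne_zero _)]
  have hpiece : EqOn (K₁.piecewise g₁ (fun w ↦ g₂ w + c)) (fun w ↦ g₂ w + c) K₂ := by
    intro w hw
    by_cases hw₁ : w ∈ K₁
    · rw [piecewise_eq_of_mem _ _ _ hw₁, hshift w ⟨hw₁, hw⟩]
    · rw [piecewise_eq_of_notMem _ _ _ hw₁]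
  refine ⟨K₁.piecewise g₁ (fun w ↦ g₂ w + c), ContinuousOn.union_of_isClosed
    (hg₁.congr (piecewise_eqOn _ _ _)) ((hg₂.add continuousOn_const).congr hpiece) hK₁ hK₂, ?_⟩
  rintro w (hw | hw)
  · rw [piecewise_eq_of_mem _ _ _ hw, hexp₁ w hw]
  · rw [hpiece hw, Complex.exp_add, hc, mul_one, hexp₂ w hw]

lemma HasLogOn.union (h₁ : HasLogOn f K₁) (h₂ : HasLogOn f K₂) (hK₁ : IsClosed K₁)
    (hK₂ : IsClosed K₂) (hpre : IsPreconnected (K₁ ∩ K₂)) : HasLogOn f (K₁ ∪ K₂) := by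
  obtain ⟨g₁, hg₁, hexp₁⟩ := h₁
  obtain ⟨g₂, hg₂, hexp₂⟩ := h₂
  exact hasLogOn_union_of_sub_eq_sub hK₁ hK₂ hg₁ hg₂ hexp₁ hexp₂ fun p hp q hq ↦
    sub_eq_sub_of_exp_eq hpre (hg₁.mono inter_subset_left) (hg₂.mono inter_subset_right)
      (fun w hw ↦ by rw [hexp₁ w hw.1, hexp₂ w hw.2]) hp hq

/-- The obstruction to gluing logarithms over two points is a single integer, so two functions with
obstructions `m` and `n` have the glueable combination `φ ^ n * ψ ^ (-m)`. -/
lemma exists_hasLogOn_zpow_mul_zpow_union (hK₁ : IsClosed K₁) (hK₂ : IsClosed K₂) {p q : X}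
    (hpq : K₁ ∩ K₂ ⊆ {p, q}) (hφ₁ : HasLogOn φ K₁) (hφ₂ : HasLogOn φ K₂)
    (hψ₁ : HasLogOn ψ K₁) (hψ₂ : HasLogOn ψ K₂) :
    ∃ n m : ℤ, (n ≠ 0 ∨ m ≠ 0) ∧ HasLogOn (fun w ↦ φ w ^ n * ψ w ^ m) (K₁ ∪ K₂) := by
  obtain ⟨f₁, hf₁, hφ₁⟩ := hφ₁
  obtain ⟨f₂, hf₂, hφ₂⟩ := hφ₂
  obtain ⟨g₁, hg₁, hψ₁⟩ := hψ₁
  obtain ⟨g₂, hg₂, hψ₂⟩ := hψ₂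
  have hglue (n m : ℤ) (h : p ∈ K₁ ∩ K₂ → q ∈ K₁ ∩ K₂ →
      n * ((f₁ p - f₂ p) - (f₁ q - f₂ q)) + m * ((g₁ p - g₂ p) - (g₁ q - g₂ q)) = 0) :
      HasLogOn (fun w ↦ φ w ^ n * ψ w ^ m) (K₁ ∪ K₂) := by
    refine hasLogOn_union_of_sub_eq_sub (g₁ := fun w ↦ n * f₁ w + m * g₁ w)
      (g₂ := fun w ↦ n * f₂ w + m * g₂ w) hK₁ hK₂ (by fun_prop) (by fun_prop)
      (fun w hw ↦ by rw [Complex.exp_add, Complex.exp_int_mul, Complex.exp_int_mul, hφ₁ w hw,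
        hψ₁ w hw])
      (fun w hw ↦ by rw [Complex.exp_add, Complex.exp_int_mul, Complex.exp_int_mul, hφ₂ w hw,
        hψ₂ w hw]) fun a ha b hb ↦ ?_
    obtain rfl | rfl := hpq ha <;> obtain rfl | rfl := hpq hb
    · rfl
    · linear_combination h ha hb
    · linear_combination -h hb ha
    · rfl
  by_cases hmem : p ∈ K₁ ∩ K₂ ∧ q ∈ K₁ ∩ K₂
  · obtain ⟨m, hm⟩ := exists_int_sub_sub_eq_of_exp_eq hφ₁ hφ₂ hmem.1 hmem.2
    obtain ⟨n, hn⟩ := exists_int_sub_sub_eq_of_exp_eq hψ₁ hψ₂ hmem.1 hmem.2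
    by_cases hm₀ : m = 0
    · exact ⟨1, 0, Or.inl one_ne_zero, hglue 1 0 fun _ _ ↦ by simp [hm, hm₀]⟩
    · exact ⟨n, -m, Or.inr (neg_ne_zero.2 hm₀), hglue n (-m) fun _ _ ↦ by
        rw [hm, hn]; push_cast; ring⟩
  · exact ⟨1, 0, Or.inl one_ne_zero, hglue 1 0 fun hp hq ↦ absurd ⟨hp, hq⟩ hmem⟩

lemma IsArc.hasLogOn [T2Space X] {A : Set X} (hA : IsArc A) (hf : ContinuousOn f A)
    (hf₀ : ∀ w ∈ A, f w ≠ 0) : HasLogOn f A := by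
  classical
  obtain ⟨γ, s, t, hst, hγ, hinj, rfl⟩ := hA
  have hproj (r : ℝ) : γ (projIcc s t hst r) ∈ γ '' Icc s t :=
    mem_image_of_mem _ (projIcc s t hst r).2
  have hcont : Continuous fun r : ℝ ↦ f (γ (projIcc s t hst r)) :=
    hf.comp_continuous (hγ.comp_continuous (continuous_subtype_val.comp continuous_projIcc)
      fun r ↦ (projIcc s t hst r).2) hproj
  obtain ⟨g, hg, hexp⟩ := exists_continuous_exp_eq hcont fun r ↦ hf₀ _ (hproj r)
  let e : Icc s t ≃ₜ γ '' Icc s t :=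
    Continuous.homeoOfEquivCompactToT2 (f := Equiv.Set.imageOfInjOn γ _ hinj)
      (hγ.domRestrict.subtype_mk _)
  refine ⟨fun w ↦ if h : w ∈ γ '' Icc s t then g (e.symm ⟨w, h⟩) else 0, ?_, fun w hw ↦ ?_⟩
  · rw [continuousOn_iff_continuous_domRestrict]
    convert! hg.comp (continuous_subtype_val.comp e.symm.continuous)
    exact funext fun w ↦ dif_pos w.2
  · simp only [hw, dite_true, hexp, projIcc_val]
    exact congrArg f (congrArg Subtype.val (e.apply_symm_apply ⟨w, hw⟩))

end ContinuousLogarithms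

section Eilenberg

variable {K L A : Set ℂ} {x y z : ℂ} {n : ℤ}

lemma hasLogOn_div_of_norm_sub_lt (h : ∀ w ∈ K, ‖x - y‖ < ‖w - x‖) :
    HasLogOn (fun w ↦ (w - y) / (w - x)) K := by
  have hne : ∀ w ∈ K, w - x ≠ 0 := fun w hw ↦
    norm_pos_iff.1 ((norm_nonneg _).trans_lt (h w hw))
  have hslit : ∀ w ∈ K, (w - y) / (w - x) ∈ Complex.slitPlane := by
    intro w hw
    have hdiv : (w - y) / (w - x) = 1 + (x - y) / (w - x) := by
      rw [← div_self (hne w hw), ← add_div]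
      ring
    rw [hdiv]
    apply Complex.mem_slitPlane_of_norm_lt_one
    rw [norm_div, div_lt_one (norm_pos_iff.2 (hne w hw))]
    exact h w hw
  exact ⟨_, ContinuousOn.clog (ContinuousOn.div (by fun_prop) (by fun_prop) hne) hslit,
    fun w hw ↦ Complex.exp_log (Complex.slitPlane_ne_zero (hslit w hw))⟩

lemma HasLogOn.div_symm (h : HasLogOn (fun w ↦ (w - x) / (w - y)) K) :
    HasLogOn (fun w ↦ (w - y) / (w - x)) K :=
  h.inv.congr fun w _ ↦ inv_div (w - x) (w - y)

lemma HasLogOn.div_trans (hy : y ∉ K) (hxy : HasLogOn (fun w ↦ (w - x) / (w - y)) K)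
    (hyz : HasLogOn (fun w ↦ (w - y) / (w - z)) K) :
    HasLogOn (fun w ↦ (w - x) / (w - z)) K :=
  (hxy.mul hyz).congr fun _ hw ↦ div_mul_div_cancel₀ (sub_ne_zero.2 (ne_of_mem_of_not_mem hw hy))

lemma Unseparated.hasLogOn_div (hK : IsClosed K) (h : Unseparated K x y) :
    HasLogOn (fun w ↦ (w - x) / (w - y)) K := by
  obtain ⟨C, hC, hx, hy, hd⟩ := h
  refine hC.induction₂' (P := fun x y ↦ HasLogOn (fun w ↦ (w - x) / (w - y)) K) (fun b hb ↦ ?_)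
    (fun a b c _ hb _ ↦ HasLogOn.div_trans (disjoint_left.1 hd hb)) hx hy
  obtain ⟨ε, hε, hball⟩ := Metric.isOpen_iff.1 hK.isOpen_compl b (disjoint_left.1 hd hb)
  filter_upwards [mem_nhdsWithin_of_mem_nhds (Metric.ball_mem_nhds b hε)] with b' hb'
  have hlog : HasLogOn (fun w ↦ (w - b') / (w - b)) K := by
    refine hasLogOn_div_of_norm_sub_lt fun w hw ↦ ?_
    have hwb : w ∉ Metric.ball b ε := fun h ↦ hball h hw
    rw [Metric.mem_ball, dist_eq_norm] at hwb hb'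
    rw [norm_sub_rev]
    exact hb'.trans_le (not_lt.1 hwb)
  exact ⟨hlog.div_symm, hlog⟩

lemma eq_zero_of_hasLogOn_zpow_sphere {R : ℝ} (hR : 0 < R)
    (h : HasLogOn (fun w ↦ (w - x) ^ n) (Metric.sphere x R)) : n = 0 := by
  obtain ⟨g, hg, hexp⟩ := h
  have hmem (θ : ℝ) : circleMap x R θ ∈ Metric.sphere x R := circleMap_mem_sphere x hR.le θ
  have hconst := sub_eq_sub_of_exp_eq (S := (univ : Set ℝ)) isPreconnected_univ
    (g₁ := fun θ : ℝ ↦ g (circleMap x R θ))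
    (g₂ := fun θ : ℝ ↦ n * (Complex.log R + θ * Complex.I))
    (hg.comp (continuous_circleMap x R).continuousOn fun θ _ ↦ hmem θ) (by fun_prop)
    (fun θ _ ↦ by
      rw [hexp _ (hmem θ)]
      simp only [circleMap, add_sub_cancel_left]
      rw [Complex.exp_int_mul, Complex.exp_add, Complex.exp_log (by exact_mod_cast hR.ne')])
    (mem_univ 0) (mem_univ (2 * Real.pi))
  have hperiod : circleMap x R (2 * Real.pi) = circleMap x R 0 := by simp [circleMap]
  have hzero : (n : ℂ) * (2 * Real.pi * Complex.I) = 0 := by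
    simp only [hperiod] at hconst
    push_cast at hconst
    linear_combination hconst
  exact_mod_cast (mul_eq_zero.1 hzero).resolve_right Complex.two_pi_I_ne_zero

/-- A logarithm on `K` would extend to make `(w - x) ^ n` on the outside of the component part of a
nowhere vanishing continuous function on the plane, whose logarithm has no winding at infinity. -/
lemma eq_zero_of_hasLogOn_zpow_mul (hK : IsCompact K) (hx : x ∉ K)
    (hb : Bornology.IsBounded (connectedComponentIn Kᶜ x)) {φ : ℂ → ℂ}
    (hφ : ContinuousOn φ (closure (connectedComponentIn Kᶜ x)))
    (hφ₀ : ∀ w ∈ closure (connectedComponentIn Kᶜ x), φ w ≠ 0)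
    (h : HasLogOn (fun w ↦ (w - x) ^ n * φ w) K) : n = 0 := by
  classical
  obtain ⟨g, hg, hexp⟩ := h
  set U := connectedComponentIn Kᶜ x
  have hxU : x ∈ U := mem_connectedComponentIn hx
  have hUopen : IsOpen U := hK.isClosed.isOpen_compl.connectedComponentIn
  obtain ⟨g', hg'⟩ := ContinuousMap.exists_restrict_eq hK.isClosed
    ⟨K.domRestrict g, continuousOn_iff_continuous_domRestrict.1 hg⟩
  have hne : ∀ w ∉ U, w - x ≠ 0 := fun w hw h ↦ hw (by rwa [sub_eq_zero.1 h])
  let F : ℂ → ℂ := U.piecewise (fun w ↦ Complex.exp (g' w) / φ w) (fun w ↦ (w - x) ^ n)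
  have hF : Continuous F := by
    refine continuous_piecewise (fun w hw ↦ ?_) (ContinuousOn.div (by fun_prop) hφ hφ₀) ?_
    · have hwK := frontier_connectedComponentIn_compl_subset hK.isClosed x hw
      have hgw : g' w = g w := DFunLike.congr_fun hg' ⟨w, hwK⟩
      rw [hgw, hexp w hwK, mul_div_cancel_right₀ _ (hφ₀ w (frontier_subset_closure hw))]
    · rw [hUopen.isClosed_compl.closure_eq]
      exact ContinuousOn.zpow₀ (by fun_prop) _ fun w hw ↦ Or.inl (hne w hw)
  have hF₀ : ∀ w, F w ≠ 0 := by
    intro w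
    by_cases hw : w ∈ U
    · simpa only [F, piecewise_eq_of_mem _ _ _ hw] using
        div_ne_zero (Complex.exp_ne_zero _) (hφ₀ w (subset_closure hw))
    · simpa only [F, piecewise_eq_of_notMem _ _ _ hw] using zpow_ne_zero _ (hne w hw)
  obtain ⟨G, hG, hGexp⟩ := exists_continuous_exp_eq hF hF₀
  obtain ⟨R, hR⟩ := hb.subset_ball x
  refine eq_zero_of_hasLogOn_zpow_sphere (x := x) (R := R) (by simpa using hR hxU)
    ⟨G, hG.continuousOn, fun w hw ↦ ?_⟩
  have hwU : w ∉ U := fun h ↦ (Metric.mem_ball.1 (hR h)).ne hw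
  exact (hGexp w).trans (piecewise_eq_of_notMem _ _ _ hwU)

lemma isPreconnected_setOf_lt_norm {R : ℝ} (hR : 0 < R) : IsPreconnected {w : ℂ | R < ‖w‖} := by
  have himage : {w : ℂ | R < ‖w‖} = Complex.exp '' {z : ℂ | Real.log R < z.re} := by
    refine Subset.antisymm (fun w hw ↦ ?_) ?_
    · refine ⟨Complex.log w, ?_, Complex.exp_log (norm_pos_iff.1 (hR.trans hw))⟩
      simpa only [mem_ofPred_eq, Complex.log_re] using Real.log_lt_log hR hw
    · rintro _ ⟨z, hz, rfl⟩
      simpa only [mem_ofPred_eq, Complex.norm_exp, ← Real.log_lt_iff_lt_exp hR] using hz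
  rw [himage]
  exact (convex_halfSpace_re_gt _).isPreconnected.image _ Complex.continuous_exp.continuousOn

lemma isBounded_or_isBounded_of_not_unseparated (hK : IsCompact K) (hxy : ¬Unseparated K x y) :
    Bornology.IsBounded (connectedComponentIn Kᶜ x) ∨
      Bornology.IsBounded (connectedComponentIn Kᶜ y) := by
  by_contra! hunbounded
  obtain ⟨R, hR, hKR⟩ := hK.isBounded.exists_pos_norm_le
  have hfar {u : ℂ} (hu : ¬Bornology.IsBounded (connectedComponentIn Kᶜ u)) :
      ∃ v, Unseparated K u v ∧ R < ‖v‖ := by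
    by_contra! hle
    exact hu (isBounded_iff_forall_norm_le.2
      ⟨R, fun v hv ↦ hle v (unseparated_iff_mem_connectedComponentIn.2 hv)⟩)
  obtain ⟨v, hxv, hv⟩ := hfar hunbounded.1
  obtain ⟨v', hyv', hv'⟩ := hfar hunbounded.2
  exact hxy (hxv.trans <| .trans ⟨_, isPreconnected_setOf_lt_norm hR, hv, hv',
    disjoint_left.2 fun w hw hwK ↦ (hKR w hwK).not_gt hw⟩ hyv'.symm)

lemma sub_ne_zero_of_mem_closure_connectedComponentIn (hK : IsClosed K) (hy : y ∉ K)
    (hxy : ¬Unseparated K x y) {w : ℂ} (hw : w ∈ closure (connectedComponentIn Kᶜ x)) :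
    w - y ≠ 0 := by
  rintro h
  obtain rfl := sub_eq_zero.1 h
  rw [closure_eq_self_union_frontier] at hw
  exact hw.elim (fun hw ↦ hxy (unseparated_iff_mem_connectedComponentIn.2 hw))
    fun hw ↦ hy (frontier_connectedComponentIn_compl_subset hK x hw)

lemma unseparated_of_hasLogOn_div (hK : IsCompact K) (hx : x ∉ K) (hy : y ∉ K)
    (h : HasLogOn (fun w ↦ (w - x) / (w - y)) K) : Unseparated K x y := by
  by_contra hxy
  wlog hb : Bornology.IsBounded (connectedComponentIn Kᶜ x) generalizing x y
  · exact this hy hx h.div_symm (fun h ↦ hxy h.symm)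
      ((isBounded_or_isBounded_of_not_unseparated hK hxy).resolve_left hb)
  have hne {w : ℂ} (hw : w ∈ closure (connectedComponentIn Kᶜ x)) : w - y ≠ 0 :=
    sub_ne_zero_of_mem_closure_connectedComponentIn hK.isClosed hy hxy hw
  exact one_ne_zero (eq_zero_of_hasLogOn_zpow_mul hK hx hb (φ := fun w ↦ (w - y)⁻¹)
    (ContinuousOn.inv₀ (by fun_prop) fun w hw ↦ hne hw) (fun w hw ↦ inv_ne_zero (hne hw))
    (n := 1) (h.congr fun w _ ↦ by simp only [zpow_one, div_eq_mul_inv]))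

lemma eq_zero_of_hasLogOn_zpow_mul_zpow_mul_zpow (hK : IsCompact K) (hx : x ∉ K) (hy : y ∉ K)
    (hz : z ∉ K) (hxy : ¬Unseparated K x y) (hxz : ¬Unseparated K x z)
    (hb : Bornology.IsBounded (connectedComponentIn Kᶜ x)) {a b c : ℤ}
    (h : HasLogOn (fun w ↦ (w - x) ^ a * ((w - y) ^ b * (w - z) ^ c)) K) : a = 0 := by
  have hne {u : ℂ} (hu : u ∉ K) (hxu : ¬Unseparated K x u) {w : ℂ}
      (hw : w ∈ closure (connectedComponentIn Kᶜ x)) : w - u ≠ 0 :=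
    sub_ne_zero_of_mem_closure_connectedComponentIn hK.isClosed hu hxu hw
  refine eq_zero_of_hasLogOn_zpow_mul hK hx hb (.mul ?_ ?_) (fun w hw ↦ mul_ne_zero
    (zpow_ne_zero _ (hne hy hxy hw)) (zpow_ne_zero _ (hne hz hxz hw))) h
  · exact ContinuousOn.zpow₀ (by fun_prop) _ fun w hw ↦ .inl (hne hy hxy hw)
  · exact ContinuousOn.zpow₀ (by fun_prop) _ fun w hw ↦ .inl (hne hz hxz hw)

/-- At most one of the three components is unbounded, so two exponents vanish, hence all do. -/
lemma eq_zero_of_hasLogOn_of_pairwise_separated (hK : IsCompact K) (hx : x ∉ K) (hy : y ∉ K)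
    (hz : z ∉ K) (hxy : ¬Unseparated K x y) (hyz : ¬Unseparated K y z)
    (hxz : ¬Unseparated K x z) {a b c : ℤ} (habc : a + b + c = 0)
    (h : HasLogOn (fun w ↦ (w - x) ^ a * ((w - y) ^ b * (w - z) ^ c)) K) : a = 0 ∧ b = 0 := by
  have ha := fun hb ↦ eq_zero_of_hasLogOn_zpow_mul_zpow_mul_zpow hK hx hy hz hxy hxz hb h
  have hb := fun hb ↦ eq_zero_of_hasLogOn_zpow_mul_zpow_mul_zpow hK hy hx hz
    (fun h ↦ hxy h.symm) hyz hb (h.congr fun w _ ↦ mul_left_comm _ _ _)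
  have hc := fun hb ↦ eq_zero_of_hasLogOn_zpow_mul_zpow_mul_zpow hK hz hx hy
    (fun h ↦ hxz h.symm) (fun h ↦ hyz h.symm) hb (h.congr fun w _ ↦ mul_rotate' _ _ _ |>.symm)
  have hxy' := (isBounded_or_isBounded_of_not_unseparated hK hxy).imp ha hb
  have hyz' := (isBounded_or_isBounded_of_not_unseparated hK hyz).imp hb hc
  have hxz' := (isBounded_or_isBounded_of_not_unseparated hK hxz).imp ha hc
  omega

lemma unseparated_union_complex (hK : IsCompact K) (hL : IsCompact L)
    (hKL : IsPreconnected (K ∩ L)) (hxK : Unseparated K x y) (hxL : Unseparated L x y) :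
    Unseparated (K ∪ L) x y :=
  unseparated_of_hasLogOn_div (hK.union hL)
    (not_or.2 ⟨hxK.notMem_left, hxL.notMem_left⟩) (not_or.2 ⟨hxK.notMem_right, hxL.notMem_right⟩)
    ((hxK.hasLogOn_div hK.isClosed).union (hxL.hasLogOn_div hL.isClosed) hK.isClosed hL.isClosed
      hKL)

lemma unseparated_union_of_three_complex (hK : IsCompact K) (hL : IsCompact L) {p q : ℂ}
    (hKL : K ∩ L ⊆ {p, q}) (hxzK : Unseparated K x z) (hyzK : Unseparated K y z)
    (hxzL : Unseparated L x z) (hyzL : Unseparated L y z) :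
    Unseparated (K ∪ L) x y ∨ Unseparated (K ∪ L) y z ∨ Unseparated (K ∪ L) x z := by
  by_contra! hsep
  obtain ⟨n, m, hnm, hlog⟩ := exists_hasLogOn_zpow_mul_zpow_union hK.isClosed hL.isClosed hKL
    (hxzK.hasLogOn_div hK.isClosed) (hxzL.hasLogOn_div hL.isClosed)
    (hyzK.hasLogOn_div hK.isClosed) (hyzL.hasLogOn_div hL.isClosed)
  have hz : z ∉ K ∪ L := not_or.2 ⟨hxzK.notMem_right, hxzL.notMem_right⟩
  have hnm₀ := eq_zero_of_hasLogOn_of_pairwise_separated (hK.union hL)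
    (not_or.2 ⟨hxzK.notMem_left, hxzL.notMem_left⟩)
    (not_or.2 ⟨hyzK.notMem_left, hyzL.notMem_left⟩) hz hsep.1 hsep.2.1 hsep.2.2
    (a := n) (b := m) (c := -n + -m) (by ring) (hlog.congr fun w hw ↦ by
      simp only [zpow_add₀ (sub_ne_zero.2 (ne_of_mem_of_not_mem hw hz)), zpow_neg, div_zpow]
      ring)
  exact hnm.elim (· hnm₀.1) (· hnm₀.2)

lemma IsArc.unseparated_complex (hA : IsArc A) (hx : x ∉ A) (hy : y ∉ A) : Unseparated A x y := by
  have hne {u : ℂ} (hu : u ∉ A) {w : ℂ} (hw : w ∈ A) : w - u ≠ 0 :=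
    sub_ne_zero.2 (ne_of_mem_of_not_mem hw hu)
  exact unseparated_of_hasLogOn_div hA.isCompact hx hy (hA.hasLogOn
    (ContinuousOn.div (by fun_prop) (by fun_prop) fun w hw ↦ hne hy hw)
    fun w hw ↦ div_ne_zero (hne hx hw) (hne hy hw))

end Eilenberg

section Plane

variable {K L A : Set (ℝ × ℝ)} {x y z : ℝ × ℝ}

/-- The identification of the real plane with the complex plane. -/
noncomputable def planeHomeomorphComplex : ℝ × ℝ ≃ₜ ℂ :=
  Complex.equivRealProdCLM.symm.toHomeomorph

/-- Janiszewski's theorem. -/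
theorem unseparated_union (hK : IsCompact K) (hL : IsCompact L) (hKL : IsPreconnected (K ∩ L))
    (hxK : Unseparated K x y) (hxL : Unseparated L x y) : Unseparated (K ∪ L) x y := by
  let e := planeHomeomorphComplex
  refine .of_image e ?_
  rw [image_union]
  refine unseparated_union_complex (hK.image e.continuous) (hL.image e.continuous) ?_
    (hxK.image e) (hxL.image e)
  rw [← image_inter e.injective]
  exact hKL.image _ e.continuous.continuousOn

/-- With two common points the union of two non-separating sets has at most two complementary
components, so it cannot separate three points pairwise. -/
lemma unseparated_union_of_three (hK : IsCompact K) (hL : IsCompact L) {p q : ℝ × ℝ}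
    (hKL : K ∩ L ⊆ {p, q}) (hxzK : Unseparated K x z) (hyzK : Unseparated K y z)
    (hxzL : Unseparated L x z) (hyzL : Unseparated L y z) :
    Unseparated (K ∪ L) x y ∨ Unseparated (K ∪ L) y z ∨ Unseparated (K ∪ L) x z := by
  let e := planeHomeomorphComplex
  have hmem : e '' K ∩ e '' L ⊆ {e p, e q} := by
    rw [← image_inter e.injective, ← image_pair]
    exact image_mono hKL
  have := unseparated_union_of_three_complex (hK.image e.continuous) (hL.image e.continuous) hmem
    (hxzK.image e) (hyzK.image e) (hxzL.image e) (hyzL.image e)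
  rw [← image_union] at this
  exact this.imp (.of_image e) (Or.imp (.of_image e) (.of_image e))

lemma IsArc.unseparated (hA : IsArc A) (hx : x ∉ A) (hy : y ∉ A) : Unseparated A x y := by
  let e := planeHomeomorphComplex
  refine .of_image e ((hA.image e).unseparated_complex ?_ ?_)
  · rwa [e.injective.mem_set_image]
  · rwa [e.injective.mem_set_image]

end Plane

section ArcExtraction

variable {X : Type*} {γ g : ℝ → X} {C : Set ℝ}

/-- A closed set of parameters of the path `γ` on `[0, 1]`, containing both ends, each of whose gaps
is a loop of `γ`. Skipping the gaps erases these loops. -/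
structure IsLoopErasure (γ : ℝ → X) (C : Set ℝ) : Prop where
  isClosed : IsClosed C
  subset_Icc : C ⊆ Icc 0 1
  zero_mem : (0 : ℝ) ∈ C
  one_mem : (1 : ℝ) ∈ C
  eq_of_gap : ∀ ⦃s⦄, s ∈ C → ∀ ⦃t⦄, t ∈ C → s < t → Disjoint C (Ioo s t) → γ s = γ t

lemma isLoopErasure_Icc (γ : ℝ → X) : IsLoopErasure γ (Icc 0 1) where
  isClosed := isClosed_Icc
  subset_Icc := Subset.rfl
  zero_mem := by simp
  one_mem := by simp
  eq_of_gap s hs t ht hst hgap :=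
    absurd ⟨(left_lt_add_div_two.2 hst), (add_div_two_lt_right.2 hst)⟩
      (disjoint_left.1 hgap ⟨by linarith [hs.1], by linarith [ht.2]⟩)

namespace IsLoopErasure

lemma exists_mem_Icc_mem_Icc_eq (hC : IsLoopErasure γ C) {s a b t : ℝ} (hs : s ∈ C) (ht : t ∈ C)
    (hsa : s ≤ a) (hab : a < b) (hbt : b ≤ t) (hgap : Disjoint C (Icc a b)) :
    ∃ s' ∈ Icc s a, ∃ t' ∈ Icc b t, γ s' = γ t' := by
  obtain ⟨s', ⟨hs'C, hs'⟩, hs'max⟩ :=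
    (isCompact_Icc.inter_left hC.isClosed).exists_isGreatest ⟨s, hs, left_mem_Icc.2 hsa⟩
  obtain ⟨t', ⟨ht'C, ht'⟩, ht'min⟩ :=
    (isCompact_Icc.inter_left hC.isClosed).exists_isLeast ⟨t, ht, right_mem_Icc.2 hbt⟩
  refine ⟨s', hs', t', ht', hC.eq_of_gap hs'C ht'C ((hs'.2.trans_lt hab).trans_le ht'.1)
    (disjoint_left.2 fun z hz hz' ↦ ?_)⟩
  obtain hza | haz := le_total z a
  · exact (hs'max ⟨hz, hs'.1.trans hz'.1.le, hza⟩).not_gt hz'.1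
  obtain hbz | hzb := le_total b z
  · exact (ht'min ⟨hz, hbz, hz'.2.le.trans ht'.2⟩).not_gt hz'.2
  · exact disjoint_left.1 hgap hz ⟨haz, hzb⟩

lemma sdiff_Ioo (hC : IsLoopErasure γ C) {s t : ℝ} (hs : s ∈ C) (ht : t ∈ C)
    (heq : γ s = γ t) : IsLoopErasure γ (C \ Ioo s t) where
  isClosed := hC.isClosed.sdiff isOpen_Ioo
  subset_Icc := sdiff_subset.trans hC.subset_Icc
  zero_mem := ⟨hC.zero_mem, fun h ↦ h.1.not_ge (hC.subset_Icc hs).1⟩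
  one_mem := ⟨hC.one_mem, fun h ↦ h.2.not_ge (hC.subset_Icc ht).2⟩
  eq_of_gap x hx y hy hxy hgap := by
    by_cases hgapC : Disjoint C (Ioo x y)
    · exact hC.eq_of_gap hx.1 hy.1 hxy hgapC
    obtain ⟨w, hw, hxw, hwy⟩ := not_disjoint_iff.1 hgapC
    have hwst : w ∈ Ioo s t := by
      by_contra hwst
      exact disjoint_left.1 hgap ⟨hw, hwst⟩ ⟨hxw, hwy⟩
    have hxs : x = s := by
      refine (lt_trichotomy x s).elim (fun h ↦ ?_) (Or.elim · id fun h ↦ ?_)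
      · exact absurd ⟨h, hwst.1.trans hwy⟩
          (disjoint_left.1 hgap ⟨hs, fun h ↦ lt_irrefl _ h.1⟩)
      · exact absurd ⟨h, hxw.trans hwst.2⟩ hx.2
    have hyt : y = t := by
      refine (lt_trichotomy t y).elim (fun h ↦ ?_) (Or.elim · Eq.symm fun h ↦ ?_)
      · exact absurd ⟨hxw.trans hwst.2, h⟩
          (disjoint_left.1 hgap ⟨ht, fun h ↦ lt_irrefl _ h.2⟩)
      · exact absurd ⟨hwst.1.trans hwy, h⟩ hy.2
    rw [hxs, hyt, heq]

lemma exists_dist_le_of_isGreatest (hC : IsLoopErasure γ C) {s t r q : ℝ} (hst : s ≤ t)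
    (hr : IsGreatest (C ∩ Icc 0 s) r) (hq : IsGreatest (C ∩ Icc 0 t) q) :
    ∃ s' ∈ Icc (0 : ℝ) 1, ∃ t' ∈ Icc (0 : ℝ) 1,
      dist s' t' ≤ dist s t ∧ γ s' = γ r ∧ γ t' = γ q := by
  obtain ⟨⟨hrC, -, hrs⟩, hrmax⟩ := hr
  obtain ⟨⟨hqC, -, hqt⟩, hqmax⟩ := hq
  have hrq : r ≤ q := hqmax ⟨hrC, (hC.subset_Icc hrC).1, hrs.trans hst⟩
  obtain hqs | hsq := le_or_gt q s
  · rw [hrq.antisymm (hrmax ⟨hqC, (hC.subset_Icc hqC).1, hqs⟩)]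
    exact ⟨_, hC.subset_Icc hqC, _, hC.subset_Icc hqC, by simp, rfl, rfl⟩
  obtain ⟨l, ⟨hlC, hsl, -⟩, hlmin⟩ := (isCompact_Icc.inter_left hC.isClosed).exists_isLeast
    ⟨q, hqC, hsq.le, (hC.subset_Icc hqC).2⟩
  have hlq : l ≤ q := hlmin ⟨hqC, hsq.le, (hC.subset_Icc hqC).2⟩
  refine ⟨l, hC.subset_Icc hlC, q, hC.subset_Icc hqC, ?_, ?_, rfl⟩
  · rw [Real.dist_eq, Real.dist_eq, abs_of_nonpos (by linarith), abs_of_nonpos (by linarith)]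
    linarith
  · obtain hlr | hlr := (hrs.trans hsl).eq_or_lt
    · rw [hlr]
    refine (hC.eq_of_gap hrC hlC hlr (disjoint_left.2 fun z hz hzrl ↦ ?_)).symm
    obtain hzs | hsz := le_total z s
    · exact (hrmax ⟨hz, (hC.subset_Icc hz).1, hzs⟩).not_gt hzrl.1
    · exact (hlmin ⟨hz, hsz, (hC.subset_Icc hz).2⟩).not_gt hzrl.2

lemma sInter [TopologicalSpace X] [T2Space X] (hγ : Continuous γ) {c : Set (Set ℝ)}
    (hc : ∀ C ∈ c, IsLoopErasure γ C)
    (hchain : IsChain (· ⊆ ·) c) (hne : c.Nonempty) : IsLoopErasure γ (⋂₀ c) where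
  isClosed := isClosed_sInter fun C hC ↦ (hc C hC).isClosed
  subset_Icc := (sInter_subset_of_mem hne.some_mem).trans (hc _ hne.some_mem).subset_Icc
  zero_mem C hC := (hc C hC).zero_mem
  one_mem C hC := (hc C hC).one_mem
  eq_of_gap s hs t ht hst hgap := by
    by_contra hst'
    obtain ⟨U, W, hU, hW, hsU, htW, hUW⟩ := t2_separation hst'
    obtain ⟨m, hsm, hmt⟩ := exists_between hst
    obtain ⟨a, hsa, haU⟩ := mem_nhdsGE_iff_exists_Icc_subset.1 (mem_nhdsWithin_of_mem_nhds
      (Filter.inter_mem ((hU.preimage hγ).mem_nhds hsU) (Iio_mem_nhds hsm)))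
    obtain ⟨b, hbt, hbW⟩ := mem_nhdsLE_iff_exists_Icc_subset.1 (mem_nhdsWithin_of_mem_nhds
      (Filter.inter_mem ((hW.preimage hγ).mem_nhds htW) (Ioi_mem_nhds hmt)))
    obtain ⟨C, hC⟩ : ∃ C : c, Icc a b ∩ C = ∅ := by
      have : Nonempty c := hne.to_subtype
      refine isCompact_Icc.elim_directed_family_closed
        (fun C : c ↦ (C : Set ℝ)) (fun C ↦ (hc C C.2).isClosed) ?_ ?_
      · rw [← sInter_eq_iInter, ← disjoint_iff_inter_eq_empty]
        exact (hgap.mono_right (Icc_subset_Ioo hsa hbt)).symm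
      · exact fun C C' ↦ (hchain.total C.2 C'.2).elim (fun h ↦ ⟨C, Subset.rfl, h⟩)
          fun h ↦ ⟨C', h, Subset.rfl⟩
    have ha := haU (right_mem_Icc.2 (le_of_lt hsa))
    have hb := hbW (left_mem_Icc.2 (le_of_lt hbt))
    obtain ⟨s', hs', t', ht', heq⟩ := (hc C C.2).exists_mem_Icc_mem_Icc_eq (hs C C.2) (ht C C.2)
      (le_of_lt hsa) (ha.2.trans hb.2) (le_of_lt hbt) (disjoint_iff_inter_eq_empty.2
        (by rwa [inter_comm]))
    exact disjoint_left.1 hUW (haU hs').1 (heq ▸ (hbW ht').1)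

end IsLoopErasure

lemma exists_isLoopErasure_forall_disjoint_Ioo [TopologicalSpace X] [T2Space X]
    (hγ : Continuous γ) :
    ∃ C, IsLoopErasure γ C ∧
      ∀ ⦃s⦄, s ∈ C → ∀ ⦃t⦄, t ∈ C → γ s = γ t → Disjoint C (Ioo s t) := by
  obtain ⟨C, -, hC⟩ := zorn_superset_nonempty {C | IsLoopErasure γ C}
    (fun c hc hchain hne ↦ ⟨⋂₀ c, .sInter hγ hc hchain hne, fun _ ↦ sInter_subset_of_mem⟩) _
    (isLoopErasure_Icc γ)
  have hCγ : IsLoopErasure γ C := hC.1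
  exact ⟨C, hCγ, fun s hs t ht heq ↦ disjoint_left.2 fun z hz hzst ↦
    (hC.2 (hCγ.sdiff_Ioo hs ht heq) sdiff_subset hz).2 hzst⟩

/-- The path `g` never returns to a point after leaving it. -/
def HasIntervalFibers (g : ℝ → X) : Prop :=
  ∀ ⦃u v t⦄, u ≤ v → v ≤ t → g u = g t → g v = g u

lemma HasIntervalFibers.image_Icc_eq (hfib : HasIntervalFibers g) {s t : ℝ} (hs : 0 ≤ s)
    (hst : s ≤ t)
    (heq : g s = g t) : g '' Icc 0 s = g '' Icc 0 t := by
  refine (image_mono (Icc_subset_Icc_right hst)).antisymm ?_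
  rintro _ ⟨v, hv, rfl⟩
  obtain hvs | hsv := le_total v s
  · exact ⟨v, ⟨hv.1, hvs⟩, rfl⟩
  · exact ⟨s, right_mem_Icc.2 hs, (hfib hsv hv.2 heq).symm⟩

variable [MetricSpace X]

lemma IsLoopErasure.exists_monotone_continuous_comp (hγ : Continuous γ)
    (hC : IsLoopErasure γ C) :
    ∃ r : ℝ → ℝ, Monotone r ∧ (∀ t, r t ∈ C) ∧ r 0 = 0 ∧ r 1 = 1 ∧ Continuous (γ ∘ r) := by
  have hprev (t : Icc (0 : ℝ) 1) : ∃ r, IsGreatest (C ∩ Icc 0 t) r :=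
    (isCompact_Icc.inter_left hC.isClosed).exists_isGreatest ⟨0, hC.zero_mem, by simp [t.2.1]⟩
  choose r hr using hprev
  have hmono : Monotone r := fun u t hut ↦
    (hr t).2 ⟨(hr u).1.1, (hr u).1.2.1, (hr u).1.2.2.trans hut⟩
  have hcont : Continuous (γ ∘ r) := by
    refine Metric.continuous_iff.2 fun b ε hε ↦ ?_
    obtain ⟨δ, hδ, hγδ⟩ := Metric.uniformContinuousOn_iff.1
      (isCompact_Icc.uniformContinuousOn_of_continuous (hγ.continuousOn (s := Icc 0 1))) ε hε
    refine ⟨δ, hδ, fun a hab ↦ ?_⟩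
    wlog hle : a ≤ b generalizing a b
    · rw [dist_comm]
      exact this a b (by rwa [dist_comm]) (le_of_not_ge hle)
    obtain ⟨s', hs', t', ht', hdist, hs, ht⟩ := 
      hC.exists_dist_le_of_isGreatest hle (hr a) (hr b)
    rw [Function.comp_apply, Function.comp_apply, ← hs, ← ht]
    exact hγδ _ hs' _ ht' (hdist.trans_lt hab)
  refine ⟨r ∘ projIcc 0 1 zero_le_one, hmono.comp (monotone_projIcc _), fun t ↦ (hr _).1.1, ?_, ?_,
    hcont.comp continuous_projIcc⟩
  · rw [Function.comp_apply, projIcc_left]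
    exact le_antisymm (hr ⟨0, _⟩).1.2.2 (hr ⟨0, _⟩).1.2.1
  · rw [Function.comp_apply, projIcc_right]
    exact le_antisymm (hr ⟨1, _⟩).1.2.2 ((hr ⟨1, _⟩).2 ⟨hC.one_mem, by simp⟩)

lemma exists_hasIntervalFibers (hγ : Continuous γ) :
    ∃ g : ℝ → X, Continuous g ∧ g 0 = γ 0 ∧ g 1 = γ 1 ∧ range g ⊆ γ '' Icc 0 1 ∧
      HasIntervalFibers g := by
  obtain ⟨C, hC, hloop⟩ := exists_isLoopErasure_forall_disjoint_Ioo hγ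
  obtain ⟨r, hmono, hrC, hr₀, hr₁, hcont⟩ := hC.exists_monotone_continuous_comp hγ
  refine ⟨γ ∘ r, hcont, congrArg γ hr₀, congrArg γ hr₁,
    range_subset_iff.2 fun t ↦ mem_image_of_mem γ (hC.subset_Icc (hrC t)),
    fun u v t huv hvt heq ↦ ?_⟩
  obtain huv | huv := (hmono huv).eq_or_lt
  · exact congrArg γ huv.symm
  obtain hvt | hvt := (hmono hvt).eq_or_lt
  · exact (congrArg γ hvt).trans heq.symm
  · exact absurd ⟨huv, hvt⟩ (disjoint_left.1 (hloop (hrC u) (hrC t) heq) (hrC v))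

lemma continuousOn_infDist_image_Icc (hg : Continuous g) (x : X) :
    ContinuousOn (fun t ↦ Metric.infDist x (g '' Icc 0 t)) (Ici 0) := by
  have hcont : Continuous fun t : ℝ ↦ sInf ((fun s ↦ dist x (g (s * t))) '' Icc (0 : ℝ) 1) :=
    isCompact_Icc.continuous_sInf (f := fun t s ↦ dist x (g (s * t)))
      (by simp only [Function.HasUncurry.uncurry, id_eq]; fun_prop)
  refine hcont.continuousOn.congr fun t ht ↦ ?_
  have himage : Icc (0 : ℝ) t = (· * t) '' Icc 0 1 := by
    rw [image_mul_right_Icc zero_le_one ht, zero_mul, one_mul]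
  simp only [Metric.infDist_eq_iInf, ← sInf_image', himage, image_image]

/-- A weighted sum of the distances from points dense on the path `g` to its initial segment up to
time `t`. It measures how much of the path is left. -/
noncomputable def remaining (g : ℝ → X) (t : ℝ) : ℝ :=
  ∑' n : ℕ, (1 / 2) ^ n * min 1 (Metric.infDist (g (TopologicalSpace.denseSeq ℝ n)) (g '' Icc 0 t))

lemma summable_remaining (g : ℝ → X) (t : ℝ) : Summable fun n : ℕ ↦
    (1 / 2) ^ n * min 1 (Metric.infDist (g (TopologicalSpace.denseSeq ℝ n)) (g '' Icc 0 t)) :=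
  summable_geometric_two.of_nonneg_of_le
    (fun n ↦ mul_nonneg (by positivity) (le_min zero_le_one Metric.infDist_nonneg))
    fun n ↦ mul_le_of_le_one_right (by positivity) (min_le_left _ _)

lemma continuousOn_remaining (hg : Continuous g) : ContinuousOn (remaining g) (Ici 0) := by
  refine continuousOn_tsum (fun n ↦ continuousOn_const.mul (continuousOn_const.inf'
    (continuousOn_infDist_image_Icc hg _))) summable_geometric_two fun n t _ ↦ ?_
  rw [Real.norm_of_nonneg (mul_nonneg (by positivity) (le_min zero_le_one Metric.infDist_nonneg))]
  exact mul_le_of_le_one_right (by positivity) (min_le_left _ _)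

namespace HasIntervalFibers

lemma remaining_lt (hfib : HasIntervalFibers g) (hg : Continuous g) {s t : ℝ} (hs : 0 ≤ s)
    (hst : s < t) (hne : g s ≠ g t) : remaining g t < remaining g s := by
  have hanti (n : ℕ) : Metric.infDist (g (TopologicalSpace.denseSeq ℝ n)) (g '' Icc 0 t) ≤
      Metric.infDist (g (TopologicalSpace.denseSeq ℝ n)) (g '' Icc 0 s) :=
    Metric.infDist_le_infDist_of_subset (image_mono (Icc_subset_Icc_right hst.le))
      ((nonempty_Icc.2 hs).image g)
  have hnew : g t ∉ g '' Icc 0 s := by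
    rintro ⟨u, hu, hut⟩
    exact hne ((hfib hu.2 hst.le hut).trans hut)
  have hpos : 0 < Metric.infDist (g t) (g '' Icc 0 s) :=
    ((isCompact_Icc.image hg).isClosed.notMem_iff_infDist_pos
      ((nonempty_Icc.2 hs).image g)).1 hnew
  obtain ⟨n, hn⟩ := (TopologicalSpace.denseRange_denseSeq ℝ).exists_mem_open
    (Metric.isOpen_ball.preimage hg) ⟨t, Metric.mem_ball_self (lt_min one_pos (half_pos hpos))⟩
  obtain ⟨hn₁, hn₂⟩ := lt_min_iff.1 (Metric.mem_ball.1 hn)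
  have hle : Metric.infDist (g (TopologicalSpace.denseSeq ℝ n)) (g '' Icc 0 t) ≤ _ :=
    Metric.infDist_le_dist_of_mem ⟨t, right_mem_Icc.2 (hs.trans hst.le), rfl⟩
  have htri := Metric.infDist_le_infDist_add_dist (s := g '' Icc 0 s) (x := g t)
    (y := g (TopologicalSpace.denseSeq ℝ n))
  rw [dist_comm] at htri
  refine Summable.tsum_lt_tsum_of_nonneg (i := n)
    (fun m ↦ mul_nonneg (by positivity) (le_min zero_le_one Metric.infDist_nonneg))
    (fun m ↦ by gcongr; exact hanti m) ?_ (summable_remaining g s)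
  gcongr
  exact (min_le_right _ _).trans_lt (lt_min (by linarith) (by linarith))

lemma remaining_eq_iff (hfib : HasIntervalFibers g) (hg : Continuous g) {s t : ℝ} (hs : 0 ≤ s)
    (ht : 0 ≤ t) : remaining g s = remaining g t ↔ g s = g t := by
  wlog hst : s ≤ t generalizing s t
  · rw [eq_comm, this ht hs (le_of_not_ge hst), eq_comm]
  refine ⟨fun heq ↦ ?_, fun heq ↦ by rw [remaining, hfib.image_Icc_eq hs hst heq, ← remaining]⟩
  by_contra hne
  exact (hfib.remaining_lt hg hs (hst.lt_of_ne (mt (congrArg g) hne)) hne).ne' heq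

end HasIntervalFibers

/-- Every path contains an arc: erase a maximal family of loops, then use `remaining` as the
parameter. -/
theorem exists_injOn_image_Icc_subset (hγ : Continuous γ) (hne : γ 0 ≠ γ 1) :
    ∃ δ : ℝ → X, ContinuousOn δ (Icc 0 1) ∧ InjOn δ (Icc 0 1) ∧ δ 0 = γ 0 ∧ δ 1 = γ 1 ∧
      δ '' Icc 0 1 ⊆ γ '' Icc 0 1 := by
  obtain ⟨g, hg, hg₀, hg₁, hgγ, hfib⟩ := exists_hasIntervalFibers hγ
  have hlt : remaining g 1 < remaining g 0 :=
    hfib.remaining_lt hg le_rfl one_pos (by rwa [hg₀, hg₁])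
  have hcont : ContinuousOn (remaining g) (Icc 0 1) :=
    (continuousOn_remaining hg).mono Icc_subset_Ici_self
  have hsurj (y : ℝ) (hy : y ∈ Icc (remaining g 1) (remaining g 0)) :
      ∃ x ∈ Icc (0 : ℝ) 1, remaining g x = y := intermediate_value_Icc' zero_le_one hcont hy
  choose! ψ hψ hψeq using hsurj
  have hψcont : ContinuousOn (g ∘ ψ) (Icc (remaining g 1) (remaining g 0)) := by
    refine continuousOn_iff_isClosed.2 fun Z hZ ↦ ⟨remaining g '' (Icc 0 1 ∩ g ⁻¹' Z),
      ((isCompact_Icc.inter_right (hZ.preimage hg)).image_of_continuousOn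
        (hcont.mono inter_subset_left)).isClosed, ?_⟩
    refine Subset.antisymm (fun y hy ↦ ⟨⟨ψ y, ⟨hψ y hy.2, hy.1⟩, hψeq y hy.2⟩, hy.2⟩) ?_
    rintro _ ⟨⟨x, ⟨hx, hxZ⟩, rfl⟩, hy⟩
    refine ⟨?_, hy⟩
    rwa [mem_preimage, Function.comp_apply,
      (hfib.remaining_eq_iff hg (hψ _ hy).1 hx.1).1 (hψeq _ hy)]
  let a : ℝ → ℝ := AffineMap.lineMap (remaining g 0) (remaining g 1)
  have ha {τ : ℝ} (hτ : τ ∈ Icc (0 : ℝ) 1) : a τ ∈ Icc (remaining g 1) (remaining g 0) := by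
    rw [← segment_eq_Icc hlt.le, segment_symm]
    exact ⟨1 - τ, τ, by linarith [hτ.2], hτ.1, by ring, (AffineMap.lineMap_apply_module _ _ _).symm⟩
  have hend {τ : ℝ} (hτ : τ ∈ Icc (0 : ℝ) 1) (haτ : a τ = remaining g τ) :
      g (ψ (a τ)) = g τ :=
    (hfib.remaining_eq_iff hg (hψ _ (ha hτ)).1 hτ.1).1 ((hψeq _ (ha hτ)).trans haτ)
  refine ⟨g ∘ ψ ∘ a, hψcont.comp (AffineMap.lineMap_continuous.continuousOn) fun τ ↦ ha,
    fun x hx y hy hxy ↦ ?_, ?_, ?_, ?_⟩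
  · have hremaining := (hfib.remaining_eq_iff hg (hψ _ (ha hx)).1 (hψ _ (ha hy)).1).2 hxy
    rw [hψeq _ (ha hx), hψeq _ (ha hy)] at hremaining
    exact AffineMap.lineMap_injective ℝ hlt.ne' hremaining
  · exact (hend (by simp) (by simp [a])).trans hg₀
  · exact (hend (by simp) (by simp [a])).trans hg₁
  · rintro _ ⟨τ, -, rfl⟩
    exact hgγ ⟨_, rfl⟩

end ArcExtraction

section InfiniteConcatenation

lemma exists_injOn_of_joinedIn {X : Type*} [MetricSpace X] {S : Set X} {x y : X}
    (h : JoinedIn S x y) (hne : x ≠ y) :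
    ∃ δ : ℝ → X, ContinuousOn δ (Icc 0 1) ∧ InjOn δ (Icc 0 1) ∧ δ 0 = x ∧ δ 1 = y ∧
      δ '' Icc 0 1 ⊆ S := by
  obtain ⟨p, hp⟩ := h
  obtain ⟨δ, hδ, hinj, h₀, h₁, hsub⟩ :=
    exists_injOn_image_Icc_subset p.continuous_extend (by simpa using hne)
  refine ⟨δ, hδ, hinj, by simpa using h₀, by simpa using h₁, hsub.trans ?_⟩
  rintro _ ⟨t, ht, rfl⟩
  rw [Path.extend_apply p ht]
  exact hp _

variable {X : Type*} [TopologicalSpace X] {x : ℕ → X} {V : ℕ → Set X} {u : X}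

lemma exists_continuousOn_Ici_forall_mem (hV : ∀ n, JoinedIn (V n) (x n) (x (n + 1))) :
    ∃ g : ℝ → X, ContinuousOn g (Ici 0) ∧ g 0 = x 0 ∧ ∀ t, 0 ≤ t → g t ∈ V ⌊t⌋₊ := by
  choose p hp using hV
  let g (t : ℝ) : X := (p ⌊t⌋₊).extend (t - ⌊t⌋₊)
  have heq (n : ℕ) : EqOn g (fun t ↦ (p n).extend (t - n)) (Icc n (n + 1)) := by
    rintro t ⟨hnt, htn⟩
    rcases htn.eq_or_lt with rfl | hlt
    · have hfloor : ⌊(n + 1 : ℝ)⌋₊ = n + 1 := mod_cast Nat.floor_natCast (n + 1)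
      simp [g, hfloor]
    · obtain rfl := (Nat.floor_eq_iff (n.cast_nonneg.trans hnt)).2 ⟨hnt, hlt⟩
      rfl
  have hfinite : LocallyFinite fun n : ℕ ↦ Icc (n : ℝ) (n + 1) := fun t ↦
    ⟨Iio (t + 1), Iio_mem_nhds (lt_add_one t), (finite_Iic ⌈t + 1⌉₊).subset fun n ⟨z, hz, hzt⟩ ↦
      Nat.cast_le.1 (hz.1.trans (hzt.le.trans (Nat.le_ceil _)))⟩
  refine ⟨g, ?_, by simp [g], fun t ht ↦ ?_⟩
  · refine (hfinite.continuousOn_iUnion (fun n ↦ isClosed_Icc) fun n ↦ ?_).mono fun t ht ↦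
      mem_iUnion.2 ⟨⌊t⌋₊, Nat.floor_le ht, (Nat.lt_floor_add_one t).le⟩
    exact ((p n).continuous_extend.comp (by fun_prop)).continuousOn.congr (heq n)
  · have hmem : t - ⌊t⌋₊ ∈ Icc (0 : ℝ) 1 :=
      ⟨sub_nonneg.2 (Nat.floor_le ht), by linarith [Nat.lt_floor_add_one t]⟩
    simp only [g, Path.extend_apply _ hmem]
    exact hp _ _

open Filter Topology in
lemma joinedIn_insert_iUnion (hV : ∀ n, JoinedIn (V n) (x n) (x (n + 1)))
    (hu : Tendsto V atTop (𝓝 u).smallSets) : JoinedIn (insert u (⋃ n, V n)) u (x 0) := by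
  obtain ⟨g, hg, hg₀, hgV⟩ := exists_continuousOn_Ici_forall_mem hV
  have hmaps : MapsTo (fun t : ℝ ↦ t⁻¹ - 1) (Ioc 0 1) (Ici 0) := fun t ht ↦
    sub_nonneg.2 (one_le_inv_iff₀.2 ht)
  have hlim : Tendsto (fun t : ℝ ↦ g (t⁻¹ - 1)) (𝓝[>] 0) (𝓝 u) := by
    have htop : Tendsto (fun t : ℝ ↦ t⁻¹ - 1) (𝓝[>] 0) atTop :=
      tendsto_atTop_add_const_right _ _ tendsto_inv_nhdsGT_zero
    refine Tendsto.comp (fun U hU ↦ ?_) htop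
    change ∀ᶠ t in atTop, g t ∈ U
    filter_upwards [eventually_ge_atTop 0,
      tendsto_nat_floor_atTop.eventually (tendsto_smallSets_iff.1 hu U hU)] with t ht hsub
    exact hsub (hgV t ht)
  have hIcc : Icc (0 : ℝ) 1 \ {0} = Ioc 0 1 := Icc_sdiff_left
  refine JoinedIn.ofLine (f := Function.update (fun t ↦ g (t⁻¹ - 1)) 0 u) ?_ (by simp)
    (by simp [hg₀]) ?_
  · rw [continuousOn_update_iff, hIcc]
    refine ⟨hg.comp ?_ hmaps, fun _ ↦ hlim.mono_left (nhdsWithin_mono _ Ioc_subset_Ioi_self)⟩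
    exact (continuousOn_inv₀.mono fun t ht ↦ ht.1.ne').sub continuousOn_const
  · rintro _ ⟨t, ht, rfl⟩
    rcases eq_or_ne t 0 with rfl | ht₀
    · simp
    · rw [Function.update_of_ne ht₀]
      exact Or.inr (mem_iUnion.2 ⟨_, hgV _ (hmaps (hIcc ▸ ⟨ht, ht₀⟩))⟩)

end InfiniteConcatenation

section Accessibility

open Filter Topology

variable {X : Type*} [TopologicalSpace X] {K U W : Set X} {u x p : X}

/-- The points of `B` outside `L` lie in finitely many components of the complement of `L`. -/
def FinitelySeparates (L B : Set X) : Prop :=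
  ∃ T : Set X, T.Finite ∧ ∀ x ∈ B \ L, ∃ t ∈ T, Unseparated L x t

/-- In arbitrarily small neighborhoods of `u`, only finitely many components of the complement of
`K` come close to `u`. -/
def LocallyFinitelySeparates (K : Set X) (u : X) : Prop :=
  ∀ U ∈ 𝓝 u, ∃ O ⊆ U, IsOpen O ∧ u ∈ O ∧ ∃ N ∈ 𝓝 u, FinitelySeparates (K ∪ Oᶜ) N

/-- `W` is a component, accumulating at `u`, of the complement of `K` in an open neighborhood
of `u`. -/
def IsLocalComponent (K : Set X) (u : X) (W : Set X) : Prop :=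
  u ∈ closure W ∧ ∃ O, IsOpen O ∧ u ∈ O ∧ ∃ x, W = connectedComponentIn (O \ K) x

namespace IsLocalComponent

lemma nonempty (h : IsLocalComponent K u W) : W.Nonempty := closure_nonempty_iff.1 ⟨u, h.1⟩

lemma exists_subset (h : IsLocalComponent K u W) (hK : LocallyFinitelySeparates K u)
    (hU : U ∈ 𝓝 u) : ∃ W' ⊆ W ∩ U, IsLocalComponent K u W' := by
  obtain ⟨hu, O, hO, huO, y, rfl⟩ := h
  obtain ⟨O', hO'U, hO', huO', N, hN, T, hT, hNT⟩ := hK _ (inter_mem hU (hO.mem_nhds huO))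
  have hcompl : (K ∪ O'ᶜ)ᶜ = O' \ K := by
    rw [compl_union, compl_compl, inter_comm, sdiff_eq]
  have hcover : N ∩ O' ∩ connectedComponentIn (O \ K) y ⊆
      ⋃ t ∈ T, {z ∈ connectedComponentIn (O \ K) y | Unseparated (K ∪ O'ᶜ) z t} := by
    rintro z ⟨⟨hzN, hzO'⟩, hz⟩
    have hzL : z ∉ K ∪ O'ᶜ := by
      rintro (hzK | hzO)
      · exact (connectedComponentIn_subset _ _ hz).2 hzK
      · exact hzO hzO'
    obtain ⟨t, ht, hzt⟩ := hNT z ⟨hzN, hzL⟩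
    exact mem_biUnion ht ⟨hz, hzt⟩
  have hclosure := closure_mono hcover
    (mem_closure_iff_nhds.2 fun S hS ↦ by
      rw [← inter_assoc]
      exact mem_closure_iff_nhds.1 hu _ (inter_mem hS (inter_mem hN (hO'.mem_nhds huO'))))
  rw [hT.closure_biUnion] at hclosure
  obtain ⟨t, -, hut⟩ := mem_iUnion₂.1 hclosure
  obtain ⟨z, hz, hzt⟩ := closure_nonempty_iff.1 ⟨u, hut⟩
  refine ⟨connectedComponentIn (O' \ K) z, subset_inter ?_ ?_,
    closure_mono (fun w hw ↦ ?_) hut, O', hO', huO', z, rfl⟩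
  · rw [connectedComponentIn_eq hz]
    exact connectedComponentIn_mono _ (sdiff_subset_sdiff_left fun w hw ↦ (hO'U hw).2)
  · exact (connectedComponentIn_subset _ _).trans fun w hw ↦ (hO'U hw.1).1
  · rw [← hcompl]
    exact unseparated_iff_mem_connectedComponentIn.1 (hzt.trans hw.2.symm)

lemma joinedIn [LocallyPathConnectedSpace X] (h : IsLocalComponent K u W) (hK : IsClosed K)
    {y z : X} (hy : y ∈ W) (hz : z ∈ W) : JoinedIn W y z := by
  obtain ⟨-, O, hO, -, x, rfl⟩ := h
  have hopen : IsOpen (connectedComponentIn (O \ K) x) := (hO.sdiff hK).connectedComponentIn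
  exact (hopen.isConnected_iff_isPathConnected.1
    ⟨⟨y, hy⟩, isPreconnected_connectedComponentIn⟩).joinedIn y hy z hz

end IsLocalComponent

/-- A boundary point near which `K` has finitely many sides is accessible: shrinking local
components yield a path that converges to it. -/
theorem joinedIn_insert_connectedComponentIn [LocallyPathConnectedSpace X]
    [FirstCountableTopology X] (hK : IsClosed K) (hKu : LocallyFinitelySeparates K u)
    (hu : u ∈ closure (connectedComponentIn Kᶜ p)) (hx : x ∈ connectedComponentIn Kᶜ p) :
    JoinedIn (insert u (connectedComponentIn Kᶜ p)) u x := by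
  obtain ⟨U, hU⟩ := (𝓝 u).exists_antitone_basis
  have hW₀ : IsLocalComponent K u (connectedComponentIn Kᶜ p) :=
    ⟨hu, univ, isOpen_univ, mem_univ u, p, by rw [compl_eq_univ_sdiff]⟩
  have hnext (n : ℕ) (W : {W // IsLocalComponent K u W}) :
      ∃ W' : {W // IsLocalComponent K u W}, W'.1 ⊆ W.1 ∩ U n := by
    obtain ⟨W', hW', hloc⟩ := W.2.exists_subset hKu (hU.mem n)
    exact ⟨⟨W', hloc⟩, hW'⟩
  choose next hsub using hnext
  let W (n : ℕ) : {W // IsLocalComponent K u W} := Nat.rec ⟨_, hW₀⟩ next n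
  have hWsub (n : ℕ) : (W (n + 1)).1 ⊆ (W n).1 ∩ U n := hsub n (W n)
  have hanti : Antitone fun n ↦ (W n).1 :=
    antitone_nat_of_succ_le fun n ↦ (hWsub n).trans inter_subset_left
  let z (n : ℕ) : X := Nat.casesOn n x fun n ↦ (W (n + 1)).2.nonempty.some
  have hz (n : ℕ) : z n ∈ (W n).1 := by
    cases n with
    | zero => exact hx
    | succ n => exact (W (n + 1)).2.nonempty.some_mem
  have hsmall : Tendsto (fun n ↦ (W n).1) atTop (𝓝 u).smallSets :=
    (tendsto_add_atTop_iff_nat 1).1 <| hU.tendsto_smallSets.smallSets_mono <|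
      Eventually.of_forall fun n ↦ (hWsub n).trans inter_subset_right
  refine (joinedIn_insert_iUnion (fun n ↦ (W n).2.joinedIn hK (hz n)
    ((hWsub n).trans inter_subset_left (hz (n + 1)))) hsmall).mono ?_
  exact insert_subset_insert (iUnion_subset fun n ↦ hanti (Nat.zero_le n))

end Accessibility

section Stars

open Topology

section

variable {X : Type*} [TopologicalSpace X] {A B C F K O U : Set X} {u x y : X}

lemma subset_of_isPreconnected_of_disjoint_frontier (hC : IsPreconnected C) (hF : IsOpen F)
    (hd : Disjoint (frontier F) C) (hne : (C ∩ F).Nonempty) : C ⊆ F := by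
  have := isPreconnected_iff_preconnectedSpace.1 hC
  obtain ⟨x, hxC, hxF⟩ := hne
  have huniv := (isClopen_preimage_val hF hd).eq_univ ⟨⟨x, hxC⟩, hxF⟩
  exact fun y hy ↦ huniv.ge (mem_univ ⟨y, hy⟩)

lemma Unseparated.union_compl (h : Unseparated (K ∪ frontier O) x y) (hO : IsOpen O)
    (hx : x ∈ O) : Unseparated (K ∪ Oᶜ) x y := by
  obtain ⟨C, hC, hxC, hyC, hd⟩ := h
  rw [disjoint_union_right] at hd
  refine ⟨C, hC, hxC, hyC, disjoint_union_right.2 ⟨hd.1, disjoint_compl_right_iff_subset.2 ?_⟩⟩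
  exact subset_of_isPreconnected_of_disjoint_frontier hC hO hd.2.symm ⟨x, hxC, hx⟩

lemma FinitelySeparates.union_compl (h : FinitelySeparates (K ∪ frontier O) B)
    (hO : IsOpen O) : FinitelySeparates (K ∪ Oᶜ) B := by
  obtain ⟨T, hT, hBT⟩ := h
  refine ⟨T, hT, fun x ⟨hxB, hx⟩ ↦ ?_⟩
  obtain ⟨hxK, hxO⟩ := not_or.1 hx
  have hxf : x ∉ frontier O := fun hxf ↦ (hO.frontier_eq ▸ hxf).2 (not_not.1 hxO)
  obtain ⟨t, ht, hxt⟩ := hBT x ⟨hxB, not_or.2 ⟨hxK, hxf⟩⟩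
  exact ⟨t, ht, hxt.union_compl hO (not_not.1 hxO)⟩

/-- `A` is a nondegenerate injective continuous arc with initial point `u`. -/
def IsArcFrom (u : X) (A : Set X) : Prop :=
  ∃ (γ : ℝ → X) (s t : ℝ), s < t ∧ ContinuousOn γ (Icc s t) ∧ InjOn γ (Icc s t) ∧ γ s = u ∧
    A = γ '' Icc s t

lemma isArcFrom_image_right {γ : ℝ → X} {s t : ℝ} (hst : s < t) (hγ : ContinuousOn γ (Icc s t))
    (hinj : InjOn γ (Icc s t)) : IsArcFrom (γ t) (γ '' Icc s t) := by
  have hmaps : MapsTo Neg.neg (Icc (-t) (-s)) (Icc s t) := fun r hr ↦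
    ⟨le_neg.1 hr.2, neg_le.1 hr.1⟩
  refine ⟨γ ∘ Neg.neg, -t, -s, neg_lt_neg hst, hγ.comp continuous_neg.continuousOn hmaps,
    hinj.comp neg_injective.injOn hmaps, by simp, ?_⟩
  rw [image_comp, image_neg_eq_neg, neg_Icc, neg_neg, neg_neg]

lemma IsArcFrom.exists_eq_union (hA : IsArcFrom u A) (hU : U ∈ 𝓝 u) :
    ∃ S R q, IsArc S ∧ S ⊆ U ∧ IsCompact R ∧ u ∉ R ∧ S ∩ R ⊆ {q} ∧ A = S ∪ R := by
  obtain ⟨γ, s, t, hst, hγ, hinj, rfl, rfl⟩ := hA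
  have hs : s ∈ Icc s t := left_mem_Icc.2 hst.le
  have hpre : γ ⁻¹' U ∈ 𝓝[≥] s := nhdsWithin_Icc_eq_nhdsGE hst ▸ hγ s hs hU
  obtain ⟨c, hsc, hc⟩ := mem_nhdsGE_iff_exists_Icc_subset.1 hpre
  let m := min c t
  have hsm : s < m := lt_min hsc hst
  have hmt : m ≤ t := min_le_right c t
  have hleft : Icc s m ⊆ Icc s t := Icc_subset_Icc_right hmt
  have hright : Icc m t ⊆ Icc s t := Icc_subset_Icc_left hsm.le
  refine ⟨γ '' Icc s m, γ '' Icc m t, γ m, ⟨γ, s, m, hsm.le, hγ.mono hleft, hinj.mono hleft, rfl⟩,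
    image_subset_iff.2 fun r hr ↦ hc ⟨hr.1, hr.2.trans (min_le_left c t)⟩,
    isCompact_Icc.image_of_continuousOn (hγ.mono hright), ?_, ?_, ?_⟩
  · rintro ⟨r, hr, hrs⟩
    exact (hsm.trans_le hr.1).ne' (hinj (hright hr) hs hrs)
  · rintro _ ⟨⟨r, hr, rfl⟩, r', hr', hrr'⟩
    obtain rfl := hinj (hright hr') (hleft hr) hrr'
    rw [le_antisymm hr.2 hr'.1, mem_singleton_iff]
  · rw [← image_union, Icc_union_Icc_eq_Icc hsm.le hmt]

end

variable {ι : Type*} {K L A B : Set (ℝ × ℝ)} {x y u p q : ℝ × ℝ}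

lemma Unseparated.union_arc (h : Unseparated K x y) (hK : IsCompact K) (hA : IsArc A)
    (hKA : (K ∩ A).Subsingleton) (hx : x ∉ A) (hy : y ∉ A) : Unseparated (K ∪ A) x y :=
  unseparated_union hK hA.isCompact hKA.isPreconnected h (hA.unseparated hx hy)

namespace FinitelySeparates

lemma union_arc (h : FinitelySeparates L B) (hL : IsCompact L) (hA : IsArc A)
    (hLA : L ∩ A ⊆ {p, q}) : FinitelySeparates (L ∪ A) B := by
  obtain ⟨T, hT, hBT⟩ := h
  have hsplit (t : ℝ × ℝ) : ∃ T' : Set (ℝ × ℝ), T'.Finite ∧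
      ∀ x ∈ B \ (L ∪ A), Unseparated L x t → ∃ t' ∈ T', Unseparated (L ∪ A) x t' := by
    by_cases hx : ∃ x ∈ B \ (L ∪ A), Unseparated L x t
    swap
    · exact ⟨∅, finite_empty, fun x hxB hxt ↦ absurd ⟨x, hxB, hxt⟩ hx⟩
    obtain ⟨x, hxB, hxt⟩ := hx
    by_cases hy : ∃ y ∈ B \ (L ∪ A), Unseparated L y t ∧ ¬ Unseparated (L ∪ A) x y
    swap
    · push Not at hy
      exact ⟨{x}, finite_singleton x, fun y hyB hyt ↦ ⟨x, rfl, (hy y hyB hyt).symm⟩⟩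
    obtain ⟨y, hyB, hyt, hxy⟩ := hy
    refine ⟨{x, y}, toFinite _, fun z hz hzt ↦ ?_⟩
    have hnotMem {w : ℝ × ℝ} (hw : w ∈ B \ (L ∪ A)) : w ∉ A := fun hwA ↦ hw.2 (Or.inr hwA)
    rcases unseparated_union_of_three hL hA.isCompact hLA (hxt.trans hzt.symm)
      (hyt.trans hzt.symm) (hA.unseparated (hnotMem hxB) (hnotMem hz))
      (hA.unseparated (hnotMem hyB) (hnotMem hz)) with h | h | h
    · exact absurd h hxy
    · exact ⟨y, by simp, h.symm⟩
    · exact ⟨x, by simp, h.symm⟩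
  choose T' hT' hBT' using hsplit
  refine ⟨⋃ t ∈ T, T' t, hT.biUnion fun t _ ↦ hT' t, fun x hx ↦ ?_⟩
  obtain ⟨t, ht, hxt⟩ := hBT x ⟨hx.1, fun hxL ↦ hx.2 (Or.inl hxL)⟩
  obtain ⟨t', ht', hxt'⟩ := hBT' t x hx hxt
  exact ⟨t', mem_biUnion ht ht', hxt'⟩

lemma union_biUnion_arc {S : ι → Set (ℝ × ℝ)} {q : ι → ℝ × ℝ} (h : FinitelySeparates L B)
    (hL : IsCompact L) (hS : ∀ i, IsArc (S i)) (hLS : ∀ i, L ∩ S i ⊆ {q i, u})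
    (hpair : Pairwise fun i j ↦ S i ∩ S j ⊆ {u}) (s : Finset ι) :
    FinitelySeparates (L ∪ ⋃ i ∈ s, S i) B := by
  classical
  induction s using Finset.induction_on with
  | empty => simpa using h
  | insert a s ha ih =>
    rw [Finset.set_biUnion_insert, union_comm (S a), ← union_assoc]
    refine ih.union_arc (hL.union (s.isCompact_biUnion fun i _ ↦ (hS i).isCompact)) (hS a)
      (p := q a) (q := u) ?_
    rw [union_inter_distrib_right, iUnion₂_inter]
    refine union_subset (hLS a) (iUnion₂_subset fun i hi ↦ ?_)
    exact (hpair (ne_of_mem_of_not_mem hi ha)).trans (subset_insert _ _)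

end FinitelySeparates

/-- Only the germ of the star at `u` matters: the arcs are cut off inside a small disk, and each
of the finitely many short arcs at most doubles the number of components. -/
theorem locallyFinitelySeparates_union_iUnion [Finite ι] {A : ι → Set (ℝ × ℝ)}
    (hK : IsCompact K) (hu : u ∉ K) (hA : ∀ i, IsArcFrom u (A i))
    (hpair : Pairwise fun i j ↦ A i ∩ A j ⊆ {u}) :
    LocallyFinitelySeparates (K ∪ ⋃ i, A i) u := by
  intro U hU
  obtain ⟨r, hr, hrU⟩ := Metric.mem_nhds_iff.1
    (Filter.inter_mem hU (hK.isClosed.isOpen_compl.mem_nhds hu))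
  choose S R q hS hSball hR huR hSR hAeq using
    fun i ↦ (hA i).exists_eq_union (Metric.ball_mem_nhds u hr)
  have hSA (i : ι) : S i ⊆ A i := hAeq i ▸ subset_union_left
  have hRA (i : ι) : R i ⊆ A i := hAeq i ▸ subset_union_right
  let L := K ∪ (⋃ i, R i) ∪ Metric.sphere u r
  have hL : IsCompact L :=
    (hK.union (isCompact_iUnion hR)).union (isCompact_sphere u r)
  have huL : u ∉ L := by simp [L, hu, huR, hr.ne]
  obtain ⟨δ, hδ, hδL⟩ := Metric.isOpen_iff.1 hL.isClosed.isOpen_compl u huL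
  have hball : FinitelySeparates L (Metric.ball u δ) :=
    ⟨{u}, finite_singleton u, fun x hx ↦ ⟨u, rfl, _, (convex_ball u δ).isPreconnected, hx.1,
      Metric.mem_ball_self hδ, subset_compl_iff_disjoint_right.1 hδL⟩⟩
  have hLS (i : ι) : L ∩ S i ⊆ {q i, u} := by
    rintro z ⟨(hzK | hzR) | hz, hzS⟩
    · exact absurd hzK (hrU (hSball i hzS)).2
    · obtain ⟨j, hj⟩ := mem_iUnion.1 hzR
      rcases eq_or_ne i j with rfl | hij
      · exact Or.inl (hSR i ⟨hzS, hj⟩)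
      · exact Or.inr (hpair hij ⟨hSA i hzS, hRA j hj⟩)
    · exact absurd (hSball i hzS) (hz : dist z u = r).not_lt
  cases nonempty_fintype ι
  have hfinite := hball.union_biUnion_arc hL hS hLS
    (fun i j hij ↦ (inter_subset_inter (hSA i) (hSA j)).trans (hpair hij)) Finset.univ
  have hunion : L ∪ ⋃ i ∈ Finset.univ, S i = (K ∪ ⋃ i, A i) ∪ frontier (Metric.ball u r) := by
    simp only [L, Finset.mem_univ, iUnion_true, hAeq, iUnion_union_distrib, frontier_ball u hr.ne']
    ac_rfl
  exact ⟨Metric.ball u r, fun z hz ↦ (hrU hz).1, Metric.isOpen_ball, Metric.mem_ball_self hr, _,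
    Metric.ball_mem_nhds u hδ, (hunion ▸ hfinite).union_compl Metric.isOpen_ball⟩

end Stars

section BoundaryArcs

variable {K F : Set (ℝ × ℝ)} {γ : ℝ → ℝ × ℝ} {s t a b r : ℝ} {x : ℝ × ℝ}

lemma isPreconnected_union_of_mem_closure {X : Type*} [TopologicalSpace X] {S T : Set X} {p : X}
    (hS : IsPreconnected S) (hT : IsPreconnected T) (hpT : p ∈ T) (hpS : p ∈ closure S) :
    IsPreconnected (S ∪ T) := by
  have := (hS.subset_closure subset_union_left (union_subset subset_closure
    (singleton_subset_iff.2 hpS))).union p (Or.inr rfl) hpT hT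
  rwa [union_assoc, union_eq_self_of_subset_left (singleton_subset_iff.2 hpT)] at this

lemma Unseparated.union_image_Icc_union_image_Icc (h : Unseparated K x (γ r)) (hK : IsCompact K)
    (hγ : ContinuousOn γ (Icc s t)) (hinj : InjOn γ (Icc s t))
    (hend : Icc s t ∩ γ ⁻¹' K ⊆ {s, t}) (hx : x ∉ γ '' Icc s t) (hr : r ∈ Ioo a b) (ha : s ≤ a)
    (hb : b ≤ t) : Unseparated (K ∪ γ '' Icc s a ∪ γ '' Icc b t) x (γ r) := by
  obtain ⟨har, hrb⟩ := hr
  have hleft : Icc s a ⊆ Icc s t := Icc_subset_Icc_right (by linarith)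
  have hright : Icc b t ⊆ Icc s t := Icc_subset_Icc_left (by linarith)
  have hr : r ∈ Icc s t := ⟨by linarith, by linarith⟩
  have harcLeft : IsArc (γ '' Icc s a) := ⟨γ, s, a, ha, hγ.mono hleft, hinj.mono hleft, rfl⟩
  have harcRight : IsArc (γ '' Icc b t) := ⟨γ, b, t, hb, hγ.mono hright, hinj.mono hright, rfl⟩
  have hmeetLeft : K ∩ γ '' Icc s a ⊆ {γ s} := by
    rintro _ ⟨hzK, z, hz, rfl⟩
    rcases hend ⟨hleft hz, hzK⟩ with rfl | rfl
    · rfl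
    · linarith [hz.2]
  have hmeetRight : (K ∪ γ '' Icc s a) ∩ γ '' Icc b t ⊆ {γ t} := by
    rintro _ ⟨hzK | ⟨z', hz', heq⟩, z, hz, rfl⟩
    · rcases hend ⟨hright hz, hzK⟩ with rfl | rfl
      · linarith [hz.1]
      · rfl
    · linarith [hz'.2, hz.1, hinj (hleft hz') (hright hz) heq]
  refine (h.union_arc hK harcLeft (subsingleton_singleton.anti hmeetLeft)
    (fun hx' ↦ hx (image_mono hleft hx')) ?_).union_arc (hK.union harcLeft.isCompact) harcRight
    (subsingleton_singleton.anti hmeetRight) (fun hx' ↦ hx (image_mono hright hx')) ?_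
  · rintro ⟨z, hz, heq⟩
    linarith [hz.2, hinj (hleft hz) hr heq]
  · rintro ⟨z, hz, heq⟩
    linarith [hz.1, hinj (hright hz) hr heq]

/-- Otherwise `F` could leave through a missing piece of the arc: removing an open piece from an arc
attached to `K` at its ends only does not create any new separation. -/
theorem image_Icc_subset_closure (hK : IsCompact K) (hγ : ContinuousOn γ (Icc s t))
    (hinj : InjOn γ (Icc s t)) (hend : Icc s t ∩ γ ⁻¹' K ⊆ {s, t}) (hF : IsPreconnected F)
    (hFo : IsOpen F) (hFK : Disjoint F (K ∪ γ '' Icc s t))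
    (hfr : frontier F ⊆ K ∪ γ '' Icc s t) (hr : r ∈ Ioo s t) (hrF : γ r ∈ closure F) :
    γ '' Icc s t ⊆ closure F := by
  have hIoo : γ '' Ioo s t ⊆ closure F := by
    rintro _ ⟨σ, hσ, rfl⟩
    by_contra hσF
    have hγσ : ContinuousAt γ σ := hγ.continuousAt (Icc_mem_nhds hσ.1 hσ.2)
    obtain ⟨a, b, hab, hsub⟩ := mem_nhds_iff_exists_Ioo_subset.1 <| Filter.inter_mem
      (hγσ (isClosed_closure.isOpen_compl.mem_nhds hσF)) (Ioo_mem_nhds hσ.1 hσ.2)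
    obtain ⟨ha, hb⟩ := (Ioo_subset_Ioo_iff (hab.1.trans hab.2)).1 (hsub.trans inter_subset_right)
    obtain ⟨x, hx⟩ := closure_nonempty_iff.1 ⟨_, hrF⟩
    rw [disjoint_union_right] at hFK
    have hIooK : Disjoint (γ '' Ioo s t) K := by
      rw [disjoint_left]
      rintro _ ⟨z, hz, rfl⟩ hzK
      rcases hend ⟨Ioo_subset_Icc_self hz, hzK⟩ with rfl | rfl
      exacts [hz.1.false, hz.2.false]
    have hσK : Unseparated K x (γ σ) :=
      ⟨_, isPreconnected_union_of_mem_closure hF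
        (isPreconnected_Ioo.image γ (hγ.mono Ioo_subset_Icc_self)) (mem_image_of_mem γ hr) hrF,
        Or.inl hx, Or.inr (mem_image_of_mem γ hσ), disjoint_union_left.2 ⟨hFK.1, hIooK⟩⟩
    obtain ⟨C, hC, hxC, hσC, hd⟩ := hσK.union_image_Icc_union_image_Icc hK hγ hinj hend
      (disjoint_left.1 hFK.2 hx) hab ha hb
    refine hσF (subset_closure (subset_of_isPreconnected_of_disjoint_frontier hC hFo ?_
      ⟨x, hxC, hx⟩ hσC))
    refine disjoint_left.2 fun z hzF hzC ↦ disjoint_left.1 hd hzC ?_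
    rcases hfr hzF with hzK | ⟨w, hw, rfl⟩
    · exact Or.inl (Or.inl hzK)
    · rcases le_or_gt w a with hwa | haw
      · exact Or.inl (Or.inr ⟨w, ⟨hw.1, hwa⟩, rfl⟩)
      rcases le_or_gt b w with hbw | hwb
      · exact Or.inr ⟨w, ⟨hbw, hw.2⟩, rfl⟩
      · exact absurd (frontier_subset_closure hzF) (hsub ⟨haw, hwb⟩).1
  rw [← closure_Ioo (hr.1.trans hr.2).ne] at hγ ⊢
  exact hγ.image_closure.trans (closure_minimal hIoo isClosed_closure)

end BoundaryArcs

section Drawings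

namespace Drawing

variable {V : Type} {G : SimpleGraph V} {D : Drawing G} {u v w x y : V} {p : ℝ × ℝ}
  {e f : Sym2 V} {γ : ℝ → ℝ × ℝ}

/-- `γ`, restricted to the unit interval, is an injective parametrization from `u` to `v` of the arc
by which `D` draws the edge `h`. -/
structure IsArcParam (D : Drawing G) (h : G.Adj u v) (γ : ℝ → ℝ × ℝ) : Prop where
  continuousOn : ContinuousOn γ (Icc 0 1)
  injOn : InjOn γ (Icc 0 1)
  zero : γ 0 = D.pos u
  one : γ 1 = D.pos v
  arc_eq : D.arc h = γ '' Icc 0 1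

lemma exists_isArcParam (D : Drawing G) (h : G.Adj u v) : ∃ γ, D.IsArcParam h γ :=
  let ⟨γ, hγ, hinj, h0, h1, harc⟩ := D.arc_isArc h
  ⟨γ, hγ, hinj, h0, h1, harc⟩

lemma IsArcParam.arcInt_eq {h : G.Adj u v} (hγ : D.IsArcParam h γ) :
    D.arcInt h = γ '' Ioo 0 1 := by
  have hends : ({γ 0, γ 1} : Set (ℝ × ℝ)) = γ '' {0, 1} := (image_pair γ 0 1).symm
  rw [arcInt, hγ.arc_eq, ← hγ.zero, ← hγ.one, hends, ← hγ.injOn.image_sdiff_subset,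
    Icc_sdiff_both]
  exact pair_subset (left_mem_Icc.2 zero_le_one) (right_mem_Icc.2 zero_le_one)

lemma pos_left_mem_arc (h : G.Adj u v) : D.pos u ∈ D.arc h := by
  obtain ⟨γ, hγ⟩ := D.exists_isArcParam h
  rw [hγ.arc_eq, ← hγ.zero]
  exact mem_image_of_mem γ (left_mem_Icc.2 zero_le_one)

lemma pos_right_mem_arc (h : G.Adj u v) : D.pos v ∈ D.arc h :=
  D.arc_symm h ▸ pos_left_mem_arc h.symm

lemma isArc_arc (h : G.Adj u v) : IsArc (D.arc h) :=
  let ⟨γ, hγ⟩ := D.exists_isArcParam h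
  ⟨γ, 0, 1, zero_le_one, hγ.continuousOn, hγ.injOn, hγ.arc_eq⟩

lemma isArcFrom_arc (h : G.Adj u v) : IsArcFrom (D.pos u) (D.arc h) :=
  let ⟨γ, hγ⟩ := D.exists_isArcParam h
  ⟨γ, 0, 1, zero_lt_one, hγ.continuousOn, hγ.injOn, hγ.zero, hγ.arc_eq⟩

lemma arcInt_nonempty (h : G.Adj u v) : (D.arcInt h).Nonempty := by
  obtain ⟨γ, hγ⟩ := D.exists_isArcParam h
  rw [hγ.arcInt_eq]
  exact (nonempty_Ioo.2 zero_lt_one).image γ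

lemma arcInt_subset_arc (h : G.Adj u v) : D.arcInt h ⊆ D.arc h :=
  sdiff_subset

lemma eq_or_eq_or_mem_arcInt (h : G.Adj u v) (hp : p ∈ D.arc h) :
    p = D.pos u ∨ p = D.pos v ∨ p ∈ D.arcInt h := by
  rw [arcInt, mem_sdiff, mem_insert_iff, mem_singleton_iff]
  tauto

lemma arc_congr (h : G.Adj u v) (h' : G.Adj x y) (heq : s(x, y) = s(u, v)) :
    D.arc h' = D.arc h := by
  rcases Sym2.eq_iff.1 heq with ⟨rfl, rfl⟩ | ⟨rfl, rfl⟩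
  · rfl
  · exact D.arc_symm h

lemma edgeInt_eq_arcInt (h : G.Adj u v) : D.edgeInt s(u, v) = D.arcInt h := by
  refine subset_antisymm ?_ fun p hp ↦ ⟨u, v, h, rfl, hp⟩
  rintro p ⟨x, y, h', heq, hp⟩
  rcases Sym2.eq_iff.1 heq with ⟨rfl, rfl⟩ | ⟨rfl, rfl⟩
  · exact hp
  · rwa [arcInt, pair_comm, D.arc_symm] at hp

lemma edgeInt_eq_empty (h : ¬ G.Adj u v) : D.edgeInt s(u, v) = ∅ := by
  rw [eq_empty_iff_forall_notMem]
  rintro p ⟨x, y, h', heq, -⟩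
  exact h (by rwa [← SimpleGraph.mem_edgeSet, heq])

lemma pos_mem_drawingSet (v : V) : D.pos v ∈ D.drawingSet :=
  Or.inl (mem_range_self v)

lemma mem_drawingSet :
    p ∈ D.drawingSet ↔ (∃ v, D.pos v = p) ∨ ∃ u v, ∃ h : G.Adj u v, p ∈ D.arc h := by
  simp only [drawingSet, mem_union, mem_range, mem_iUnion]

lemma arc_subset_drawingSet (h : G.Adj u v) : D.arc h ⊆ D.drawingSet :=
  fun _ hp ↦ mem_drawingSet.2 (Or.inr ⟨u, v, h, hp⟩)

lemma edgeInt_subset_drawingSet (e : Sym2 V) : D.edgeInt e ⊆ D.drawingSet := by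
  rintro p ⟨u, v, h, -, hp⟩
  exact arc_subset_drawingSet h hp.1

/-- The part of the drawing `D` consisting of the vertices in `W` and of the edges in `E` (with
their endpoints). -/
def partialDrawingSet (D : Drawing G) (W : Set V) (E : Set (Sym2 V)) : Set (ℝ × ℝ) :=
  D.pos '' W ∪ ⋃ (u : V) (v : V) (h : G.Adj u v) (_ : s(u, v) ∈ E), D.arc h

variable {W : Set V} {E : Set (Sym2 V)}

lemma mem_partialDrawingSet : p ∈ D.partialDrawingSet W E ↔
    (∃ v ∈ W, D.pos v = p) ∨ ∃ u v, ∃ h : G.Adj u v, s(u, v) ∈ E ∧ p ∈ D.arc h := by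
  simp only [partialDrawingSet, mem_union, mem_image, mem_iUnion, exists_prop]

lemma partialDrawingSet_subset_drawingSet : D.partialDrawingSet W E ⊆ D.drawingSet := by
  intro p hp
  rcases mem_partialDrawingSet.1 hp with ⟨v, -, rfl⟩ | ⟨u, v, h, -, hp⟩
  exacts [pos_mem_drawingSet v, arc_subset_drawingSet h hp]

lemma isCompact_partialDrawingSet [Finite V] (D : Drawing G) (W : Set V) (E : Set (Sym2 V)) :
    IsCompact (D.partialDrawingSet W E) :=
  (toFinite _).isCompact.union <| isCompact_iUnion fun _ ↦ isCompact_iUnion fun _ ↦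
    isCompact_iUnion fun h ↦ isCompact_iUnion fun _ ↦ (isArc_arc h).isCompact

lemma exists_mem_edgeInt (hp : p ∈ D.partialDrawingSet W E) (hpos : p ∉ range D.pos) :
    ∃ e ∈ E, p ∈ D.edgeInt e := by
  rcases mem_partialDrawingSet.1 hp with ⟨w, -, rfl⟩ | ⟨x, y, h, hE, hp⟩
  · exact absurd (mem_range_self w) hpos
  refine ⟨s(x, y), hE, edgeInt_eq_arcInt h ▸ ?_⟩
  rcases eq_or_eq_or_mem_arcInt h hp with rfl | rfl | hpi
  exacts [absurd (mem_range_self x) hpos, absurd (mem_range_self y) hpos, hpi]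

lemma partialDrawingSet_univ_univ : D.partialDrawingSet univ univ = D.drawingSet := by
  ext p
  simp only [mem_partialDrawingSet, mem_drawingSet, mem_univ, true_and]

lemma isClosed_drawingSet [Finite V] (D : Drawing G) : IsClosed D.drawingSet :=
  partialDrawingSet_univ_univ (D := D) ▸ (D.isCompact_partialDrawingSet univ univ).isClosed

lemma partialDrawingSet_compl_union_arc (h : G.Adj u v) :
    D.partialDrawingSet univ {s(u, v)}ᶜ ∪ D.arc h = D.drawingSet := by
  refine subset_antisymm
    (union_subset partialDrawingSet_subset_drawingSet (arc_subset_drawingSet h)) fun p hp ↦ ?_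
  rcases mem_drawingSet.1 hp with ⟨w, rfl⟩ | ⟨x, y, h', hp⟩
  · exact Or.inl (mem_partialDrawingSet.2 (Or.inl ⟨w, trivial, rfl⟩))
  · by_cases heq : s(x, y) = s(u, v)
    · exact Or.inr (arc_congr h h' heq ▸ hp)
    · exact Or.inl (mem_partialDrawingSet.2 (Or.inr ⟨x, y, h', heq, hp⟩))

lemma partialDrawingSet_compl_union_iUnion_arc (hw : ∃ v, G.Adj w v) :
    D.partialDrawingSet {w}ᶜ {e | w ∉ e} ∪ ⋃ v : G.neighborSet w, D.arc v.2 = D.drawingSet := by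
  refine subset_antisymm (union_subset partialDrawingSet_subset_drawingSet
    (iUnion_subset fun v ↦ arc_subset_drawingSet v.2)) fun p hp ↦ ?_
  have harc {v : V} (h : G.Adj w v) (hp : p ∈ D.arc h) :
      p ∈ ⋃ v : G.neighborSet w, D.arc v.2 := mem_iUnion.2 ⟨⟨v, h⟩, hp⟩
  rcases mem_drawingSet.1 hp with ⟨v, rfl⟩ | ⟨x, y, h, hp⟩
  · rcases eq_or_ne v w with rfl | hvw
    · obtain ⟨v', h⟩ := hw
      exact Or.inr (harc h (pos_left_mem_arc h))
    · exact Or.inl (mem_partialDrawingSet.2 (Or.inl ⟨v, hvw, rfl⟩))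
  · by_cases hwxy : w ∈ s(x, y)
    · rcases Sym2.mem_iff.1 hwxy with rfl | rfl
      · exact Or.inr (harc h hp)
      · exact Or.inr (harc h.symm (D.arc_symm h ▸ hp))
    · exact Or.inl (mem_partialDrawingSet.2 (Or.inr ⟨x, y, h, hwxy, hp⟩))

/-- The edge `s(u, v)` is not crossed by any other edge. -/
def IsUncrossed (D : Drawing G) (u v : V) : Prop :=
  ∀ f, ¬ D.Cross s(u, v) f

lemma IsUncrossed.symm (h : D.IsUncrossed u v) : D.IsUncrossed v u := by
  rwa [IsUncrossed, Sym2.eq_swap]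

lemma Cross.symm (h : D.Cross e f) : D.Cross f e :=
  ⟨h.1.symm, inter_comm (D.edgeInt e) _ ▸ h.2⟩

namespace IsGood

lemma pos_notMem_edgeInt (hg : D.IsGood) (w : V) (e : Sym2 V) : D.pos w ∉ D.edgeInt e := by
  rintro ⟨u, v, h, -, hw, hne⟩
  rcases hg.1 w h hw with rfl | rfl <;> simp at hne

lemma pos_notMem_arcInt (hg : D.IsGood) (h : G.Adj u v) (w : V) : D.pos w ∉ D.arcInt h :=
  edgeInt_eq_arcInt h ▸ hg.pos_notMem_edgeInt w _

lemma disjoint_arc (hg : D.IsGood) (h : G.Adj u v) (h' : G.Adj x y) (hux : u ≠ x) (huy : u ≠ y)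
    (hvx : v ≠ x) (hvy : v ≠ y) (hcross : ¬ D.Cross s(u, v) s(x, y)) :
    Disjoint (D.arc h) (D.arc h') := by
  rw [disjoint_left]
  intro p hp hp'
  rcases eq_or_eq_or_mem_arcInt h hp with rfl | rfl | hpi
  · exact (hg.1 _ h' hp').elim hux huy
  · exact (hg.1 _ h' hp').elim hvx hvy
  rcases eq_or_eq_or_mem_arcInt h' hp' with rfl | rfl | hpi'
  · exact hg.pos_notMem_arcInt h _ hpi
  · exact hg.pos_notMem_arcInt h _ hpi
  · refine hcross ⟨fun heq ↦ ?_, p, edgeInt_eq_arcInt h ▸ hpi, edgeInt_eq_arcInt h' ▸ hpi'⟩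
    rcases Sym2.eq_iff.1 heq with ⟨hux', -⟩ | ⟨huy', -⟩
    exacts [hux hux', huy huy']

lemma arc_inter_arc_subset (hg : D.IsGood) (h : G.Adj w u) (h' : G.Adj w v) (huv : u ≠ v) :
    D.arc h ∩ D.arc h' ⊆ {D.pos w} := by
  rintro p ⟨hp, hp'⟩
  rcases eq_or_eq_or_mem_arcInt h hp with rfl | rfl | hpi
  · rfl
  · rcases hg.1 _ h' hp' with rfl | rfl
    exacts [rfl, absurd rfl huv]
  rcases eq_or_eq_or_mem_arcInt h' hp' with rfl | rfl | hpi'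
  · rfl
  · exact absurd hpi (hg.pos_notMem_arcInt h _)
  · exact absurd ⟨hpi, hpi'⟩ (hg.2.2 h h' huv ▸ notMem_empty p)

end IsGood

end Drawing

end Drawings

section Faces

namespace Drawing

variable {V : Type} {G : SimpleGraph V} {D : Drawing G} {a b u v w x y : V} {p q : ℝ × ℝ}
  {F F' : Set (ℝ × ℝ)} {γ : ℝ → ℝ × ℝ}

namespace IsGood

lemma locallyFinitelySeparates_pos [Finite V] (hg : D.IsGood) (hw : ∃ v, G.Adj w v) :
    LocallyFinitelySeparates D.drawingSet (D.pos w) := by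
  rw [← partialDrawingSet_compl_union_iUnion_arc hw]
  refine locallyFinitelySeparates_union_iUnion (D.isCompact_partialDrawingSet _ _) ?_
    (fun v ↦ isArcFrom_arc v.2)
    fun v v' hne ↦ hg.arc_inter_arc_subset v.2 v'.2 (Subtype.coe_injective.ne hne)
  rw [mem_partialDrawingSet]
  rintro (⟨v, hv, heq⟩ | ⟨x, y, h, hE, hp⟩)
  · exact hv (D.pos_inj heq)
  · exact hE (Sym2.mem_iff.2 (hg.1 w h hp))

lemma disjoint_partialDrawingSet_arcInt (hg : D.IsGood) (h : G.Adj u v)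
    (hunc : D.IsUncrossed u v) (W : Set V) :
    Disjoint (D.partialDrawingSet W {s(u, v)}ᶜ) (D.arcInt h) := by
  rw [disjoint_left]
  intro p hp hpi
  obtain ⟨f, hf, hpf⟩ := exists_mem_edgeInt hp <| by
    rintro ⟨w, rfl⟩
    exact hg.pos_notMem_arcInt h w hpi
  exact hunc f ⟨Ne.symm hf, p, edgeInt_eq_arcInt h ▸ hpi, hpf⟩

lemma partialDrawingSet_inter_arc_subset (hg : D.IsGood) (h : G.Adj u v)
    (hunc : D.IsUncrossed u v) (W : Set V) :
    D.partialDrawingSet W {s(u, v)}ᶜ ∩ D.arc h ⊆ {D.pos u, D.pos v} := by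
  rintro p ⟨hp, hpa⟩
  by_contra hne
  exact disjoint_left.1 (hg.disjoint_partialDrawingSet_arcInt h hunc W) hp ⟨hpa, hne⟩

end IsGood

lemma locallyFinitelySeparates_of_mem_arcInt [Finite V] (h : G.Adj u v) (hp : p ∈ D.arcInt h)
    (hp' : p ∉ D.partialDrawingSet univ {s(u, v)}ᶜ) :
    LocallyFinitelySeparates D.drawingSet p := by
  obtain ⟨γ, hγ⟩ := D.exists_isArcParam h
  rw [hγ.arcInt_eq] at hp
  obtain ⟨χ, ⟨hχ0, hχ1⟩, rfl⟩ := hp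
  have hleft : Icc 0 χ ⊆ Icc 0 1 := Icc_subset_Icc_right hχ1.le
  have hright : Icc χ 1 ⊆ Icc 0 1 := Icc_subset_Icc_left hχ0.le
  have hinter : γ '' Icc 0 χ ∩ γ '' Icc χ 1 ⊆ {γ χ} := by
    rintro _ ⟨⟨r, hr, rfl⟩, r', hr', heq⟩
    have := hγ.injOn (hright hr') (hleft hr) heq
    rw [le_antisymm hr.2 (this ▸ hr'.1), mem_singleton_iff]
  rw [← partialDrawingSet_compl_union_arc h, hγ.arc_eq, ← Icc_union_Icc_eq_Icc hχ0.le hχ1.le,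
    image_union, union_eq_iUnion (s₁ := γ '' Icc 0 χ)]
  refine locallyFinitelySeparates_union_iUnion (D.isCompact_partialDrawingSet _ _) hp' ?_ ?_
  · rintro (_ | _)
    · exact ⟨γ, χ, 1, hχ1, hγ.continuousOn.mono hright, hγ.injOn.mono hright, rfl, rfl⟩
    · exact isArcFrom_image_right hχ0 (hγ.continuousOn.mono hleft) (hγ.injOn.mono hleft)
  · rintro (_ | _) (_ | _) hne
    · exact absurd rfl hne
    · exact (inter_comm _ _).subset.trans hinter
    · exact hinter
    · exact absurd rfl hne

namespace IsFace

lemma isOpen [Finite V] (hF : D.IsFace F) : IsOpen F := by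
  obtain ⟨p, -, rfl⟩ := hF
  exact D.isClosed_drawingSet.isOpen_compl.connectedComponentIn

lemma isPreconnected (hF : D.IsFace F) : IsPreconnected F := by
  obtain ⟨p, -, rfl⟩ := hF
  exact isPreconnected_connectedComponentIn

lemma nonempty (hF : D.IsFace F) : F.Nonempty := by
  obtain ⟨p, hp, rfl⟩ := hF
  exact ⟨p, mem_connectedComponentIn hp⟩

lemma disjoint_drawingSet (hF : D.IsFace F) : Disjoint F D.drawingSet := by
  obtain ⟨p, -, rfl⟩ := hF
  exact disjoint_left.2 (connectedComponentIn_subset _ _)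

lemma disjoint_arc (hF : D.IsFace F) (h : G.Adj u v) : Disjoint F (D.arc h) :=
  hF.disjoint_drawingSet.mono_right (arc_subset_drawingSet h)

lemma frontier_eq [Finite V] (hF : D.IsFace F) : frontier F = closure F ∩ D.drawingSet := by
  refine subset_antisymm (subset_inter frontier_subset_closure ?_) ?_
  · obtain ⟨p, -, rfl⟩ := hF
    exact frontier_connectedComponentIn_compl_subset D.isClosed_drawingSet p
  · rw [hF.isOpen.frontier_eq]
    exact fun p hp ↦ ⟨hp.1, fun hpF ↦ disjoint_left.1 hF.disjoint_drawingSet hpF hp.2⟩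

lemma frontier_subset_drawingSet [Finite V] (hF : D.IsFace F) : frontier F ⊆ D.drawingSet :=
  hF.frontier_eq.subset.trans inter_subset_right

lemma eq_of_unseparated (hF : D.IsFace F) (hF' : D.IsFace F') {x y : ℝ × ℝ} (hx : x ∈ F)
    (hy : y ∈ F') (h : Unseparated D.drawingSet x y) : F = F' := by
  obtain ⟨p, -, rfl⟩ := hF
  obtain ⟨q, -, rfl⟩ := hF'
  rw [connectedComponentIn_eq hx, connectedComponentIn_eq hy]
  exact connectedComponentIn_eq (unseparated_iff_mem_connectedComponentIn.1 h)

lemma disjoint (hF : D.IsFace F) (hF' : D.IsFace F') (hne : F ≠ F') : Disjoint F F' := by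
  rw [disjoint_left]
  exact fun x hx hx' ↦ hne <| hF.eq_of_unseparated hF' hx hx' <|
    .refl (disjoint_left.1 hF.disjoint_drawingSet hx)

lemma image_Icc_subset_frontier [Finite V] (hF : D.IsFace F) {h : G.Adj u v}
    (hγ : D.IsArcParam h γ) {s t r : ℝ} (hs : 0 ≤ s) (ht : t ≤ 1)
    (hst : ∀ σ ∈ Ioo s t, γ σ ∉ D.partialDrawingSet univ {s(u, v)}ᶜ) (hr : r ∈ Ioo s t)
    (hrF : γ r ∈ frontier F) : γ '' Icc s t ⊆ frontier F := by
  have hlt : s < t := hr.1.trans hr.2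
  have hleft : Icc 0 s ⊆ Icc 0 1 := Icc_subset_Icc_right (by linarith)
  have hright : Icc t 1 ⊆ Icc 0 1 := Icc_subset_Icc_left (by linarith)
  have hmid : Icc s t ⊆ Icc 0 1 := Icc_subset_Icc hs ht
  set K := D.partialDrawingSet univ {s(u, v)}ᶜ ∪ (γ '' Icc 0 s ∪ γ '' Icc t 1) with hK
  have hKeq : K ∪ γ '' Icc s t = D.drawingSet := by
    rw [hK, union_assoc, ← image_union, ← image_union, union_right_comm,
      Icc_union_Icc_eq_Icc hs hlt.le, Icc_union_Icc_eq_Icc (hs.trans hlt.le) ht, ← hγ.arc_eq,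
      partialDrawingSet_compl_union_arc]
  have hcompact : IsCompact K := (D.isCompact_partialDrawingSet _ _).union <|
    (isCompact_Icc.image_of_continuousOn (hγ.continuousOn.mono hleft)).union
      (isCompact_Icc.image_of_continuousOn (hγ.continuousOn.mono hright))
  have hend : Icc s t ∩ γ ⁻¹' K ⊆ {s, t} := by
    rintro σ ⟨hσ, hσK | ⟨z, hz, heq⟩ | ⟨z, hz, heq⟩⟩
    · by_contra hne
      exact hst σ (Icc_sdiff_both (a := s) ▸ ⟨hσ, hne⟩) hσK
    · exact Or.inl (le_antisymm (hγ.injOn (hleft hz) (hmid hσ) heq ▸ hz.2) hσ.1)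
    · exact Or.inr (le_antisymm hσ.2 (hγ.injOn (hright hz) (hmid hσ) heq ▸ hz.1))
  rw [hF.frontier_eq]
  refine subset_inter (image_Icc_subset_closure hcompact (hγ.continuousOn.mono hmid)
    (hγ.injOn.mono hmid) hend hF.isPreconnected hF.isOpen (hKeq ▸ hF.disjoint_drawingSet)
    (hKeq ▸ hF.frontier_subset_drawingSet) hr (frontier_subset_closure hrF)) ?_
  exact (image_mono hmid).trans (hγ.arc_eq ▸ arc_subset_drawingSet h)

end IsFace

namespace IsTrueFace

lemma notMem_partialDrawingSet_of_mem_arcInt (hg : D.IsGood) (hF : D.IsTrueFace F)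
    (h : G.Adj u v) (hp : p ∈ D.arcInt h) (hpF : p ∈ frontier F) :
    p ∉ D.partialDrawingSet univ {s(u, v)}ᶜ := by
  intro hpK
  obtain ⟨f, hf, hpf⟩ := exists_mem_edgeInt hpK <| by
    rintro ⟨w, rfl⟩
    exact hg.pos_notMem_arcInt h w hp
  exact hF.2 p ⟨s(u, v), f, Ne.symm hf, edgeInt_eq_arcInt h ▸ hp, hpf⟩ hpF

lemma preimage_frontier_mem_nhds [Finite V] (hg : D.IsGood) (hF : D.IsTrueFace F) {h : G.Adj u v}
    (hγ : D.IsArcParam h γ) {σ : ℝ} (hσ : σ ∈ Ioo 0 1) (hσF : γ σ ∈ frontier F) :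
    γ ⁻¹' frontier F ∈ nhds σ := by
  have hσK := hF.notMem_partialDrawingSet_of_mem_arcInt hg h
    (hγ.arcInt_eq ▸ mem_image_of_mem γ hσ) hσF
  have hnhds := hγ.continuousOn.continuousAt (Icc_mem_nhds hσ.1 hσ.2)
    |>.preimage_mem_nhds <| (D.isCompact_partialDrawingSet univ
      {s(u, v)}ᶜ).isClosed.isOpen_compl.mem_nhds hσK
  obtain ⟨s, t, hst, hsub⟩ :=
    mem_nhds_iff_exists_Ioo_subset.1 (Filter.inter_mem hnhds (Ioo_mem_nhds hσ.1 hσ.2))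
  obtain ⟨hs, ht⟩ := (Ioo_subset_Ioo_iff (hst.1.trans hst.2)).1 (hsub.trans inter_subset_right)
  have himage := hF.1.image_Icc_subset_frontier hγ hs ht (fun τ hτ ↦ (hsub hτ).1) hst hσF
  exact Filter.mem_of_superset (Icc_mem_nhds hst.1 hst.2) (image_subset_iff.1 himage)

/-- The part of an edge lying on the boundary is closed in the edge, and it is open in the interior
of the edge because no crossing point lies on the boundary. -/
lemma arc_subset_frontier [Finite V] (hg : D.IsGood) (hF : D.IsTrueFace F) (h : G.Adj u v)
    (hp : p ∈ D.arcInt h) (hpF : p ∈ frontier F) : D.arc h ⊆ frontier F := by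
  obtain ⟨γ, hγ⟩ := D.exists_isArcParam h
  rw [hγ.arcInt_eq] at hp
  obtain ⟨r, hr, rfl⟩ := hp
  have hopen {σ : ℝ} (hσ : σ ∈ Ioo 0 1) (hσF : γ σ ∈ frontier F) :
      σ ∈ interior (γ ⁻¹' frontier F) :=
    mem_interior_iff_mem_nhds.2 (hF.preimage_frontier_mem_nhds hg hγ hσ hσF)
  have hIoo : Ioo 0 1 ⊆ interior (γ ⁻¹' frontier F) := by
    refine isPreconnected_Ioo.subset_of_closure_inter_subset isOpen_interior
      ⟨r, hr, hopen hr hpF⟩ ?_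
    rintro σ ⟨hσI, hσ⟩
    have hγσ := hγ.continuousOn.continuousAt (Icc_mem_nhds hσ.1 hσ.2)
    exact hopen hσ (isClosed_frontier.closure_subset
      (hγσ.continuousWithinAt.mem_closure hσI interior_subset))
  have hcont := hγ.continuousOn
  rw [hγ.arc_eq]
  rw [← closure_Ioo zero_ne_one] at hcont ⊢
  exact hcont.image_closure.trans
    (closure_minimal (image_subset_iff.2 (hIoo.trans interior_subset)) isClosed_frontier)

lemma isUncrossed (hF : D.IsTrueFace F) (h : G.Adj u v)
    (harc : D.arc h ⊆ frontier F) : D.IsUncrossed u v := by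
  rintro f ⟨hne, p, hp, hpf⟩
  exact hF.2 p ⟨s(u, v), f, hne, hp, hpf⟩ (harc (edgeInt_eq_arcInt h ▸ hp).1)

lemma frontier_subset_arc [Finite V] (hg : D.IsGood) (hF : D.IsTrueFace F) (h : G.Adj a b)
    (hverts : D.faceVerts F ⊆ {a, b}) : frontier F ⊆ D.arc h := by
  intro p hp
  have hpos {c : V} (hc : D.pos c ∈ frontier F) : D.pos c ∈ D.arc h := by
    rcases hverts hc with rfl | rfl
    exacts [pos_left_mem_arc h, pos_right_mem_arc h]
  rcases mem_drawingSet.1 (hF.1.frontier_subset_drawingSet hp) with ⟨c, rfl⟩ | ⟨x, y, h', hpa⟩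
  · exact hpos hp
  rcases eq_or_eq_or_mem_arcInt h' hpa with rfl | rfl | hpi
  · exact hpos hp
  · exact hpos hp
  have harc := hF.arc_subset_frontier hg h' hpi hp
  have hx := hverts (harc (pos_left_mem_arc h'))
  have hy := hverts (harc (pos_right_mem_arc h'))
  have heq : s(x, y) = s(a, b) := by
    have := h'.ne
    rw [mem_insert_iff, mem_singleton_iff] at hx hy
    rw [Sym2.eq_iff]
    grind
  exact arc_congr h h' heq ▸ hpa

end IsTrueFace

/-- An arc does not separate the plane, so a face whose boundary lies on an edge is the whole
complement of that edge. -/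
lemma IsFace.not_frontier_subset_arc [Finite V] (hg : D.IsGood) (hF : D.IsFace F)
    (h : G.Adj a b) (hwa : w ≠ a) (hwb : w ≠ b) : ¬ frontier F ⊆ D.arc h := by
  intro hsub
  obtain ⟨x, hx⟩ := hF.nonempty
  have hw : D.pos w ∉ D.arc h := fun hw ↦ (hg.1 w h hw).elim hwa hwb
  obtain ⟨C, hC, hxC, hwC, hd⟩ :=
    (isArc_arc h).unseparated (disjoint_left.1 (hF.disjoint_arc h) hx) hw
  have hCF := subset_of_isPreconnected_of_disjoint_frontier hC hF.isOpen
    (hd.symm.mono_left hsub) ⟨x, hxC, hx⟩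
  exact disjoint_left.1 hF.disjoint_drawingSet (hCF hwC) (pos_mem_drawingSet w)

lemma IsTrueFace.exists_mem_faceVerts [Finite V] (hg : D.IsGood) (hF : D.IsTrueFace F)
    (h : G.Adj a b) (hwa : w ≠ a) (hwb : w ≠ b) : ∃ c ∈ D.faceVerts F, c ≠ a ∧ c ≠ b := by
  by_contra! hcon
  refine hF.1.not_frontier_subset_arc hg h hwa hwb (hF.frontier_subset_arc hg h fun c hc ↦ ?_)
  exact or_iff_not_imp_left.2 (hcon c hc)

end Drawing

end Faces

section EdgeInsertion

namespace Drawing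

variable {V : Type} {G : SimpleGraph V} {D : Drawing G} {a u v w : V} {p : ℝ × ℝ}
  {e f : Sym2 V} {B : Set (ℝ × ℝ)}

/-- `B` is an arc from `u` to `v` along which a new edge can be added to a good 1-planar drawing so
that it remains good and 1-planar: `B` passes through no further vertex, and it crosses at most one
edge, at most once, where this edge was uncrossed and is incident with neither `u` nor `v`. -/
structure IsInsertableArc (D : Drawing G) (u v : V) (B : Set (ℝ × ℝ)) : Prop where
  exists_param : ∃ γ : ℝ → ℝ × ℝ, ContinuousOn γ (Icc 0 1) ∧ InjOn γ (Icc 0 1) ∧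
    γ 0 = D.pos u ∧ γ 1 = D.pos v ∧ B = γ '' Icc 0 1
  eq_or_eq : ∀ w, D.pos w ∈ B → w = u ∨ w = v
  subsingleton : ∀ e, ((B \ {D.pos u, D.pos v}) ∩ D.edgeInt e).Subsingleton
  eq_of_nonempty : ∀ e f, ((B \ {D.pos u, D.pos v}) ∩ D.edgeInt e).Nonempty →
    ((B \ {D.pos u, D.pos v}) ∩ D.edgeInt f).Nonempty → e = f
  not_cross : ∀ e f, ((B \ {D.pos u, D.pos v}) ∩ D.edgeInt e).Nonempty → ¬ D.Cross e f
  notMem : ∀ e, ((B \ {D.pos u, D.pos v}) ∩ D.edgeInt e).Nonempty → u ∉ e ∧ v ∉ e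

lemma IsInsertableArc.symm (hB : D.IsInsertableArc u v B) : D.IsInsertableArc v u B where
  exists_param := by
    obtain ⟨γ, hγ, hinj, h0, h1, rfl⟩ := hB.exists_param
    have hmaps : MapsTo (1 - ·) (Icc (0 : ℝ) 1) (Icc 0 1) :=
      fun t ht ↦ ⟨by linarith [ht.2], by linarith [ht.1]⟩
    refine ⟨fun t ↦ γ (1 - t), hγ.comp (by fun_prop) hmaps, fun s hs t ht h ↦ ?_, by simpa,
      by simpa, ?_⟩
    · linarith [hinj (hmaps hs) (hmaps ht) h]
    · rw [← image_image γ (1 - ·), image_const_sub_Icc, sub_self, sub_zero]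
  eq_or_eq w hw := (hB.eq_or_eq w hw).symm
  subsingleton := pair_comm (D.pos u) _ ▸ hB.subsingleton
  eq_of_nonempty := pair_comm (D.pos u) _ ▸ hB.eq_of_nonempty
  not_cross := pair_comm (D.pos u) _ ▸ hB.not_cross
  notMem e he := (hB.notMem e (pair_comm (D.pos u) _ ▸ he)).symm

/-- The drawing obtained from `D` by drawing a new edge `s(u, v)` along `B`. -/
noncomputable def addEdge (D : Drawing G) (hB : D.IsInsertableArc u v B) :
    Drawing (G ⊔ SimpleGraph.fromEdgeSet {s(u, v)}) where
  pos := D.pos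
  pos_inj := D.pos_inj
  arc x y _ := open Classical in if h : G.Adj x y then D.arc h else B
  arc_symm x y _ := by
    by_cases h : G.Adj x y
    · simp only [dif_pos h, dif_pos h.symm]
      exact D.arc_symm h
    · simp only [dif_neg h, dif_neg (mt SimpleGraph.Adj.symm h)]
  arc_isArc x y hxy := by
    by_cases h : G.Adj x y
    · simp only [dif_pos h, D.arc_isArc h]
    · simp only [dif_neg h]
      rcases Sym2.eq_iff.1 (hxy.resolve_left h).1 with ⟨rfl, rfl⟩ | ⟨rfl, rfl⟩
      exacts [hB.exists_param, hB.symm.exists_param]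

lemma addEdge_arc_of_adj (hB : D.IsInsertableArc u v B) {x y : V} (h : G.Adj x y)
    (h' : (G ⊔ SimpleGraph.fromEdgeSet {s(u, v)}).Adj x y) : (D.addEdge hB).arc h' = D.arc h := by
  simp only [addEdge, dif_pos h]

lemma addEdge_edgeInt_self (hB : D.IsInsertableArc u v B) (huv : u ≠ v) (h : ¬ G.Adj u v) :
    (D.addEdge hB).edgeInt s(u, v) = B \ {D.pos u, D.pos v} := by
  have hadj : (G ⊔ SimpleGraph.fromEdgeSet {s(u, v)}).Adj u v := Or.inr ⟨rfl, huv⟩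
  simp only [edgeInt_eq_arcInt hadj, arcInt, addEdge, dif_neg h]

lemma addEdge_edgeInt_of_ne (hB : D.IsInsertableArc u v B) (he : e ≠ s(u, v)) :
    (D.addEdge hB).edgeInt e = D.edgeInt e := by
  induction e with | h x y
  by_cases h : G.Adj x y
  · have hadj : (G ⊔ SimpleGraph.fromEdgeSet {s(u, v)}).Adj x y := Or.inl h
    rw [edgeInt_eq_arcInt h, edgeInt_eq_arcInt hadj, arcInt, addEdge_arc_of_adj hB h]
    rfl
  · rw [edgeInt_eq_empty h, edgeInt_eq_empty]
    rintro (h' | h')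
    exacts [h h', he h'.1]

lemma IsGood.addEdge (hg : D.IsGood) (hB : D.IsInsertableArc u v B) (huv : u ≠ v)
    (h : ¬ G.Adj u v) : (D.addEdge hB).IsGood := by
  refine ⟨fun w x y hxy hw ↦ ?_, fun e f hef ↦ ?_, fun x y z hxy hxz hyz ↦ ?_⟩
  · by_cases hxy' : G.Adj x y
    · exact hg.1 w hxy' (addEdge_arc_of_adj hB hxy' hxy ▸ hw)
    · simp only [Drawing.addEdge, dif_neg hxy'] at hw
      have := hB.eq_or_eq w hw
      rcases Sym2.eq_iff.1 (hxy.resolve_left hxy').1 with ⟨rfl, rfl⟩ | ⟨rfl, rfl⟩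
      exacts [this, this.symm]
  · rcases eq_or_ne e s(u, v) with rfl | he
    · rw [addEdge_edgeInt_self hB huv h, addEdge_edgeInt_of_ne hB hef.symm]
      exact hB.subsingleton f
    rw [addEdge_edgeInt_of_ne hB he]
    rcases eq_or_ne f s(u, v) with rfl | hf
    · rw [addEdge_edgeInt_self hB huv h, inter_comm]
      exact hB.subsingleton e
    · rw [addEdge_edgeInt_of_ne hB hf]
      exact hg.2.1 e f hef
  · have hnotMem {y z : V} (hxy : s(x, y) = s(u, v)) (hxz : s(x, z) ≠ s(u, v)) :
        (D.addEdge hB).edgeInt s(x, y) ∩ (D.addEdge hB).edgeInt s(x, z) = ∅ := by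
      rw [hxy, addEdge_edgeInt_self hB huv h, addEdge_edgeInt_of_ne hB hxz]
      by_contra! hne
      have hx : x ∈ s(u, v) := hxy ▸ Sym2.mem_mk_left x y
      rcases Sym2.mem_iff.1 hx with rfl | rfl
      exacts [(hB.notMem _ hne).1 (Sym2.mem_mk_left x z),
        (hB.notMem _ hne).2 (Sym2.mem_mk_left x z)]
    have hne : s(x, y) ≠ s(x, z) := fun heq ↦ hyz (Sym2.congr_right.1 heq)
    rw [← edgeInt_eq_arcInt, ← edgeInt_eq_arcInt]
    by_cases hy : s(x, y) = s(u, v)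
    · exact hnotMem hy (hy ▸ hne.symm)
    by_cases hz : s(x, z) = s(u, v)
    · exact inter_comm _ _ ▸ hnotMem hz hy
    rw [addEdge_edgeInt_of_ne hB hy, addEdge_edgeInt_of_ne hB hz,
      edgeInt_eq_arcInt (hxy.resolve_right fun h' ↦ hy h'.1),
      edgeInt_eq_arcInt (hxz.resolve_right fun h' ↦ hz h'.1)]
    exact hg.2.2 _ _ hyz

lemma addEdge_cross_iff (hB : D.IsInsertableArc u v B) (he : e ≠ s(u, v)) (hf : f ≠ s(u, v)) :
    (D.addEdge hB).Cross e f ↔ D.Cross e f := by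
  rw [Cross, Cross, addEdge_edgeInt_of_ne hB he, addEdge_edgeInt_of_ne hB hf]

lemma addEdge_cross_self_iff (hB : D.IsInsertableArc u v B) (huv : u ≠ v) (h : ¬ G.Adj u v) :
    (D.addEdge hB).Cross s(u, v) f ↔ ((B \ {D.pos u, D.pos v}) ∩ D.edgeInt f).Nonempty := by
  rcases eq_or_ne f s(u, v) with rfl | hf
  · rw [edgeInt_eq_empty h, inter_empty]
    exact iff_of_false (fun hcross ↦ hcross.1 rfl) not_nonempty_empty
  · rw [Cross, addEdge_edgeInt_self hB huv h, addEdge_edgeInt_of_ne hB hf, and_iff_right hf.symm]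

lemma IsOnePlanar.addEdge (hD : D.IsOnePlanar) (hB : D.IsInsertableArc u v B) (huv : u ≠ v)
    (h : ¬ G.Adj u v) : (D.addEdge hB).IsOnePlanar := by
  have hself {f : Sym2 V} := addEdge_cross_self_iff (f := f) hB huv h
  rintro e f hf f' hf'
  rw [mem_ofPred] at hf hf'
  rcases eq_or_ne e s(u, v) with rfl | he
  · exact hB.eq_of_nonempty f f' (hself.1 hf) (hself.1 hf')
  have hnot {f : Sym2 V} (hself' : (D.addEdge hB).Cross e s(u, v))
      (hf : (D.addEdge hB).Cross e f) : f = s(u, v) := by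
    by_contra hne
    exact hB.not_cross e f (hself.1 hself'.symm) ((addEdge_cross_iff hB he hne).1 hf)
  rcases eq_or_ne f s(u, v) with rfl | hfne
  · exact (hnot hf hf').symm
  rcases eq_or_ne f' s(u, v) with rfl | hfne'
  · exact hnot hf' hf
  · exact hD e ((addEdge_cross_iff hB he hfne).1 hf) ((addEdge_cross_iff hB he hfne').1 hf')

lemma IsMaximalOnePlane.adj_of_isInsertableArc (hmax : D.IsMaximalOnePlane)
    (hB : D.IsInsertableArc u v B) (huv : u ≠ v) : G.Adj u v := by
  by_contra h
  exact hmax.2.2 u v huv h (D.addEdge hB) rfl (fun x y hxy ↦ addEdge_arc_of_adj hB hxy _)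
    ⟨hmax.1.addEdge hB huv h, hmax.2.1.addEdge hB huv h⟩

variable {δ : ℝ → ℝ × ℝ}

/-- The hypotheses on `p` hold if `p` is an end of the arc, and also if `p` lies on an uncrossed
edge incident with neither `u` nor `v`. -/
lemma IsMaximalOnePlane.adj_of_image_inter_subset (hmax : D.IsMaximalOnePlane) (huv : u ≠ v)
    (hδ : ContinuousOn δ (Icc 0 1)) (hinj : InjOn δ (Icc 0 1)) (h0 : δ 0 = D.pos u)
    (h1 : δ 1 = D.pos v) (hinter : δ '' Icc 0 1 ∩ D.drawingSet ⊆ {D.pos u, D.pos v, p})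
    (hpos : ∀ w, D.pos w = p → w = u ∨ w = v)
    (hp : ∀ e, p ∈ D.edgeInt e → (∀ f, ¬ D.Cross e f) ∧ u ∉ e ∧ v ∉ e) : G.Adj u v := by
  have heq {q : ℝ × ℝ} {e : Sym2 V}
      (hq : q ∈ (δ '' Icc 0 1 \ {D.pos u, D.pos v}) ∩ D.edgeInt e) : q = p := by
    rcases hinter ⟨hq.1.1, edgeInt_subset_drawingSet e hq.2⟩ with h | h | h
    exacts [absurd (Or.inl h) hq.1.2, absurd (Or.inr h) hq.1.2, h]
  refine hmax.adj_of_isInsertableArc (B := δ '' Icc 0 1)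
    ⟨⟨δ, hδ, hinj, h0, h1, rfl⟩, ?_, ?_, ?_, ?_, ?_⟩ huv
  · intro w hw
    rcases hinter ⟨hw, pos_mem_drawingSet w⟩ with hw | hw | hw
    exacts [Or.inl (D.pos_inj hw), Or.inr (D.pos_inj hw), hpos w hw]
  · exact fun e q hq q' hq' ↦ (heq hq).trans (heq hq').symm
  · rintro e f ⟨q, hq⟩ ⟨q', hq'⟩
    by_contra hne
    exact (hp e (heq hq ▸ hq.2)).1 f ⟨hne, p, heq hq ▸ hq.2, heq hq' ▸ hq'.2⟩
  · rintro e f ⟨q, hq⟩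
    exact (hp e (heq hq ▸ hq.2)).1 f
  · rintro e ⟨q, hq⟩
    exact (hp e (heq hq ▸ hq.2)).2

end Drawing

end EdgeInsertion

section NeighboringFaces

namespace Drawing

variable {V : Type} {G : SimpleGraph V} {D : Drawing G} {F F₁ F₂ ρ : Set (ℝ × ℝ)} {a b c d x y : V}

/-- `F` and `F₁` are distinct faces, both having the uncrossed edge `s(a, b)` on their boundary. -/
structure NeighborAcross (D : Drawing G) (F F₁ : Set (ℝ × ℝ)) (a b : V) : Prop where
  isFace_left : D.IsFace F
  isFace_right : D.IsFace F₁
  ne : F ≠ F₁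
  adj : G.Adj a b
  isUncrossed : D.IsUncrossed a b
  arc_subset_left : D.arc adj ⊆ frontier F
  arc_subset_right : D.arc adj ⊆ frontier F₁

/-- `c` is a boundary vertex of `F` other than the ends of the boundary edge `s(a, b)`. -/
structure IsOppositeVertex (D : Drawing G) (F : Set (ℝ × ℝ)) (a b c : V) : Prop where
  mem : c ∈ D.faceVerts F
  ne_left : c ≠ a
  ne_right : c ≠ b

/-- The open region formed by `F`, `F₁` and the interior of the edge `s(a, b)` between them. -/
def mergedFace (D : Drawing G) (F F₁ : Set (ℝ × ℝ)) (a b : V) : Set (ℝ × ℝ) :=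
  F ∪ F₁ ∪ D.edgeInt s(a, b)

lemma IsOppositeVertex.symm (hc : D.IsOppositeVertex F a b c) : D.IsOppositeVertex F b a c :=
  ⟨hc.mem, hc.ne_right, hc.ne_left⟩

namespace NeighborAcross

lemma symm (N : D.NeighborAcross F F₁ a b) : D.NeighborAcross F F₁ b a :=
  ⟨N.isFace_left, N.isFace_right, N.ne, N.adj.symm, N.isUncrossed.symm,
    D.arc_symm N.adj ▸ N.arc_subset_left, D.arc_symm N.adj ▸ N.arc_subset_right⟩

lemma left_mem_faceVerts (N : D.NeighborAcross F F₁ a b) : a ∈ D.faceVerts F :=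
  N.arc_subset_left (pos_left_mem_arc N.adj)

lemma right_mem_faceVerts (N : D.NeighborAcross F F₁ a b) : b ∈ D.faceVerts F :=
  N.symm.left_mem_faceVerts

lemma left_mem_faceVerts' (N : D.NeighborAcross F F₁ a b) : a ∈ D.faceVerts F₁ :=
  N.arc_subset_right (pos_left_mem_arc N.adj)

lemma right_mem_faceVerts' (N : D.NeighborAcross F F₁ a b) : b ∈ D.faceVerts F₁ :=
  N.symm.left_mem_faceVerts'

lemma isPreconnected_mergedFace (N : D.NeighborAcross F F₁ a b) :
    IsPreconnected (D.mergedFace F F₁ a b) := by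
  obtain ⟨p, hp⟩ := arcInt_nonempty (D := D) N.adj
  have hclosure {F' : Set (ℝ × ℝ)} (hF' : D.IsFace F') (harc : D.arc N.adj ⊆ frontier F') :
      IsPreconnected (F' ∪ D.arcInt N.adj) :=
    hF'.isPreconnected.subset_closure subset_union_left <| union_subset subset_closure <|
      (arcInt_subset_arc N.adj).trans <| harc.trans frontier_subset_closure
  rw [mergedFace, edgeInt_eq_arcInt N.adj, union_union_distrib_right]
  exact (hclosure N.isFace_left N.arc_subset_left).union p (Or.inr hp) (Or.inr hp)
    (hclosure N.isFace_right N.arc_subset_right)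

lemma disjoint_partialDrawingSet_mergedFace (N : D.NeighborAcross F F₁ a b) (hg : D.IsGood) :
    Disjoint (D.partialDrawingSet univ {s(a, b)}ᶜ) (D.mergedFace F F₁ a b) := by
  have hface {F' : Set (ℝ × ℝ)} (hF' : D.IsFace F') :
      Disjoint (D.partialDrawingSet univ {s(a, b)}ᶜ) F' :=
    (hF'.disjoint_drawingSet.mono_right partialDrawingSet_subset_drawingSet).symm
  rw [mergedFace, edgeInt_eq_arcInt N.adj]
  exact ((hface N.isFace_left).union_right (hface N.isFace_right)).union_right
    (hg.disjoint_partialDrawingSet_arcInt N.adj N.isUncrossed univ)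

lemma unseparated (N : D.NeighborAcross F F₁ a b) (hg : D.IsGood) {p q : ℝ × ℝ} (hp : p ∈ F)
    (hq : q ∈ F₁) : Unseparated (D.partialDrawingSet univ {s(a, b)}ᶜ) p q :=
  ⟨D.mergedFace F F₁ a b, N.isPreconnected_mergedFace, Or.inl (Or.inl hp), Or.inl (Or.inr hq),
    (N.disjoint_partialDrawingSet_mergedFace hg).symm⟩

lemma joinedIn_of_adj (N : D.NeighborAcross F F₁ a b) (hg : D.IsGood) (hxy : G.Adj x y)
    (hne : s(x, y) ≠ s(a, b)) (hρ : Disjoint (D.arc hxy) ρ) :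
    JoinedIn (D.mergedFace F F₁ a b ∪ ρ)ᶜ (D.pos x) (D.pos y) := by
  obtain ⟨γ, hγ⟩ := D.exists_isArcParam hxy
  refine (JoinedIn.ofLine hγ.continuousOn hγ.zero hγ.one hγ.arc_eq.ge).mono ?_
  refine subset_compl_iff_disjoint_right.2 <| .union_right
    ((N.disjoint_partialDrawingSet_mergedFace hg).mono_left fun p hp ↦ ?_) hρ
  exact mem_partialDrawingSet.2 (Or.inr ⟨x, y, hxy, hne, hp⟩)

variable [Finite V]

lemma eq_of_neighborAcross (N : D.NeighborAcross F F₁ a b) (N' : D.NeighborAcross F F₂ a b)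
    (hg : D.IsGood) : F₁ = F₂ := by
  by_contra hne
  have N'' : D.NeighborAcross F₁ F₂ a b := ⟨N.isFace_right, N'.isFace_right, hne, N.adj,
    N.isUncrossed, N.arc_subset_right, N'.arc_subset_right⟩
  obtain ⟨p, hp⟩ := N.isFace_left.nonempty
  obtain ⟨q, hq⟩ := N.isFace_right.nonempty
  obtain ⟨r, hr⟩ := N'.isFace_right.nonempty
  have harc {p q : ℝ × ℝ} {F F' : Set (ℝ × ℝ)} (hF : D.IsFace F) (hF' : D.IsFace F') (hp : p ∈ F)
      (hq : q ∈ F') : Unseparated (D.arc N.adj) p q :=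
    (isArc_arc N.adj).unseparated (disjoint_left.1 (hF.disjoint_arc _) hp)
      (disjoint_left.1 (hF'.disjoint_arc _) hq)
  have h := unseparated_union_of_three (D.isCompact_partialDrawingSet _ _)
    (isArc_arc N.adj).isCompact (hg.partialDrawingSet_inter_arc_subset N.adj N.isUncrossed _)
    (N'.unseparated hg hp hr) (N''.unseparated hg hq hr)
    (harc N.isFace_left N'.isFace_right hp hr) (harc N.isFace_right N'.isFace_right hq hr)
  rw [partialDrawingSet_compl_union_arc] at h
  rcases h with h | h | h
  · exact N.ne (N.isFace_left.eq_of_unseparated N.isFace_right hp hq h)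
  · exact hne (N.isFace_right.eq_of_unseparated N'.isFace_right hq hr h)
  · exact N'.ne (N.isFace_left.eq_of_unseparated N'.isFace_right hp hr h)

/-- A curve from `a` to `b` together with the edge `s(a, b)` would form a closed curve separating
`F` from `F₁`, but `ρ` connects the two faces. -/
lemma not_joinedIn (N : D.NeighborAcross F F₁ a b) (hg : D.IsGood)
    (hc : c ∈ D.faceVerts F) (hd : d ∈ D.faceVerts F₁) (hρ : IsPreconnected ρ)
    (hcρ : D.pos c ∈ ρ) (hdρ : D.pos d ∈ ρ) (hdisj : Disjoint ρ (D.arc N.adj)) :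
    ¬ JoinedIn (D.mergedFace F F₁ a b ∪ ρ)ᶜ (D.pos a) (D.pos b) := by
  rintro ⟨γ, hγ⟩
  obtain ⟨p, hp⟩ := N.isFace_left.nonempty
  obtain ⟨q, hq⟩ := N.isFace_right.nonempty
  let K := D.partialDrawingSet univ {s(a, b)}ᶜ
  have hrange : Disjoint (range γ) (D.mergedFace F F₁ a b ∪ ρ) :=
    disjoint_left.2 <| forall_mem_range.2 hγ
  obtain ⟨hmerged, -⟩ := disjoint_union_right.1 hrange
  have hends : {D.pos a, D.pos b} ⊆ range γ := pair_subset ⟨0, γ.source⟩ ⟨1, γ.target⟩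
  have hK : Unseparated (K ∪ range γ) p q :=
    ⟨_, N.isPreconnected_mergedFace, Or.inl (Or.inl hp), Or.inl (Or.inr hq),
      ((N.disjoint_partialDrawingSet_mergedFace hg).union_left hmerged).symm⟩
  have harc : Unseparated (range γ ∪ D.arc N.adj) p q := by
    refine ⟨F₁ ∪ (F ∪ ρ), isPreconnected_union_of_mem_closure N.isFace_right.isPreconnected
      (isPreconnected_union_of_mem_closure N.isFace_left.isPreconnected hρ hcρ
        (frontier_subset_closure hc)) (Or.inr hdρ) (frontier_subset_closure hd),
      Or.inr (Or.inl hp), Or.inl hq, ?_⟩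
    refine .union_right (.symm (hrange.mono_right ?_)) ((N.isFace_right.disjoint_arc _).union_left
      ((N.isFace_left.disjoint_arc _).union_left hdisj))
    rintro r (hr | hr | hr)
    exacts [Or.inl (Or.inl (Or.inr hr)), Or.inl (Or.inl (Or.inl hr)), Or.inr hr]
  have hinter : (K ∪ range γ) ∩ (range γ ∪ D.arc N.adj) = range γ := by
    rw [union_comm K, ← union_inter_distrib_left, union_eq_left]
    exact (hg.partialDrawingSet_inter_arc_subset N.adj N.isUncrossed univ).trans hends
  have hγc : IsCompact (range γ) := isCompact_range γ.continuous
  refine N.ne (N.isFace_left.eq_of_unseparated N.isFace_right hp hq ((unseparated_union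
    ((D.isCompact_partialDrawingSet _ _).union hγc) (hγc.union (isArc_arc N.adj).isCompact)
    (hinter.symm ▸ isPreconnected_range γ.continuous) hK harc).mono ?_))
  rw [← partialDrawingSet_compl_union_arc N.adj]
  exact union_subset_union subset_union_left subset_union_right

end NeighborAcross

variable [Finite V]

lemma IsFace.joinedIn (hF : D.IsFace F) {p q : ℝ × ℝ}
    (hp : LocallyFinitelySeparates D.drawingSet p) (hpF : p ∈ frontier F)
    (hq : LocallyFinitelySeparates D.drawingSet q) (hqF : q ∈ frontier F) :
    JoinedIn (F ∪ {p, q}) p q := by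
  obtain ⟨r, hr⟩ := hF.nonempty
  have hjoin {p : ℝ × ℝ} (hp : LocallyFinitelySeparates D.drawingSet p) (hpF : p ∈ frontier F) :
      JoinedIn (insert p F) p r := by
    obtain ⟨x, -, rfl⟩ := hF
    exact joinedIn_insert_connectedComponentIn D.isClosed_drawingSet hp
      (frontier_subset_closure hpF) hr
  exact ((hjoin hp hpF).mono (by grind)).trans ((hjoin hq hqF).symm.mono (by grind))

lemma IsFace.joinedIn_pos (hF : D.IsFace F) (hg : D.IsGood) (hiso : ∀ w, ∃ v, G.Adj w v)
    (hx : x ∈ D.faceVerts F) (hy : y ∈ D.faceVerts F) :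
    JoinedIn (F ∪ {D.pos x, D.pos y}) (D.pos x) (D.pos y) :=
  hF.joinedIn (hg.locallyFinitelySeparates_pos (hiso x)) hx
    (hg.locallyFinitelySeparates_pos (hiso y)) hy

lemma IsMaximalOnePlane.adj_of_mem_faceVerts (hmax : D.IsMaximalOnePlane)
    (hiso : ∀ w, ∃ v, G.Adj w v) (hF : D.IsFace F) (hx : x ∈ D.faceVerts F)
    (hy : y ∈ D.faceVerts F) (hxy : x ≠ y) : G.Adj x y := by
  obtain ⟨δ, hδ, hinj, h0, h1, hsub⟩ := exists_injOn_of_joinedIn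
    (hF.joinedIn_pos hmax.1 hiso hx hy) (D.pos_inj.ne hxy)
  refine hmax.adj_of_image_inter_subset (p := D.pos x) hxy hδ hinj h0 h1 ?_
    (fun w hw ↦ Or.inl (D.pos_inj hw)) fun e he ↦ absurd he (hmax.1.pos_notMem_edgeInt x e)
  rintro r ⟨hr, hrD⟩
  rcases hsub hr with hrF | hr | hr
  exacts [absurd hrD (disjoint_left.1 hF.disjoint_drawingSet hrF), Or.inl hr, Or.inr (Or.inl hr)]

namespace NeighborAcross

/-- An edge from `c` to `d` can be drawn through the two faces so that it crosses only `s(a, b)`. -/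
lemma adj_of_isOppositeVertex_of_ne (N : D.NeighborAcross F F₁ a b) (hmax : D.IsMaximalOnePlane)
    (hiso : ∀ w, ∃ v, G.Adj w v) (hc : D.IsOppositeVertex F a b c)
    (hd : D.IsOppositeVertex F₁ a b d) (hcd : c ≠ d) : G.Adj c d := by
  obtain ⟨hg, -⟩ := id hmax
  obtain ⟨p, hp⟩ := arcInt_nonempty (D := D) N.adj
  have hpsep : LocallyFinitelySeparates D.drawingSet p :=
    locallyFinitelySeparates_of_mem_arcInt N.adj hp fun hpK ↦ disjoint_left.1
      (hg.disjoint_partialDrawingSet_arcInt N.adj N.isUncrossed univ) hpK hp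
  have hjoin := N.isFace_left.joinedIn (hg.locallyFinitelySeparates_pos (hiso c)) hc.mem hpsep
    (N.arc_subset_left hp.1)
  have hjoin' := N.isFace_right.joinedIn hpsep (N.arc_subset_right hp.1)
    (hg.locallyFinitelySeparates_pos (hiso d)) hd.mem
  have hjoin'' : JoinedIn (F ∪ F₁ ∪ {D.pos c, D.pos d, p}) (D.pos c) (D.pos d) :=
    (hjoin.mono (by grind)).trans (hjoin'.mono (by grind))
  obtain ⟨δ, hδ, hinj, h0, h1, hsub⟩ := exists_injOn_of_joinedIn hjoin'' (D.pos_inj.ne hcd)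
  have hpe : p ∈ D.edgeInt s(a, b) := edgeInt_eq_arcInt N.adj ▸ hp
  refine hmax.adj_of_image_inter_subset (p := p) hcd hδ hinj h0 h1 ?_
    (fun w hw ↦ absurd (hw ▸ hpe) (hg.pos_notMem_edgeInt w _)) fun e he ↦ ?_
  · rintro r ⟨hr, hrD⟩
    rcases hsub hr with (hrF | hrF) | hr
    exacts [absurd hrD (disjoint_left.1 N.isFace_left.disjoint_drawingSet hrF),
      absurd hrD (disjoint_left.1 N.isFace_right.disjoint_drawingSet hrF), hr]
  · obtain rfl : s(a, b) = e := by
      by_contra hne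
      exact N.isUncrossed e ⟨hne, p, hpe, he⟩
    simp only [Sym2.mem_iff, hc.ne_left, hc.ne_right, hd.ne_left, hd.ne_right, or_self,
      not_false_eq_true, and_self, and_true]
    exact N.isUncrossed

end NeighborAcross

end Drawing

end NeighboringFaces

section ReachableAvoiding

variable {V : Type} {G : SimpleGraph V} {k m : ℕ} {l : List V} {a c w x y : V}

/-- `x` and `y` are joined by a walk of `G` that visits no vertex of the list `l`. Deleted vertices
are listed because the length of a list bounds their number whether or not entries coincide. -/
def ReachableAvoiding (G : SimpleGraph V) (l : List V) (x y : V) : Prop :=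
  ∃ p : G.Walk x y, ∀ v ∈ p.support, v ∉ l

lemma ReachableAvoiding.mono {l' : List V} (h : ReachableAvoiding G l x y) (hl : l' ⊆ l) :
    ReachableAvoiding G l' x y :=
  let ⟨p, hp⟩ := h
  ⟨p, fun v hv hvl ↦ hp v hv (hl hvl)⟩

lemma ReachableAvoiding.cons_or_cons (h : ReachableAvoiding G l w a) (hac : a ≠ c) :
    ReachableAvoiding G (c :: l) w a ∨ ReachableAvoiding G (a :: l) w c := by
  classical
  obtain ⟨p, hp⟩ := h
  have hsupp : ∀ v ∈ p.bypass.support, v ∉ l := fun v hv ↦ hp v (p.support_bypass_subset_support hv)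
  by_cases hc : c ∈ p.bypass.support
  · refine Or.inr ⟨p.bypass.takeUntil c hc, fun v hv ↦ List.not_mem_cons_of_ne_of_not_mem ?_ ?_⟩
    · rintro rfl
      exact SimpleGraph.Walk.endpoint_notMem_support_takeUntil p.bypass_isPath hc hac hv
    · exact hsupp v (p.bypass.support_takeUntil_subset_support hc hv)
  · exact Or.inl ⟨p.bypass, fun v hv ↦ List.not_mem_cons_of_ne_of_not_mem
      (fun hvc ↦ hc (hvc ▸ hv)) (hsupp v hv)⟩

lemma ncard_setOf_mem_list_le (l : List V) : {v | v ∈ l}.ncard ≤ l.length := by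
  classical
  rw [← List.coe_toFinset, ncard_coe_finset]
  exact l.toFinset_card_le

lemma exists_notMem_of_length_lt (h : l.length < Nat.card V) : ∃ w, w ∉ l := by
  by_contra! hl
  have := ncard_setOf_mem_list_le l
  rw [(eq_univ_of_forall hl : {v | v ∈ l} = univ), ncard_univ] at this
  exact this.not_gt h

lemma KConnected.mono (hG : KConnected G k) (hm : m ≤ k) : KConnected G m :=
  fun S hS ↦ hG S (hS.trans_le hm)

lemma KConnected.reachableAvoiding (hG : KConnected G k) (hl : l.length < k) (hx : x ∉ l)
    (hy : y ∉ l) : ReachableAvoiding G l x y := by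
  obtain ⟨p⟩ := (hG {v | v ∈ l} ((ncard_setOf_mem_list_le l).trans_lt hl)).preconnected
    ⟨x, hx⟩ ⟨y, hy⟩
  refine ⟨p.map (SimpleGraph.Embedding.induce _).toHom, fun v hv ↦ ?_⟩
  obtain ⟨⟨u, hu⟩, -, rfl⟩ := List.mem_map.1 ((SimpleGraph.Walk.support_map _ p) ▸ hv)
  exact hu

end ReachableAvoiding

section MergedFaceSeparation

namespace Drawing

variable {V : Type} {G : SimpleGraph V} {D : Drawing G} {F F₁ F₂ ρ : Set (ℝ × ℝ)}
  {a b c d w x y : V} {l l' : List V}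

/-- The part of the drawing that remains when the vertices of `l` and their edges are deleted. -/
def drawingSetAvoiding (D : Drawing G) (l : List V) : Set (ℝ × ℝ) :=
  D.partialDrawingSet {v | v ∉ l} {e | ∀ v ∈ e, v ∉ l}

lemma IsGood.pos_notMem_drawingSetAvoiding (hg : D.IsGood) (hc : c ∈ l) :
    D.pos c ∉ D.drawingSetAvoiding l := by
  rw [drawingSetAvoiding, mem_partialDrawingSet]
  rintro (⟨v, hv, heq⟩ | ⟨u, v, h, hl, hp⟩)
  · exact hv (D.pos_inj heq ▸ hc)
  · exact hl c (Sym2.mem_iff.2 (hg.1 c h hp)) hc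

lemma IsGood.disjoint_drawingSetAvoiding_face (hg : D.IsGood) (hF : D.IsFace F) (hc : c ∈ l)
    (hd : d ∈ l) : Disjoint (D.drawingSetAvoiding l) (F ∪ {D.pos c, D.pos d}) := by
  refine .union_right
    (hF.disjoint_drawingSet.mono_right partialDrawingSet_subset_drawingSet).symm ?_
  rw [disjoint_insert_right, disjoint_singleton_right]
  exact ⟨hg.pos_notMem_drawingSetAvoiding hc, hg.pos_notMem_drawingSetAvoiding hd⟩

lemma IsGood.disjoint_drawingSetAvoiding_arc (hg : D.IsGood) (h : G.Adj c d) (hc : c ∈ l)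
    (hd : d ∈ l) (hcross : ∀ e, D.Cross s(c, d) e → ∃ v ∈ e, v ∈ l) :
    Disjoint (D.drawingSetAvoiding l) (D.arc h) := by
  rw [disjoint_left]
  intro p hp hpa
  rcases eq_or_eq_or_mem_arcInt h hpa with rfl | rfl | hpi
  · exact hg.pos_notMem_drawingSetAvoiding hc hp
  · exact hg.pos_notMem_drawingSetAvoiding hd hp
  obtain ⟨e, he, hpe⟩ := exists_mem_edgeInt hp <| by
    rintro ⟨w, rfl⟩
    exact hg.pos_notMem_arcInt h w hpi
  have hne : s(c, d) ≠ e := by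
    rintro rfl
    exact he c (Sym2.mem_mk_left c d) hc
  obtain ⟨v, hve, hvl⟩ := hcross e ⟨hne, p, edgeInt_eq_arcInt h ▸ hpi, hpe⟩
  exact he v hve hvl

namespace NeighborAcross

lemma pos_notMem_mergedFace (N : D.NeighborAcross F F₁ a b) (hg : D.IsGood) (x : V) :
    D.pos x ∉ D.mergedFace F F₁ a b :=
  disjoint_left.1 (N.disjoint_partialDrawingSet_mergedFace hg)
    (mem_partialDrawingSet.2 (Or.inl ⟨x, trivial, rfl⟩))

lemma joinedIn_of_reachableAvoiding (N : D.NeighborAcross F F₁ a b) (hg : D.IsGood)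
    (hr : ReachableAvoiding G l x y) (hl : a ∈ l ∨ b ∈ l)
    (hρ : Disjoint (D.drawingSetAvoiding l) ρ) :
    JoinedIn (D.mergedFace F F₁ a b ∪ ρ)ᶜ (D.pos x) (D.pos y) := by
  obtain ⟨p, hp⟩ := hr
  induction p with
  | @nil x =>
    refine JoinedIn.refl ?_
    rintro (hx | hx)
    · exact N.pos_notMem_mergedFace hg x hx
    · exact disjoint_left.1 hρ (mem_partialDrawingSet.2 (Or.inl ⟨x, hp x (by simp), rfl⟩)) hx
  | @cons u v w h p ih =>
    simp only [SimpleGraph.Walk.support_cons, List.mem_cons, forall_eq_or_imp] at hp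
    have hedge : ∀ z ∈ s(u, v), z ∉ l := by simp [hp.1, hp.2 v p.start_mem_support]
    refine (N.joinedIn_of_adj hg h ?_ (hρ.mono_left fun q hq ↦ ?_)).trans (ih hp.2)
    · intro heq
      rw [heq] at hedge
      exact hl.elim (hedge a (Sym2.mem_mk_left a b)) (hedge b (Sym2.mem_mk_right a b))
    · exact mem_partialDrawingSet.2 (Or.inr ⟨u, v, h, hedge, hq⟩)

lemma not_reachableAvoiding (N : D.NeighborAcross F F₁ a b) (hg : D.IsGood)
    (hsep : ¬ JoinedIn (D.mergedFace F F₁ a b ∪ ρ)ᶜ (D.pos a) (D.pos b))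
    (hl : Disjoint (D.drawingSetAvoiding l) ρ) (hl' : Disjoint (D.drawingSetAvoiding l') ρ)
    (ha : a ∈ l) (hb : b ∈ l') (hr : ReachableAvoiding G l w b) :
    ¬ ReachableAvoiding G l' w a := fun hr' ↦
  hsep <| (N.joinedIn_of_reachableAvoiding hg hr' (Or.inr hb) hl').symm.trans
    (N.joinedIn_of_reachableAvoiding hg hr (Or.inl ha) hl)

lemma joinedIn_of_mem_faceVerts [Finite V] (N : D.NeighborAcross F F₁ a b) (hg : D.IsGood)
    (hiso : ∀ w, ∃ v, G.Adj w v) (hF₂ : D.IsFace F₂) (hne : F₂ ≠ F) (hne₁ : F₂ ≠ F₁)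
    (hx : x ∈ D.faceVerts F₂) (hy : y ∈ D.faceVerts F₂) (h : G.Adj c d) (hxc : x ≠ c) (hxd : x ≠ d)
    (hyc : y ≠ c) (hyd : y ≠ d) :
    JoinedIn (D.mergedFace F F₁ a b ∪ D.arc h)ᶜ (D.pos x) (D.pos y) := by
  refine (hF₂.joinedIn_pos hg hiso hx hy).mono (union_subset ?_ (pair_subset ?_ ?_))
  · rw [subset_compl_iff_disjoint_right, mergedFace]
    exact (((hF₂.disjoint N.isFace_left hne).union_right
      (hF₂.disjoint N.isFace_right hne₁)).union_right
      (hF₂.disjoint_drawingSet.mono_right (edgeInt_subset_drawingSet _))).union_right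
      (hF₂.disjoint_arc h)
  · exact fun hmem ↦ hmem.elim (N.pos_notMem_mergedFace hg x) fun ha ↦ (hg.1 x h ha).elim hxc hxd
  · exact fun hmem ↦ hmem.elim (N.pos_notMem_mergedFace hg y) fun ha ↦ (hg.1 y h ha).elim hyc hyd

lemma joinedIn_of_adj_of_not_cross (N : D.NeighborAcross F F₁ a b) (hg : D.IsGood)
    (hcd : G.Adj c d) (hxy : G.Adj x y) (hxc : x ≠ c) (hxd : x ≠ d) (hyc : y ≠ c) (hyd : y ≠ d)
    (hne : s(x, y) ≠ s(a, b)) (hcross : ¬ D.Cross s(c, d) s(x, y)) :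
    JoinedIn (D.mergedFace F F₁ a b ∪ D.arc hcd)ᶜ (D.pos x) (D.pos y) :=
  N.joinedIn_of_adj hg hxy hne
    (hg.disjoint_arc hxy hcd hxc hxd hyc hyd fun h ↦ hcross h.symm)

variable [Finite V]

lemma not_joinedIn_arc (N : D.NeighborAcross F F₁ a b) (hg : D.IsGood)
    (hc : D.IsOppositeVertex F a b c) (hd : D.IsOppositeVertex F₁ a b d) (hcd : G.Adj c d) :
    ¬ JoinedIn (D.mergedFace F F₁ a b ∪ D.arc hcd)ᶜ (D.pos a) (D.pos b) :=
  N.not_joinedIn hg hc.mem hd.mem (isArc_arc hcd).isPreconnected (pos_left_mem_arc hcd)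
    (pos_right_mem_arc hcd) <| hg.disjoint_arc hcd N.adj hc.ne_left hc.ne_right hd.ne_left
      hd.ne_right fun h ↦ N.isUncrossed _ h.symm

lemma not_joinedIn_face (N : D.NeighborAcross F F₁ a b) (hg : D.IsGood)
    (hc : D.IsOppositeVertex F a b c) (hd : D.IsOppositeVertex F₁ a b d) (hF₂ : D.IsFace F₂)
    (hc₂ : c ∈ D.faceVerts F₂) (hd₂ : d ∈ D.faceVerts F₂) :
    ¬ JoinedIn (D.mergedFace F F₁ a b ∪ (F₂ ∪ {D.pos c, D.pos d}))ᶜ (D.pos a) (D.pos b) := by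
  refine N.not_joinedIn hg hc.mem hd.mem (hF₂.isPreconnected.subset_closure subset_union_left <|
    union_subset subset_closure <| pair_subset (frontier_subset_closure hc₂)
      (frontier_subset_closure hd₂)) (by simp) (by simp) ?_
  rw [disjoint_union_left, disjoint_insert_left, disjoint_singleton_left]
  exact ⟨hF₂.disjoint_arc N.adj, fun h ↦ (hg.1 c N.adj h).elim hc.ne_left hc.ne_right,
    fun h ↦ (hg.1 d N.adj h).elim hd.ne_left hd.ne_right⟩

lemma not_reachableAvoiding_of_mem_faceVerts (N : D.NeighborAcross F F₁ a b) (hg : D.IsGood)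
    (hc : D.IsOppositeVertex F a b c) (hd : D.IsOppositeVertex F₁ a b d) (hF₂ : D.IsFace F₂)
    (hc₂ : c ∈ D.faceVerts F₂) (hd₂ : d ∈ D.faceVerts F₂)
    (hr : ReachableAvoiding G [a, c, d] w b) : ¬ ReachableAvoiding G [b, c, d] w a :=
  N.not_reachableAvoiding hg (N.not_joinedIn_face hg hc hd hF₂ hc₂ hd₂)
    (hg.disjoint_drawingSetAvoiding_face hF₂ (by simp) (by simp))
    (hg.disjoint_drawingSetAvoiding_face hF₂ (by simp) (by simp)) (by simp) (by simp) hr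

end NeighborAcross

lemma IsTrueFace.exists_neighborAcross [Finite V] (hg : D.IsGood) (hcard : 2 < Nat.card V)
    (hF : D.IsTrueFace F) (hF₁ : D.IsTrueFace F₁) (hadj : D.FaceAdj F F₁) :
    ∃ a b c d, D.NeighborAcross F F₁ a b ∧ D.IsOppositeVertex F a b c ∧
      D.IsOppositeVertex F₁ a b d := by
  obtain ⟨hne, p, hp, hp₁, hpos, -⟩ := hadj
  rcases mem_drawingSet.1 (hF.1.frontier_subset_drawingSet hp) with ⟨v, rfl⟩ | ⟨a, b, h, hpa⟩
  · exact absurd ⟨v, rfl⟩ hpos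
  have hpi : p ∈ D.arcInt h := by
    rcases eq_or_eq_or_mem_arcInt h hpa with rfl | rfl | hpi
    exacts [absurd ⟨a, rfl⟩ hpos, absurd ⟨b, rfl⟩ hpos, hpi]
  have harc := hF.arc_subset_frontier hg h hpi hp
  obtain ⟨w, hw⟩ := exists_notMem_of_length_lt (l := [a, b]) hcard
  obtain ⟨hwa, hwb⟩ : w ≠ a ∧ w ≠ b := by simpa using hw
  obtain ⟨c, hc, hca, hcb⟩ := hF.exists_mem_faceVerts hg h hwa hwb
  obtain ⟨d, hd, hda, hdb⟩ := hF₁.exists_mem_faceVerts hg h hwa hwb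
  exact ⟨a, b, c, d, ⟨hF.1, hF₁.1, hne, h, hF.isUncrossed h harc, harc,
    hF₁.arc_subset_frontier hg h hpi hp₁⟩, ⟨hc, hca, hcb⟩, ⟨hd, hda, hdb⟩⟩

end Drawing

end MergedFaceSeparation

section TriconnectedMaximal

lemma ReachableAvoiding.of_adj {V : Type} {G : SimpleGraph V} {l : List V} {x y : V}
    (h : G.Adj x y) (hx : x ∉ l) (hy : y ∉ l) : ReachableAvoiding G l x y :=
  ⟨h.toWalk, by simp [hx, hy]⟩

namespace Drawing

variable {V : Type} {G : SimpleGraph V} {D : Drawing G} {F F₁ F₂ : Set (ℝ × ℝ)}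
  {a b c d e a' b' d' g x y : V}

/-- `D` is a maximal 1-plane drawing of a 3-connected graph on at least five vertices. -/
structure IsTriconnectedMaximal (D : Drawing G) : Prop where
  isMaximal : D.IsMaximalOnePlane
  kConnected : KConnected G 3
  card : 5 ≤ Nat.card V

namespace IsTriconnectedMaximal

lemma isGood (hD : D.IsTriconnectedMaximal) : D.IsGood := hD.isMaximal.1

lemma eq_of_cross (hD : D.IsTriconnectedMaximal) {e e₁ e₂ : Sym2 V} (h₁ : D.Cross e e₁)
    (h₂ : D.Cross e e₂) : e₁ = e₂ :=
  hD.isMaximal.2.1 e h₁ h₂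

lemma exists_adj (hD : D.IsTriconnectedMaximal) (w : V) : ∃ v, G.Adj w v := by
  obtain ⟨x, hx⟩ := exists_notMem_of_length_lt (l := [w]) (by grind [hD.card])
  obtain ⟨p, -⟩ := hD.kConnected.reachableAvoiding (l := []) (x := w) (y := x) (by simp) (by simp)
    (by simp)
  cases p with
  | nil => simp at hx
  | cons h p => exact ⟨_, h⟩

end IsTriconnectedMaximal

namespace NeighborAcross

lemma left_isOppositeVertex (N : D.NeighborAcross F F₁ a b) (hac : a ≠ c) :
    D.IsOppositeVertex F b c a :=
  ⟨N.left_mem_faceVerts, N.adj.ne, hac⟩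

lemma right_isOppositeVertex (N : D.NeighborAcross F F₂ b c) (hac : a ≠ c) :
    D.IsOppositeVertex F a b c :=
  N.symm.left_isOppositeVertex hac.symm |>.symm

variable [Finite V]

lemma ne_of_isOppositeVertex (N : D.NeighborAcross F F₁ a b) (hD : D.IsTriconnectedMaximal)
    (hc : D.IsOppositeVertex F a b c) (hd : D.IsOppositeVertex F₁ a b d) : c ≠ d := by
  rintro rfl
  have hab := N.adj.ne
  obtain ⟨hcF, hca, hcb⟩ := hc
  obtain ⟨w, hw⟩ := exists_notMem_of_length_lt (l := [a, b, c]) (by grind [hD.card])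
  have ha : ReachableAvoiding G [b, c] w a :=
    hD.kConnected.reachableAvoiding (by simp) (by grind) (by grind)
  have hb : ReachableAvoiding G [a, c] w b :=
    hD.kConnected.reachableAvoiding (by simp) (by grind) (by grind)
  exact N.not_reachableAvoiding_of_mem_faceVerts hD.isGood ⟨hcF, hca, hcb⟩ hd N.isFace_left hcF hcF
    (hb.mono (by simp)) (ha.mono (by simp))

lemma adj_of_isOppositeVertex (N : D.NeighborAcross F F₁ a b) (hD : D.IsTriconnectedMaximal)
    (hc : D.IsOppositeVertex F a b c) (hd : D.IsOppositeVertex F₁ a b d) : G.Adj c d :=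
  N.adj_of_isOppositeVertex_of_ne hD.isMaximal hD.exists_adj hc hd
    (N.ne_of_isOppositeVertex hD hc hd)

lemma left_adj_of_isOppositeVertex (N : D.NeighborAcross F F₁ a b) (hD : D.IsTriconnectedMaximal)
    (hc : D.IsOppositeVertex F a b c) : G.Adj a c :=
  hD.isMaximal.adj_of_mem_faceVerts hD.exists_adj N.isFace_left N.left_mem_faceVerts hc.mem
    hc.ne_left.symm

lemma adj_right_of_isOppositeVertex (N : D.NeighborAcross F F₁ a b) (hD : D.IsTriconnectedMaximal)
    (hc : D.IsOppositeVertex F a b c) : G.Adj c b :=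
  (N.symm.left_adj_of_isOppositeVertex hD hc.symm).symm

lemma cross_or_cross (N : D.NeighborAcross F F₁ a b) (hD : D.IsTriconnectedMaximal)
    (hc : D.IsOppositeVertex F a b c) (hd : D.IsOppositeVertex F₁ a b d) (hax : G.Adj a x)
    (hxb : G.Adj x b) (hxc : x ≠ c) (hxd : x ≠ d) :
    D.Cross s(c, d) s(a, x) ∨ D.Cross s(c, d) s(x, b) := by
  by_contra! hcross
  have hcd := N.adj_of_isOppositeVertex hD hc hd
  have joined_ax : JoinedIn (D.mergedFace F F₁ a b ∪ D.arc hcd)ᶜ (D.pos a) (D.pos x) :=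
    N.joinedIn_of_adj_of_not_cross hD.isGood hcd hax hc.ne_left.symm hd.ne_left.symm hxc hxd
      (Sym2.congr_right.ne.2 hxb.ne) hcross.1
  have joined_xb : JoinedIn (D.mergedFace F F₁ a b ∪ D.arc hcd)ᶜ (D.pos x) (D.pos b) :=
    N.joinedIn_of_adj_of_not_cross hD.isGood hcd hxb hxc hxd hc.ne_right.symm hd.ne_right.symm
      (Sym2.congr_left.ne.2 hax.ne') hcross.2
  exact N.not_joinedIn_arc hD.isGood hc hd hcd (joined_ax.trans joined_xb)

lemma eq_of_adj_of_adj (N : D.NeighborAcross F F₁ a b) (hD : D.IsTriconnectedMaximal)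
    (hc : D.IsOppositeVertex F a b c) (hd : D.IsOppositeVertex F₁ a b d) (hax : G.Adj a x)
    (hxb : G.Adj x b) (hxc : x ≠ c) (hxd : x ≠ d) (hay : G.Adj a y) (hyb : G.Adj y b) (hyc : y ≠ c)
    (hyd : y ≠ d) : x = y := by
  have hab := N.adj.ne
  have hax' := hax.ne
  have hay' := hay.ne
  rcases N.cross_or_cross hD hc hd hax hxb hxc hxd with hx | hx <;>
    rcases N.cross_or_cross hD hc hd hay hyb hyc hyd with hy | hy <;>
    have := hD.eq_of_cross hx hy <;> grind

lemma eq_or_eq_of_mem_faceVerts (N : D.NeighborAcross F F₁ a b) (hD : D.IsTriconnectedMaximal)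
    (hc : D.IsOppositeVertex F a b c) (hd : D.IsOppositeVertex F₁ a b d) (hF₂ : D.IsFace F₂)
    (hc₂ : c ∈ D.faceVerts F₂) (hd₂ : d ∈ D.faceVerts F₂) (hax : G.Adj a x) (hxb : G.Adj x b) :
    x = c ∨ x = d := by
  by_contra! hx
  obtain ⟨-, hca, hcb⟩ := id hc
  obtain ⟨-, hda, hdb⟩ := id hd
  have hab := N.adj.ne
  have hax' := hax.ne
  have hxb' := hxb.ne
  exact N.not_reachableAvoiding_of_mem_faceVerts hD.isGood hc hd hF₂ hc₂ hd₂
    (.of_adj hxb (by grind) (by grind)) (.of_adj hax.symm (by grind) (by grind))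

lemma not_disjoint_edges (N : D.NeighborAcross F F₁ a b) (N' : D.NeighborAcross F F₂ a' b')
    (hD : D.IsTriconnectedMaximal) (hd : D.IsOppositeVertex F₁ a b d)
    (hd' : D.IsOppositeVertex F₂ a' b' d') : a = a' ∨ a = b' ∨ b = a' ∨ b = b' := by
  by_contra! hne
  obtain ⟨haa', hab', hba', hbb'⟩ := hne
  have ha : D.IsOppositeVertex F a' b' a := ⟨N.left_mem_faceVerts, haa', hab'⟩
  have hb : D.IsOppositeVertex F a' b' b := ⟨N.right_mem_faceVerts, hba', hbb'⟩
  have ha' : D.IsOppositeVertex F a b a' := ⟨N'.left_mem_faceVerts, haa'.symm, hba'.symm⟩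
  have hb' : D.IsOppositeVertex F a b b' := ⟨N'.right_mem_faceVerts, hab'.symm, hbb'.symm⟩
  rcases eq_or_ne d' d with rfl | hdd'
  · exact (N.eq_or_eq_of_mem_faceVerts hD ha' hd N'.isFace_right N'.left_mem_faceVerts' hd'.mem
      (N.left_adj_of_isOppositeVertex hD hb') (N.adj_right_of_isOppositeVertex hD hb')).elim
      N'.adj.ne' (N.ne_of_isOppositeVertex hD hb' hd)
  · exact hd'.ne_left <| Eq.symm <| N.eq_of_adj_of_adj hD hb' hd
      (N.left_adj_of_isOppositeVertex hD ha') (N.adj_right_of_isOppositeVertex hD ha') N'.adj.ne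
      (N.ne_of_isOppositeVertex hD ha' hd) (N'.adj_of_isOppositeVertex hD ha hd')
      (N'.adj_of_isOppositeVertex hD hb hd').symm hd'.ne_right hdd'

lemma cross_of_ne (N : D.NeighborAcross F F₁ a b) (N' : D.NeighborAcross F F₂ b c)
    (hD : D.IsTriconnectedMaximal) (hd : D.IsOppositeVertex F₁ a b d)
    (he : D.IsOppositeVertex F₂ b c e) (hne : F₁ ≠ F₂) (hac : a ≠ c) (hde : d ≠ e) :
    D.Cross s(c, d) s(a, e) := by
  by_contra hcross
  have hc := N'.right_isOppositeVertex hac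
  have hcd := N.adj_of_isOppositeVertex hD hc hd
  have hae := N'.adj_of_isOppositeVertex hD (N.left_isOppositeVertex hac) he
  have joined_ae : JoinedIn (D.mergedFace F F₁ a b ∪ D.arc hcd)ᶜ (D.pos a) (D.pos e) :=
    N.joinedIn_of_adj_of_not_cross hD.isGood hcd hae hac hd.ne_left.symm he.ne_right hde.symm
      (Sym2.congr_right.ne.2 he.ne_left) hcross
  have joined_eb : JoinedIn (D.mergedFace F F₁ a b ∪ D.arc hcd)ᶜ (D.pos e) (D.pos b) :=
    N.joinedIn_of_mem_faceVerts hD.isGood hD.exists_adj N'.isFace_right N'.ne.symm hne.symm he.mem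
      N'.left_mem_faceVerts' hcd he.ne_right hde.symm hc.ne_right.symm hd.ne_right.symm
  exact N.not_joinedIn_arc hD.isGood hc hd hcd (joined_ae.trans joined_eb)

lemma cross_of_mem_faceVerts (N : D.NeighborAcross F F₁ a b) (N' : D.NeighborAcross F F₂ b c)
    (hD : D.IsTriconnectedMaximal) (hd : D.IsOppositeVertex F₁ a b d) (hac : a ≠ c)
    (hg : D.IsOppositeVertex F a b g) (hgc : g ≠ c) : D.Cross s(g, d) s(a, c) := by
  have hc := N'.right_isOppositeVertex hac
  exact (N.cross_or_cross hD hg hd (N.left_adj_of_isOppositeVertex hD hc) N'.adj.symm hgc.symm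
    (N.ne_of_isOppositeVertex hD hc hd)).resolve_right fun h ↦ N'.isUncrossed.symm _ h.symm

lemma faceVerts_subset (N : D.NeighborAcross F F₁ a b) (N' : D.NeighborAcross F F₂ b c)
    (hD : D.IsTriconnectedMaximal) (hd : D.IsOppositeVertex F₁ a b d)
    (he : D.IsOppositeVertex F₂ b c e) (hac : a ≠ c) : D.faceVerts F ⊆ {a, b, c} := by
  intro g hgF
  by_contra! hg
  simp only [mem_insert_iff, mem_singleton_iff, not_or] at hg
  obtain ⟨hga, hgb, hgc⟩ := hg
  have hg : D.IsOppositeVertex F a b g := ⟨hgF, hga, hgb⟩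
  have hgd := N.cross_of_mem_faceVerts N' hD hd hac hg hgc
  have hge := N'.symm.cross_of_mem_faceVerts N.symm hD he.symm hac.symm ⟨hgF, hgc, hgb⟩ hga
  rw [Sym2.eq_swap (a := c)] at hge
  obtain rfl : d = e := Sym2.congr_right.1 (hD.eq_of_cross hgd.symm hge.symm)
  exact (N.eq_or_eq_of_mem_faceVerts hD (N'.right_isOppositeVertex hac) hd N'.isFace_right
    N'.right_mem_faceVerts' he.mem (N.left_adj_of_isOppositeVertex hD hg)
    (N.adj_right_of_isOppositeVertex hD hg)).elim hgc (N.ne_of_isOppositeVertex hD hg hd)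

lemma exists_consecutive (N : D.NeighborAcross F F₁ a b) (N' : D.NeighborAcross F F₂ a' b')
    (hD : D.IsTriconnectedMaximal) (hd : D.IsOppositeVertex F₁ a b d)
    (he : D.IsOppositeVertex F₂ a' b' e) (hne : F₁ ≠ F₂) :
    ∃ x y z, D.NeighborAcross F F₁ x y ∧ D.NeighborAcross F F₂ y z ∧
      D.IsOppositeVertex F₁ x y d ∧ D.IsOppositeVertex F₂ y z e ∧ x ≠ z := by
  rcases N.not_disjoint_edges N' hD hd he with rfl | rfl | rfl | rfl
  · refine ⟨b, a, b', N.symm, N', hd.symm, he, ?_⟩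
    rintro rfl
    exact hne (N.eq_of_neighborAcross N' hD.isGood)
  · refine ⟨b, a, a', N.symm, N'.symm, hd.symm, he.symm, ?_⟩
    rintro rfl
    exact hne (N.eq_of_neighborAcross N'.symm hD.isGood)
  · refine ⟨a, b, b', N, N', hd, he, ?_⟩
    rintro rfl
    exact hne (N.eq_of_neighborAcross N'.symm hD.isGood)
  · refine ⟨a, b, a', N, N'.symm, hd, he.symm, ?_⟩
    rintro rfl
    exact hne (N.eq_of_neighborAcross N' hD.isGood)

end NeighborAcross

end Drawing

end TriconnectedMaximal

section ConnectivityBounds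

namespace Drawing

variable {V : Type} {G : SimpleGraph V} {D : Drawing G} {F F₁ F₂ F₃ : Set (ℝ × ℝ)}
  {a b c d e f a' b' a'' b'' d' d'' : V}

lemma IsTriconnectedMaximal.exists_forall_mem_of_cross (hD : D.IsTriconnectedMaximal)
    (ho : D.IsUncrossed a b) (hca : c ≠ a) (hcb : c ≠ b) :
    ∃ y, y ≠ a ∧ y ≠ b ∧ ∀ e, D.Cross s(c, d) e → y ∈ e := by
  by_cases hcross : ∃ f, D.Cross s(c, d) f
  · obtain ⟨f, hf⟩ := hcross
    obtain ⟨p, -, u, v, huv, rfl, -⟩ := id hf.2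
    have hab : s(u, v) ≠ s(a, b) := fun heq ↦ ho _ (heq ▸ hf).symm
    obtain ⟨y, hy, hya, hyb⟩ : ∃ y ∈ s(u, v), y ≠ a ∧ y ≠ b := by
      by_contra! h
      have hsub : ∀ y ∈ s(u, v), y ∈ s(a, b) := fun y hy ↦
        Sym2.mem_iff.2 (or_iff_not_imp_left.2 (h y hy))
      exact hab ((Sym2.mem_and_mem_iff huv.ne).1
        ⟨hsub u (Sym2.mem_mk_left u v), hsub v (Sym2.mem_mk_right u v)⟩).symm
    exact ⟨y, hya, hyb, fun e he ↦ hD.eq_of_cross hf he ▸ hy⟩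
  · exact ⟨c, hca, hcb, fun e he ↦ absurd ⟨e, he⟩ hcross⟩

namespace NeighborAcross

variable [Finite V]

lemma opposite_eq_of_triangle (N : D.NeighborAcross F F₁ a b) (N' : D.NeighborAcross F F₂ b c)
    (N'' : D.NeighborAcross F F₃ c a) (hD : D.IsTriconnectedMaximal)
    (hd : D.IsOppositeVertex F₁ a b d) (he : D.IsOppositeVertex F₂ b c e)
    (hf : D.IsOppositeVertex F₃ c a f) (h₁₂ : F₁ ≠ F₂) (h₂₃ : F₂ ≠ F₃) (h₃₁ : F₃ ≠ F₁) :
    d = e := by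
  by_contra hde
  have hab := N.adj.ne
  have hbc := N'.adj.ne
  have hca := N''.adj.ne
  have hcross := N.cross_of_ne N' hD hd he h₁₂ hca.symm hde
  rcases eq_or_ne e f with rfl | hef
  · have := hD.eq_of_cross hcross (N''.cross_of_ne N hD hf hd h₃₁ hbc.symm (Ne.symm hde)).symm
    exact hab (by grind [hf.ne_right])
  · have := hD.eq_of_cross hcross.symm (N'.cross_of_ne N'' hD he hf h₂₃ hab.symm hef)
    grind [hf.ne_left]

lemma false_of_triangle (N : D.NeighborAcross F F₁ a b) (N' : D.NeighborAcross F F₂ b c)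
    (N'' : D.NeighborAcross F F₃ c a) (hD : D.IsTriconnectedMaximal)
    (hd : D.IsOppositeVertex F₁ a b d) (he : D.IsOppositeVertex F₂ b c e)
    (hf : D.IsOppositeVertex F₃ c a f) (h₁₂ : F₁ ≠ F₂) (h₂₃ : F₂ ≠ F₃) (h₃₁ : F₃ ≠ F₁) :
    False := by
  obtain rfl := N.opposite_eq_of_triangle N' N'' hD hd he hf h₁₂ h₂₃ h₃₁
  obtain rfl := N'.opposite_eq_of_triangle N'' N hD he hf hd h₂₃ h₃₁ h₁₂
  have hab := N.adj.ne
  have hbc := N'.adj.ne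
  have hca := N''.adj.ne
  have hda := hd.ne_left
  have hdb := hd.ne_right
  obtain ⟨w, hw⟩ := exists_notMem_of_length_lt (l := [a, b, c, d]) (by grind [hD.card])
  have reach (v : V) (x : V) (hx : x ∉ [v, d]) (hv : v ∈ [a, b, c]) :
      ReachableAvoiding G [v, d] w x :=
    hD.kConnected.reachableAvoiding (by simp) (by grind) hx
  have swap {x y v : V} (h : ReachableAvoiding G [x, y, d] w v) :
      ReachableAvoiding G [y, x, d] w v :=
    h.mono (by simp)
  have not_b_and_a (hb : ReachableAvoiding G [a, c, d] w b) :
      ¬ ReachableAvoiding G [b, c, d] w a :=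
    N.not_reachableAvoiding_of_mem_faceVerts hD.isGood (N'.right_isOppositeVertex hca.symm) hd
      N'.isFace_right N'.right_mem_faceVerts' he.mem hb
  have not_c_and_b (hc : ReachableAvoiding G [a, b, d] w c) :
      ¬ ReachableAvoiding G [a, c, d] w b := fun hb ↦
    N'.not_reachableAvoiding_of_mem_faceVerts hD.isGood (N''.right_isOppositeVertex hab.symm) he
      N''.isFace_right N''.right_mem_faceVerts' hf.mem (swap hc) (swap hb)
  have not_a_and_c (ha : ReachableAvoiding G [b, c, d] w a) :
      ¬ ReachableAvoiding G [a, b, d] w c :=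
    N''.not_reachableAvoiding_of_mem_faceVerts hD.isGood (N.right_isOppositeVertex hbc.symm) hf
      N.isFace_right N.right_mem_faceVerts' hd.mem (swap ha)
  have b_or_c : ReachableAvoiding G [a, c, d] w b ∨ ReachableAvoiding G [a, b, d] w c :=
    (reach a b (by grind) (by simp)).cons_or_cons hbc |>.imp swap swap
  have a_or_c : ReachableAvoiding G [b, c, d] w a ∨ ReachableAvoiding G [a, b, d] w c :=
    (reach b a (by grind) (by simp)).cons_or_cons hca.symm |>.imp_left swap
  have a_or_b : ReachableAvoiding G [b, c, d] w a ∨ ReachableAvoiding G [a, c, d] w b :=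
    (reach c a (by grind) (by simp)).cons_or_cons hab
  tauto

lemma not_kConnected_four (N : D.NeighborAcross F F₁ a b) (N' : D.NeighborAcross F F₂ b c)
    (hD : D.IsTriconnectedMaximal) (hcard : 6 ≤ Nat.card V) (hd : D.IsOppositeVertex F₁ a b d)
    (he : D.IsOppositeVertex F₂ b c e) (hne : F₁ ≠ F₂) (hac : a ≠ c) : ¬ KConnected G 4 := by
  intro hG
  have ha := N.left_isOppositeVertex hac
  have hc := N'.right_isOppositeVertex hac
  have hab := N.adj.ne
  have hbc := N'.adj.ne
  have hda := hd.ne_left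
  have hdb := hd.ne_right
  have heb := he.ne_left
  have hcd := N.adj_of_isOppositeVertex hD hc hd
  have hae := N'.adj_of_isOppositeVertex hD ha he
  have hae' := hae.ne
  obtain ⟨w, hw⟩ := exists_notMem_of_length_lt (l := [a, b, c, d, e]) hcard
  have reach (l : List V) (x : V) (hl : l.length < 4) (hx : x ∉ l) (hl' : l ⊆ [a, b, c, d, e]) :
      ReachableAvoiding G l w x :=
    hG.reachableAvoiding hl (fun h ↦ hw (hl' h)) hx
  rcases eq_or_ne d e with rfl | hde
  · exact N.not_reachableAvoiding_of_mem_faceVerts hD.isGood hc hd N'.isFace_right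
      N'.right_mem_faceVerts' he.mem (reach _ b (by simp) (by grind) (by simp))
      (reach _ a (by simp) (by grind) (by simp))
  have hcross := N.cross_of_ne N' hD hd he hne hac hde
  have hcd_cross {x : V} (hx : x ∈ s(a, e)) (f : Sym2 V) (hf : D.Cross s(c, d) f) : x ∈ f :=
    hD.eq_of_cross hcross hf ▸ hx
  have hae_cross {x : V} (hx : x ∈ s(c, d)) (f : Sym2 V) (hf : D.Cross s(a, e) f) : x ∈ f :=
    hD.eq_of_cross hcross.symm hf ▸ hx
  rcases (reach [b, d, e] a (by simp) (by grind) (by simp)).cons_or_cons hac with hr | hr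
  · exact N.not_reachableAvoiding hD.isGood (N.not_joinedIn_arc hD.isGood hc hd hcd)
      (hD.isGood.disjoint_drawingSetAvoiding_arc hcd (by simp) (by simp)
        fun f hf ↦ ⟨a, hcd_cross (by simp) f hf, by simp⟩)
      (hD.isGood.disjoint_drawingSetAvoiding_arc hcd (by simp) (by simp)
        fun f hf ↦ ⟨e, hcd_cross (by simp) f hf, by simp⟩) (by simp) (by simp)
      (reach [c, d, a] b (by simp) (by grind) (by simp)) hr
  · exact N'.not_reachableAvoiding hD.isGood (N'.not_joinedIn_arc hD.isGood ha he hae)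
      (hD.isGood.disjoint_drawingSetAvoiding_arc hae (by simp) (by simp)
        fun f hf ↦ ⟨d, hae_cross (by simp) f hf, by simp⟩)
      (hD.isGood.disjoint_drawingSetAvoiding_arc hae (by simp) (by simp)
        fun f hf ↦ ⟨c, hae_cross (by simp) f hf, by simp⟩) (by simp) (by simp)
      hr (reach [a, e, c] b (by simp) (by grind) (by simp))

lemma not_kConnected_five (N : D.NeighborAcross F F₁ a b) (hD : D.IsTriconnectedMaximal)
    (hcard : 6 ≤ Nat.card V) (hc : D.IsOppositeVertex F a b c)
    (hd : D.IsOppositeVertex F₁ a b d) : ¬ KConnected G 5 := by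
  intro hG
  have hab := N.adj.ne
  have hcd := N.adj_of_isOppositeVertex hD hc hd
  obtain ⟨-, hca, hcb⟩ := id hc
  obtain ⟨-, hda, hdb⟩ := id hd
  obtain ⟨y, hya, hyb, hy⟩ := hD.exists_forall_mem_of_cross (d := d) N.isUncrossed hca hcb
  obtain ⟨w, hw⟩ := exists_notMem_of_length_lt (l := [a, b, c, d, y]) hcard
  have hdisj (x : V) : Disjoint (D.drawingSetAvoiding [x, c, d, y]) (D.arc hcd) :=
    hD.isGood.disjoint_drawingSetAvoiding_arc hcd (by simp) (by simp)
      fun e he ↦ ⟨y, hy e he, by simp⟩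
  have hb : ReachableAvoiding G [a, c, d, y] w b :=
    hG.reachableAvoiding (by simp) (by grind) (by grind)
  have ha : ReachableAvoiding G [b, c, d, y] w a :=
    hG.reachableAvoiding (by simp) (by grind) (by grind)
  exact N.not_reachableAvoiding hD.isGood (N.not_joinedIn_arc hD.isGood hc hd hcd) (hdisj a)
    (hdisj b) (by simp) (by simp) hb ha

lemma false_of_three_neighbors (N : D.NeighborAcross F F₁ a b) (N' : D.NeighborAcross F F₂ a' b')
    (N'' : D.NeighborAcross F F₃ a'' b'') (hD : D.IsTriconnectedMaximal)
    (hd : D.IsOppositeVertex F₁ a b d) (hd' : D.IsOppositeVertex F₂ a' b' d')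
    (hd'' : D.IsOppositeVertex F₃ a'' b'' d'') (h₁₂ : F₁ ≠ F₂) (h₂₃ : F₂ ≠ F₃) (h₃₁ : F₃ ≠ F₁) :
    False := by
  obtain ⟨x, y, z, N, N', hd, hd', hxz⟩ := N.exists_consecutive N' hD hd hd' h₁₂
  have hverts := N.faceVerts_subset N' hD hd hd' hxz
  have hadj := N''.adj.ne
  rcases hverts N''.left_mem_faceVerts with rfl | rfl | rfl <;>
    rcases hverts N''.right_mem_faceVerts with rfl | rfl | rfl
  · exact hadj rfl
  · exact h₃₁ (N''.eq_of_neighborAcross N hD.isGood)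
  · exact N.false_of_triangle N' N''.symm hD hd hd' hd''.symm h₁₂ h₂₃ h₃₁
  · exact h₃₁ (N''.symm.eq_of_neighborAcross N hD.isGood)
  · exact hadj rfl
  · exact h₂₃ (N'.eq_of_neighborAcross N'' hD.isGood)
  · exact N.false_of_triangle N' N'' hD hd hd' hd'' h₁₂ h₂₃ h₃₁
  · exact h₂₃ (N'.eq_of_neighborAcross N''.symm hD.isGood)
  · exact hadj rfl

end NeighborAcross

/-- The true faces of the planarization that are adjacent to the face `F`. -/
def trueNeighbors (D : Drawing G) (F : Set (ℝ × ℝ)) : Set (Set (ℝ × ℝ)) :=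
  {F' | D.IsTrueFace F' ∧ D.FaceAdj F F'}

namespace IsTriconnectedMaximal

variable [Finite V]

lemma exists_neighborAcross (hD : D.IsTriconnectedMaximal) (hF : D.IsTrueFace F)
    (hF₁ : F₁ ∈ D.trueNeighbors F) :
    ∃ a b c d, D.NeighborAcross F F₁ a b ∧ D.IsOppositeVertex F a b c ∧
      D.IsOppositeVertex F₁ a b d :=
  hF.exists_neighborAcross hD.isGood (lt_of_lt_of_le (by decide) hD.card) hF₁.1 hF₁.2

lemma encard_trueNeighbors_le_two (hD : D.IsTriconnectedMaximal) (hF : D.IsTrueFace F) :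
    (D.trueNeighbors F).encard ≤ 2 := by
  by_contra! hcard
  obtain ⟨t, ht, ht3⟩ := exists_subset_encard_eq (k := 3) (Order.add_one_le_of_lt hcard)
  obtain ⟨F₁, F₂, F₃, h₁₂, h₁₃, h₂₃, rfl⟩ := encard_eq_three.1 ht3
  obtain ⟨a₁, b₁, -, d₁, N₁, -, hd₁⟩ := hD.exists_neighborAcross hF (ht (by simp : F₁ ∈ _))
  obtain ⟨a₂, b₂, -, d₂, N₂, -, hd₂⟩ := hD.exists_neighborAcross hF (ht (by simp : F₂ ∈ _))
  obtain ⟨a₃, b₃, -, d₃, N₃, -, hd₃⟩ := hD.exists_neighborAcross hF (ht (by simp : F₃ ∈ _))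
  exact N₁.false_of_three_neighbors N₂ N₃ hD hd₁ hd₂ hd₃ h₁₂ h₂₃ h₁₃.symm

lemma encard_trueNeighbors_le_one (hD : D.IsTriconnectedMaximal) (hG : KConnected G 4)
    (hcard : 6 ≤ Nat.card V) (hF : D.IsTrueFace F) : (D.trueNeighbors F).encard ≤ 1 := by
  by_contra! hnt
  obtain ⟨F₁, F₂, hF₁, hF₂, hne⟩ := one_lt_encard_iff.1 hnt
  obtain ⟨a₁, b₁, -, d₁, N₁, -, hd₁⟩ := hD.exists_neighborAcross hF hF₁
  obtain ⟨a₂, b₂, -, d₂, N₂, -, hd₂⟩ := hD.exists_neighborAcross hF hF₂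
  obtain ⟨x, y, z, N₁, N₂, hd₁, hd₂, hxz⟩ := N₁.exists_consecutive N₂ hD hd₁ hd₂ hne
  exact N₁.not_kConnected_four N₂ hD hcard hd₁ hd₂ hne hxz hG

lemma trueNeighbors_eq_empty (hD : D.IsTriconnectedMaximal) (hG : KConnected G 5)
    (hcard : 6 ≤ Nat.card V) (hF : D.IsTrueFace F) : D.trueNeighbors F = ∅ := by
  refine eq_empty_of_forall_notMem fun F₁ hF₁ ↦ ?_
  obtain ⟨a, b, c, d, N, hc, hd⟩ := hD.exists_neighborAcross hF hF₁
  exact N.not_kConnected_five hD hcard hc hd hG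

end IsTriconnectedMaximal

end Drawing

end ConnectivityBounds

theorem stmt_11_general {V : Type} [Fintype V] {G : SimpleGraph V} (D : Drawing G) (k : ℕ)
    (hk3 : 3 ≤ k) (hmax : D.IsMaximalOnePlane) (hconn : KConnected G k)
    (hn3 : k = 3 → 5 ≤ Fintype.card V) (hn4 : 4 ≤ k → 6 ≤ Fintype.card V) :
    ∀ F : Set (ℝ × ℝ), D.IsTrueFace F →
      {F' : Set (ℝ × ℝ) | D.IsTrueFace F' ∧ D.FaceAdj F F'}.encard ≤ (5 - k : ℕ) := by
  intro F hF
  change (D.trueNeighbors F).encard ≤ _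
  rw [← Nat.card_eq_fintype_card] at hn3 hn4
  have hD : D.IsTriconnectedMaximal := ⟨hmax, hconn.mono hk3, by grind⟩
  obtain rfl | rfl | hk5 : k = 3 ∨ k = 4 ∨ 5 ≤ k := by lia
  · exact hD.encard_trueNeighbors_le_two hF
  · exact hD.encard_trueNeighbors_le_one hconn (hn4 le_rfl) hF
  · simp [hD.trueNeighbors_eq_empty (hconn.mono hk5) (hn4 (by lia)) hF]

/-- Let `G` be a `k`-connected maximal 1-plane graph, `3 ≤ k ≤ 5`,
immovable if `k = 3`, with `n ≥ 5` if `k = 3` and `n ≥ 6` if `k ≥ 4`. Then every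
true face of `G^×` is adjacent to at most `5 - k` true faces of `G^×`. -/
theorem stmt_11 {V : Type} [Fintype V] {G : SimpleGraph V} (D : Drawing G) (k : ℕ)
    (hk3 : 3 ≤ k) (hk5 : k ≤ 5)
    (hmax : D.IsMaximalOnePlane) (hconn : KConnected G k)
    (himm : k = 3 → D.Immovable)
    (hn3 : k = 3 → 5 ≤ Fintype.card V)
    (hn4 : 4 ≤ k → 6 ≤ Fintype.card V) :
    ∀ F : Set (ℝ × ℝ), D.IsTrueFace F →
      {F' : Set (ℝ × ℝ) | D.IsTrueFace F' ∧ D.FaceAdj F F'}.ncard ≤ 5 - k := fun F hF ↦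
  (encard_le_coe_iff_finite_ncard_le.1 (stmt_11_general D k hk3 hmax hconn hn3 hn4 F hF)).2
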